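/- Let $d\geq 5$. For $\lambda>0$ with $\lambda^2\in\mathbb{N}$, let $N_\lambda=\#\{m\in\mathbb{Z}^d:|m|=\lambda\}$ and for $f:\mathbb{Z}^d\to\mathbb{R}$ define the discrete spherical average $A_\lambda f(n)=N_\lambda^{-1}\sum_{m\in\mathbb{Z}^d,\,|m|=\lambda}f(n-m)$ and the maximal function $A_\ast f(n)=\sup_{\lambda,\ \lambda^2\in\mathbb{N}}|A_\lambda f(n)|$. Then there is a constant $C_d>0$ such that $\|A_\ast f\|_{\ell^2(\mathbb{Z}^d)}\le C_d\,\|f\|_{\ell^2(\mathbb{Z}^d)}$ for all $f\in\ell^2(\mathbb{Z}^d)$. -/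

import Mathlib

open scoped BigOperators ENNReal

noncomputable section

/-- Squared Euclidean norm of a lattice point, as a real number. -/
def nsq {d : ℕ} (m : Fin d → ℤ) : ℝ := ∑ i, ((m i : ℝ)) ^ 2

/-- The discrete sphere of radius `lam` in `ℤ^d`: lattice points with `|m| = lam`. -/
def sph (d : ℕ) (lam : ℝ) : Set (Fin d → ℤ) := {m | nsq m = lam ^ 2}

/-- `N_lam`: the number of lattice points on the sphere of radius `lam`. -/
def Nlam (d : ℕ) (lam : ℝ) : ℕ := Nat.card (sph d lam)

/-- The discrete spherical average `A_lam f (n) = N_lam⁻¹ ∑_{|m|=lam} f(n-m)`. -/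
def Avg {d : ℕ} (lam : ℝ) (f : (Fin d → ℤ) → ℝ) (n : Fin d → ℤ) : ℝ :=
  (Nlam d lam : ℝ)⁻¹ * ∑' m : sph d lam, f (n - (m : Fin d → ℤ))

/-- The `ℓ²(ℤ^d)` norm, valued in `ℝ≥0∞`. -/
def l2norm {d : ℕ} (f : (Fin d → ℤ) → ℝ) : ℝ≥0∞ :=
  (∑' n : Fin d → ℤ, (‖f n‖₊ : ℝ≥0∞) ^ 2) ^ ((1 : ℝ) / 2)

/-!
For `λ ^ 2 = N ≤ 4 ^ (k + 1)`, the sum of `f` over the sphere of radius `λ` centred at `n` is the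
integral over `t ∈ [0, 1]` of `e(-N t)` times the sum of `e(t |n - m| ^ 2) f m` damped by the
Gaussian `exp (-π |n - m| ^ 2 / 4 ^ k)`, up to the bounded factor `exp (π N / 4 ^ k)`; taking
absolute values inside the integral removes the dependence on `N` and leaves only the dyadic scale
`k`. Dirichlet's theorem writes `t = a / q + u / (2 * 4 ^ k)` with `q ≤ 2 ^ k`. On such an arc theta
inversion compares the damped sum with a Gauss sum, of size `q ^ (d / 2)`, times averages of `f`
over dyadic boxes of step `q`, the comparison error being controlled by a square function
over `k`. The maximal inequality for dyadic box averages then gives an `ℓ²` maximal bound with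
constant `O(q ^ (-5 / 2) (1 + u ^ 2) ^ (-3 / 4))` on each arc when `d ≥ 5`, and this is
summable over `a / q` and integrable in `u`.
Dividing by the number of lattice points, which is at least `c λ ^ (d - 2)`, gives the theorem.
-/

namespace SphericalMaximal

section SumsOfSquares

open scoped Quaternion

open Quaternion

/-- The lattice points of `ℤ^d` with squared Euclidean norm `n`, so that the integer `n` plays the
role of `λ²`. -/
def latticeSphere (d n : ℕ) : Set (Fin d → ℤ) := {v | ∑ i, v i ^ 2 = (n : ℤ)}

/-- The integral quaternion with coordinates `x`. -/
def quaternionOfCoords (x : Fin 4 → ℤ) : ℍ[ℤ] := (equivTuple ℤ).symm x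

@[simp] lemma re_quaternionOfCoords (x : Fin 4 → ℤ) : (quaternionOfCoords x).re = x 0 := rfl

@[simp] lemma imI_quaternionOfCoords (x : Fin 4 → ℤ) : (quaternionOfCoords x).imI = x 1 := rfl

@[simp] lemma imJ_quaternionOfCoords (x : Fin 4 → ℤ) : (quaternionOfCoords x).imJ = x 2 := rfl

@[simp] lemma imK_quaternionOfCoords (x : Fin 4 → ℤ) : (quaternionOfCoords x).imK = x 3 := rfl

lemma quaternionOfCoords_injective : Function.Injective quaternionOfCoords :=
  (equivTuple ℤ).symm.injective

lemma normSq_quaternionOfCoords (x : Fin 4 → ℤ) :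
    normSq (quaternionOfCoords x) = ∑ i, x i ^ 2 := by
  simp [normSq_def', Fin.sum_univ_four]

lemma normSq_quaternionOfCoords_vec (a b c e : ℤ) :
    normSq (quaternionOfCoords ![a, b, c, e]) = a ^ 2 + b ^ 2 + c ^ 2 + e ^ 2 :=
  (normSq_quaternionOfCoords _).trans (Fin.sum_univ_four _)

/-- The quaternion `(1 - A j - B k) (1 - t i)`. When `m ∣ A ^ 2 + B ^ 2 + 1` it has trace `2` and
norm divisible by `m`, hence rank one in `ℍ[ℤ/p] ≃ M₂(ℤ/p)` for the primes `p ∣ m`; its annihilators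
modulo `m` form a lattice of index at most `m ^ 2` on which `m` divides the norm. -/
def isotropicQuaternion (A B t : ℤ) : ℍ[ℤ] :=
  quaternionOfCoords ![1, -t, t * B - A, -(t * A) - B]

lemma normSq_isotropicQuaternion (A B t : ℤ) :
    normSq (isotropicQuaternion A B t) = (A ^ 2 + B ^ 2 + 1) * (1 + t ^ 2) := by
  rw [isotropicQuaternion, normSq_quaternionOfCoords_vec]
  ring

/-- By Dirichlet's theorem there is a prime congruent to `1` modulo `4` and to `-1` modulo `m`, and
such a prime is a sum of two squares. -/
lemma exists_dvd_sq_add_sq_add_one {m : ℕ} (hm : Odd m) :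
    ∃ A B : ℤ, (m : ℤ) ∣ A ^ 2 + B ^ 2 + 1 := by
  have coprime_four : Nat.Coprime 4 m := Nat.Coprime.pow_left 2 (Nat.coprime_two_left.2 hm)
  obtain ⟨k, k_mod_four, k_mod_m⟩ := Nat.chineseRemainder coprime_four 1 (m - 1)
  have k_coprime : k.Coprime (4 * m) := by
    refine Nat.Coprime.mul_right ?_ ?_
    · rw [Nat.Coprime, k_mod_four.gcd_eq]; rfl
    · rw [Nat.Coprime, k_mod_m.gcd_eq]
      exact (Nat.coprime_self_sub_left hm.pos).2 (Nat.coprime_one_left m)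
  obtain ⟨p, -, hp, p_mod⟩ := Nat.forall_exists_prime_gt_and_modEq 0
    (q := 4 * m) (mul_ne_zero four_ne_zero hm.pos.ne') k_coprime
  have : Fact p.Prime := ⟨hp⟩
  have p_mod_four : p % 4 = 1 := (p_mod.of_mul_right m).trans k_mod_four
  obtain ⟨a, b, hab⟩ := Nat.Prime.sq_add_sq (p := p) (by omega)
  have dvd_succ : m ∣ p + 1 := by
    have h : p + 1 ≡ m - 1 + 1 [MOD m] := ((p_mod.of_mul_left 4).trans k_mod_m).add_right 1
    rw [Nat.sub_add_cancel hm.pos] at h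
    exact (Nat.modEq_zero_iff_dvd).1 (h.trans (Nat.modEq_zero_iff_dvd.2 dvd_rfl))
  rw [← hab] at dvd_succ
  exact ⟨a, b, mod_cast dvd_succ⟩

lemma intCast_dvd_quaternion_iff {m : ℤ} {x : ℍ[ℤ]} :
    (m : ℍ[ℤ]) ∣ x ↔ m ∣ x.re ∧ m ∣ x.imI ∧ m ∣ x.imJ ∧ m ∣ x.imK := by
  constructor
  · rintro ⟨c, rfl⟩
    simp
  · rintro ⟨⟨a, ha⟩, ⟨b, hb⟩, ⟨c, hc⟩, ⟨e, he⟩⟩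
    exact ⟨quaternionOfCoords ![a, b, c, e], by ext <;> simp [ha, hb, hc, he]⟩

lemma intCast_dvd_quaternion_mul {m : ℤ} {x : ℍ[ℤ]} (h : (m : ℍ[ℤ]) ∣ x) (y : ℍ[ℤ]) :
    (m : ℍ[ℤ]) ∣ y * x := by
  obtain ⟨c, rfl⟩ := h
  exact ⟨y * c, by rw [← mul_assoc, ← mul_assoc, (Int.cast_commute m y).eq]⟩

/-- If `g` has trace `2` then `2 v = g v + star g v`, and here both summands have norm divisible
by `m`. -/
lemma dvd_normSq_of_dvd_mul {m : ℤ} (hm : Odd m) {g v : ℍ[ℤ]} (g_re : g.re = 1)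
    (g_norm : m ∣ normSq g) (h : (m : ℍ[ℤ]) ∣ g * v) : m ∣ normSq v := by
  obtain ⟨c, hc⟩ := h
  have two_smul_v : 2 * v = star g * v + m * c := by
    rw [← hc, ← add_mul, star_add_self', g_re, mul_one]; rfl
  have norm_two : normSq (2 * v) = 4 * normSq v := by
    rw [map_mul]
    exact congrArg (· * normSq v) (normSq_natCast 2)
  have re_dvd : m ∣ (star g * v * star ((m : ℍ[ℤ]) * c)).re :=
    (intCast_dvd_quaternion_iff.1 <| intCast_dvd_quaternion_mul ⟨star c, by
      rw [star_mul, star_intCast, (Int.cast_commute m _).eq]⟩ _).1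
  have dvd_four_mul : m ∣ 4 * normSq v := by
    rw [← norm_two, two_smul_v, normSq_add, map_mul, normSq_star, map_mul, normSq_intCast]
    exact ((g_norm.mul_right _).add ((dvd_pow_self m two_ne_zero).mul_right _)).add
      (re_dvd.mul_left 2)
  have coprime_two : IsCoprime m 2 := Int.isCoprime_two_right.2 hm
  exact (IsCoprime.pow_right (n := 2) coprime_two).dvd_of_dvd_mul_left dvd_four_mul

/-- The first two coordinates of `isotropicQuaternion A B t * v` are, modulo `m`, the real and
imaginary parts of `(A + B i)` times the conjugate of the last two. -/
lemma intCast_dvd_isotropicQuaternion_mul {m A B t : ℤ} (hAB : m ∣ A ^ 2 + B ^ 2 + 1) {v : ℍ[ℤ]}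
    (hJ : m ∣ (isotropicQuaternion A B t * v).imJ) (hK : m ∣ (isotropicQuaternion A B t * v).imK) :
    (m : ℍ[ℤ]) ∣ isotropicQuaternion A B t * v := by
  set w := isotropicQuaternion A B t * v with hw
  have hre : w.re = A * w.imJ + B * w.imK + (A ^ 2 + B ^ 2 + 1) * (v.re + t * v.imI) := by
    simp [hw, isotropicQuaternion]
    ring
  have hI : w.imI = B * w.imJ - A * w.imK + (A ^ 2 + B ^ 2 + 1) * (v.imI - t * v.re) := by
    simp [hw, isotropicQuaternion]
    ring
  refine intCast_dvd_quaternion_iff.2 ⟨?_, ?_, hJ, hK⟩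
  · rw [hre]
    exact ((hJ.mul_left A).add (hK.mul_left B)).add (hAB.mul_right _)
  · rw [hI]
    exact ((hJ.mul_left B).sub (hK.mul_left A)).add (hAB.mul_right _)

/-- Two of the four congruences imply the others, so a box with more than `m ^ 2` points contains
two that are congruent. -/
lemma exists_dvd_isotropicQuaternion_mul {m : ℕ} (hm : 0 < m) {A B : ℤ}
    (hAB : (m : ℤ) ∣ A ^ 2 + B ^ 2 + 1) (t : ℤ) :
    ∃ v : ℍ[ℤ], v ≠ 0 ∧ normSq v ≤ 4 * m ∧ ((m : ℤ) : ℍ[ℤ]) ∣ isotropicQuaternion A B t * v := by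
  have : NeZero m := ⟨hm.ne'⟩
  let box : Finset (Fin 4 → ℕ) := Fintype.piFinset fun _ => Finset.range (Nat.sqrt m + 1)
  let toQuaternion : (Fin 4 → ℕ) → ℍ[ℤ] := fun x => quaternionOfCoords fun i => x i
  let residues : (Fin 4 → ℕ) → ZMod m × ZMod m := fun x =>
    (((isotropicQuaternion A B t * toQuaternion x).imJ : ZMod m),
      ((isotropicQuaternion A B t * toQuaternion x).imK : ZMod m))
  have card_lt : (Finset.univ : Finset (ZMod m × ZMod m)).card < box.card := by
    simp only [box, Fintype.card_piFinset_const, Finset.card_range, Finset.card_univ,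
      Fintype.card_prod, ZMod.card]
    calc m * m < ((m.sqrt + 1) * (m.sqrt + 1)) * ((m.sqrt + 1) * (m.sqrt + 1)) :=
          Nat.mul_lt_mul'' (Nat.lt_succ_sqrt m) (Nat.lt_succ_sqrt m)
      _ = (m.sqrt + 1) ^ 4 := by ring
  obtain ⟨x, hx, y, hy, hne, heq⟩ :=
    Finset.exists_ne_map_eq_of_card_lt_of_maps_to card_lt (f := residues)
      fun _ _ => Finset.mem_univ _
  have sq_sub_le (i : Fin 4) : ((x i : ℤ) - y i) ^ 2 ≤ m := by
    have hxi := Finset.mem_range.1 (Fintype.mem_piFinset.1 hx i)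
    have hyi := Finset.mem_range.1 (Fintype.mem_piFinset.1 hy i)
    calc ((x i : ℤ) - y i) ^ 2 ≤ (m.sqrt : ℤ) ^ 2 := sq_le_sq' (by omega) (by omega)
      _ ≤ m := mod_cast Nat.sqrt_le' m
  have dvd_of_eq {a b : ℤ} (h : (a : ZMod m) = b) : (m : ℤ) ∣ a - b :=
    (ZMod.intCast_eq_intCast_iff_dvd_sub _ _ _).1 h.symm
  obtain ⟨eqJ, eqK⟩ := Prod.mk.inj heq
  refine ⟨toQuaternion x - toQuaternion y, fun h => hne (funext fun i => ?_), ?_,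
    intCast_dvd_isotropicQuaternion_mul hAB ?_ ?_⟩
  · exact mod_cast congrFun (quaternionOfCoords_injective (sub_eq_zero.1 h)) i
  · simp only [toQuaternion, normSq_def', re_sub, imI_sub, imJ_sub, imK_sub, re_quaternionOfCoords,
      imI_quaternionOfCoords, imJ_quaternionOfCoords, imK_quaternionOfCoords]
    linarith [sq_sub_le 0, sq_sub_le 1, sq_sub_le 2, sq_sub_le 3]
  · rw [mul_sub, imJ_sub]
    exact dvd_of_eq eqJ
  · rw [mul_sub, imK_sub]
    exact dvd_of_eq eqK

lemma two_mul_sub_dvd_of_dvd {m A B s t : ℤ} {v : ℍ[ℤ]}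
    (hs : (m : ℍ[ℤ]) ∣ isotropicQuaternion A B s * v)
    (ht : (m : ℍ[ℤ]) ∣ isotropicQuaternion A B t * v) :
    (m : ℍ[ℤ]) ∣ ((2 * (s - t) : ℤ) : ℍ[ℤ]) * v := by
  have key : ((2 * (s - t) : ℤ) : ℍ[ℤ]) = s * isotropicQuaternion A B t
      - t * isotropicQuaternion A B s
      + quaternionOfCoords ![0, 1, 0, 0] *
        (isotropicQuaternion A B s - isotropicQuaternion A B t) := by
    ext <;> simp [isotropicQuaternion, -Int.cast_mul, -Int.cast_sub] <;> ring
  rw [key, add_mul, sub_mul, mul_assoc, mul_assoc, mul_assoc, sub_mul]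
  exact (dvd_sub (intCast_dvd_quaternion_mul ht _) (intCast_dvd_quaternion_mul hs _)).add
    (intCast_dvd_quaternion_mul (dvd_sub hs ht) _)

lemma intCast_quaternion_ne_zero {k : ℤ} (hk : k ≠ 0) : (k : ℍ[ℤ]) ≠ 0 := fun h =>
  hk (by simpa using congrArg QuaternionAlgebra.re h)

lemma dvd_of_dvd_intCast_mul_quaternion {m : ℕ} (hm : 0 < m) {n : ℤ} {v : ℍ[ℤ]}
    (primitive : ∀ p : ℕ, p.Prime → p ∣ m → ¬ ((p : ℤ) : ℍ[ℤ]) ∣ v)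
    (h : ((m : ℤ) : ℍ[ℤ]) ∣ (n : ℍ[ℤ]) * v) : (m : ℤ) ∣ n := by
  obtain ⟨m', n', coprime, hm', hn'⟩ := Int.exists_gcd_one
    (Int.gcd_pos_of_ne_zero_left n (Int.natCast_ne_zero_iff_pos.2 hm))
  set e : ℤ := (Int.gcd m n : ℤ)
  have e_ne_zero : e ≠ 0 := by rintro h0; rw [h0] at hm'; omega
  have dvd_of_dvd_mul {x : ℤ} (hx : (m : ℤ) ∣ n * x) : m' ∣ x := by
    rw [hm', hn', mul_right_comm] at hx
    exact (Int.isCoprime_iff_gcd_eq_one.2 coprime).dvd_of_dvd_mul_left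
      (Int.dvd_of_mul_dvd_mul_right e_ne_zero hx)
  have m'_dvd : (m' : ℍ[ℤ]) ∣ v := by
    obtain ⟨hre, hI, hJ, hK⟩ := intCast_dvd_quaternion_iff.1 h
    refine intCast_dvd_quaternion_iff.2 ⟨dvd_of_dvd_mul ?_, dvd_of_dvd_mul ?_, dvd_of_dvd_mul ?_,
      dvd_of_dvd_mul ?_⟩
    exacts [by simpa using hre, by simpa using hI, by simpa using hJ, by simpa using hK]
  have m'_unit : m'.natAbs = 1 := by
    by_contra hne
    obtain ⟨p, hp, hpm'⟩ := Nat.exists_prime_and_dvd hne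
    have hpm'' : (p : ℤ) ∣ m' := Int.natCast_dvd.2 hpm'
    exact primitive p hp (Int.natCast_dvd_natCast.1 (hm' ▸ hpm''.mul_right e))
      ((map_dvd (Int.castRingHom ℍ[ℤ]) hpm'').trans m'_dvd)
  rw [hm', hn', Int.isUnit_iff_natAbs_eq.2 m'_unit |>.mul_left_dvd]
  exact dvd_mul_left _ _

/-- If a prime `p ∣ m` divided `v`, then `m / p` would divide the norm of `v / p` as well, so that
`p ∣ k`. -/
lemma not_prime_dvd_of_normSq_eq {m p : ℕ} (hm : m.Coprime 6) (hp : p.Prime) (hpm : p ∣ m)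
    {g v : ℍ[ℤ]} (g_re : g.re = 1) (g_norm : (m : ℤ) ∣ normSq g) (h : ((m : ℤ) : ℍ[ℤ]) ∣ g * v)
    {k : ℤ} (hk : 0 < k) (hk' : k ≤ 4) (v_norm : normSq v = k * m) :
    ¬ ((p : ℤ) : ℍ[ℤ]) ∣ v := by
  rintro ⟨v', rfl⟩
  obtain ⟨m', rfl⟩ := hpm
  have p_ne_zero : (p : ℤ) ≠ 0 := mod_cast hp.ne_zero
  have m'_odd : Odd (m' : ℤ) := mod_cast Nat.coprime_two_right.1
    (Nat.Coprime.coprime_dvd_right (by norm_num : 2 ∣ 6) (Nat.Coprime.coprime_mul_left hm))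
  have m'_ne_zero : (m' : ℤ) ≠ 0 := by rintro h0; simp [h0] at m'_odd
  obtain ⟨j, hj⟩ : (m' : ℤ) ∣ normSq v' := by
    refine dvd_normSq_of_dvd_mul m'_odd g_re
      ((Dvd.intro_left (p : ℤ) (by push_cast; ring)).trans g_norm) ?_
    obtain ⟨c, hc⟩ := h
    refine ⟨c, mul_left_cancel₀ (intCast_quaternion_ne_zero p_ne_zero) ?_⟩
    rw [← mul_assoc, (Int.cast_commute _ g).eq, mul_assoc, hc]
    push_cast
    rw [mul_assoc]
  have p_dvd_k : (p : ℤ) ∣ k := by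
    rw [map_mul, normSq_intCast, hj] at v_norm
    push_cast at v_norm
    refine ⟨j, mul_left_cancel₀ (mul_ne_zero p_ne_zero m'_ne_zero) ?_⟩
    linear_combination -v_norm
  have p_coprime : p.Coprime 6 := Nat.Coprime.coprime_mul_right hm
  have p_le : p ≤ 4 := mod_cast (Int.le_of_dvd hk p_dvd_k).trans hk'
  interval_cases p <;> revert hp p_coprime <;> decide

lemma exists_eq_mul_of_dvd_star_mul {k m : ℤ} (hk : k ≠ 0) {u v : ℍ[ℤ]} (hu : normSq u = k)
    (hv : normSq v = k * m) (h : (k : ℍ[ℤ]) ∣ star u * v) : ∃ w, normSq w = m ∧ v = u * w := by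
  obtain ⟨w, hw⟩ := h
  have v_eq : v = u * w := by
    refine mul_left_cancel₀ (intCast_quaternion_ne_zero hk) ?_
    rw [← mul_assoc, (Int.cast_commute k u).eq, mul_assoc, ← hw, ← mul_assoc, self_mul_star, hu]
    rfl
  refine ⟨w, mul_left_cancel₀ hk ?_, v_eq⟩
  rw [← hv, v_eq, map_mul, hu]

lemma dvd_star_mul_of_dvd_sub {k : ℤ} {u v : ℍ[ℤ]} (hu : normSq u = k)
    (h : (k : ℍ[ℤ]) ∣ v - u) : (k : ℍ[ℤ]) ∣ star u * v := by
  have split : star u * v = (k : ℍ[ℤ]) + star u * (v - u) := by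
    rw [mul_sub, star_mul_self, hu]
    exact (add_sub_cancel _ _).symm
  rw [split]
  exact dvd_rfl.add (intCast_dvd_quaternion_mul h _)

lemma exists_normSq_eq_three_dvd_star_mul {v : ℍ[ℤ]} (hv : 3 ∣ normSq v) :
    ∃ u : ℍ[ℤ], normSq u = 3 ∧ ((3 : ℤ) : ℍ[ℤ]) ∣ star u * v := by
  have residue (x : ℤ) : ∃ a : ℤ, 3 ∣ x - a ∧ 3 ∣ x ^ 2 - a ^ 2 ∧ (a = 0 ∨ a ^ 2 = 1) := by
    suffices ∃ a : ℤ, 3 ∣ x - a ∧ (a = 0 ∨ a ^ 2 = 1) by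
      obtain ⟨a, ha, ha'⟩ := this
      exact ⟨a, ha, sq_sub_sq x a ▸ ha.mul_left _, ha'⟩
    obtain h | h | h : x % 3 = 0 ∨ x % 3 = 1 ∨ x % 3 = 2 := by omega
    exacts [⟨0, by omega, by simp⟩, ⟨1, by omega, by simp⟩, ⟨-1, by omega, by simp⟩]
  obtain ⟨a, ha, ha', ha''⟩ := residue v.re
  obtain ⟨b, hb, hb', hb''⟩ := residue v.imI
  obtain ⟨c, hc, hc', hc''⟩ := residue v.imJ
  obtain ⟨e, he, he', he''⟩ := residue v.imK
  rw [normSq_def'] at hv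
  by_cases h3 : a ^ 2 + b ^ 2 + c ^ 2 + e ^ 2 = 3
  · have u_norm : normSq (quaternionOfCoords ![a, b, c, e]) = 3 := by
      rw [normSq_quaternionOfCoords_vec, h3]
    exact ⟨quaternionOfCoords ![a, b, c, e], u_norm,
      dvd_star_mul_of_dvd_sub u_norm (intCast_dvd_quaternion_iff.2 ⟨ha, hb, hc, he⟩)⟩
  · obtain ⟨rfl, rfl, rfl, rfl⟩ : a = 0 ∧ b = 0 ∧ c = 0 ∧ e = 0 := by
      have _ : (0 : ℤ) ^ 2 = 0 := rfl
      refine ⟨?_, ?_, ?_, ?_⟩ <;> by_contra h0 <;> grind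
    exact ⟨quaternionOfCoords ![1, 1, 1, 0], by simp [normSq_quaternionOfCoords_vec],
      intCast_dvd_quaternion_mul (intCast_dvd_quaternion_iff.2
        ⟨by omega, by omega, by omega, by omega⟩) _⟩

lemma exists_normSq_eq_four_dvd_star_mul {v : ℍ[ℤ]} (hv : 4 ∣ normSq v) :
    ∃ u : ℍ[ℤ], normSq u = 4 ∧ ((4 : ℤ) : ℍ[ℤ]) ∣ star u * v := by
  have sq_mod_four (x : ℤ) : x % 2 = 0 ∧ x ^ 2 % 4 = 0 ∨ x % 2 = 1 ∧ x ^ 2 % 4 = 1 := by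
    rcases Int.even_or_odd' x with ⟨k, rfl | rfl⟩
    · exact Or.inl ⟨by omega, by ring_nf; omega⟩
    · exact Or.inr ⟨by omega, by ring_nf; omega⟩
  rw [normSq_def'] at hv
  have hre := sq_mod_four v.re
  have hI := sq_mod_four v.imI
  have hJ := sq_mod_four v.imJ
  have hK := sq_mod_four v.imK
  by_cases h : v.re % 2 = 1
  · have residue (x : ℤ) (hx : x % 2 = 1) : ∃ a : ℤ, 4 ∣ x - a ∧ a ^ 2 = 1 := by
      obtain h | h : x % 4 = 1 ∨ x % 4 = 3 := by omega
      exacts [⟨1, by omega, by simp⟩, ⟨-1, by omega, by simp⟩]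
    obtain ⟨a, ha, ha'⟩ := residue v.re h
    obtain ⟨b, hb, hb'⟩ := residue v.imI (by omega)
    obtain ⟨c, hc, hc'⟩ := residue v.imJ (by omega)
    obtain ⟨e, he, he'⟩ := residue v.imK (by omega)
    have u_norm : normSq (quaternionOfCoords ![a, b, c, e]) = 4 := by
      simp only [normSq_quaternionOfCoords_vec, ha', hb', hc', he']
      norm_num
    exact ⟨quaternionOfCoords ![a, b, c, e], u_norm,
      dvd_star_mul_of_dvd_sub u_norm (intCast_dvd_quaternion_iff.2 ⟨ha, hb, hc, he⟩)⟩
  · refine ⟨quaternionOfCoords ![2, 0, 0, 0],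
      by simp [normSq_quaternionOfCoords_vec], intCast_dvd_quaternion_iff.2 ?_⟩
    simp only [re_mul, imI_mul, imJ_mul, imK_mul, re_star, imI_star, imJ_star, imK_star,
      re_quaternionOfCoords, imI_quaternionOfCoords, imJ_quaternionOfCoords,
      imK_quaternionOfCoords, Matrix.cons_val]
    omega

lemma exists_normSq_eq_two_dvd_star_mul {v : ℍ[ℤ]} (hv : 2 ∣ normSq v) :
    ∃ u : ℍ[ℤ], normSq u = 2 ∧ ((2 : ℤ) : ℍ[ℤ]) ∣ star u * v := by
  have dvd_sum : 2 ∣ v.re + v.imI + v.imJ + v.imK := by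
    rw [normSq_def'] at hv
    simpa [← even_iff_two_dvd, parity_simps] using hv
  by_cases hI : 2 ∣ v.re + v.imI
  · refine ⟨quaternionOfCoords ![1, 1, 0, 0],
      by simp [normSq_quaternionOfCoords_vec], intCast_dvd_quaternion_iff.2 ?_⟩
    simp only [re_mul, imI_mul, imJ_mul, imK_mul, re_star, imI_star, imJ_star, imK_star,
      re_quaternionOfCoords, imI_quaternionOfCoords, imJ_quaternionOfCoords,
      imK_quaternionOfCoords, Matrix.cons_val]
    omega
  by_cases hJ : 2 ∣ v.re + v.imJ
  · refine ⟨quaternionOfCoords ![1, 0, 1, 0],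
      by simp [normSq_quaternionOfCoords_vec], intCast_dvd_quaternion_iff.2 ?_⟩
    simp only [re_mul, imI_mul, imJ_mul, imK_mul, re_star, imI_star, imJ_star, imK_star,
      re_quaternionOfCoords, imI_quaternionOfCoords, imJ_quaternionOfCoords,
      imK_quaternionOfCoords, Matrix.cons_val]
    omega
  · refine ⟨quaternionOfCoords ![1, 0, 0, 1],
      by simp [normSq_quaternionOfCoords_vec], intCast_dvd_quaternion_iff.2 ?_⟩
    simp only [re_mul, imI_mul, imJ_mul, imK_mul, re_star, imI_star, imJ_star, imK_star,
      re_quaternionOfCoords, imI_quaternionOfCoords, imJ_quaternionOfCoords,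
      imK_quaternionOfCoords, Matrix.cons_val]
    omega

lemma exists_eq_mul_of_normSq_eq {k m : ℤ} (hk : 0 < k) (hk' : k ≤ 4) {v : ℍ[ℤ]}
    (hv : normSq v = k * m) : ∃ u w, normSq u = k ∧ normSq w = m ∧ v = u * w := by
  suffices ∃ u : ℍ[ℤ], normSq u = k ∧ (k : ℍ[ℤ]) ∣ star u * v by
    obtain ⟨u, hu, h⟩ := this
    obtain ⟨w, hw, hvw⟩ := exists_eq_mul_of_dvd_star_mul hk.ne' hu hv h
    exact ⟨u, w, hu, hw, hvw⟩
  have dvd_norm : k ∣ normSq v := ⟨m, hv⟩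
  obtain rfl | rfl | rfl | rfl : k = 1 ∨ k = 2 ∨ k = 3 ∨ k = 4 := by omega
  · exact ⟨1, map_one _, by simp⟩
  · exact exists_normSq_eq_two_dvd_star_mul dvd_norm
  · exact exists_normSq_eq_three_dvd_star_mul dvd_norm
  · exact exists_normSq_eq_four_dvd_star_mul dvd_norm

lemma finite_setOf_sum_sq_le {d : ℕ} (n : ℤ) : {v : Fin d → ℤ | ∑ i, v i ^ 2 ≤ n}.Finite := by
  refine (Set.finite_Icc (fun _ => -n) (fun _ => n)).subset fun v (hv : ∑ i, v i ^ 2 ≤ n) => ?_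
  have sq_le (i : Fin d) : v i ^ 2 ≤ n :=
    (Finset.single_le_sum (f := fun i => v i ^ 2) (fun _ _ => sq_nonneg _)
      (Finset.mem_univ i)).trans hv
  exact ⟨fun i => by nlinarith [Int.le_self_sq (-v i), sq_le i],
    fun i => (Int.le_self_sq (v i)).trans (sq_le i)⟩

lemma finite_latticeSphere (d n : ℕ) : (latticeSphere d n).Finite :=
  (finite_setOf_sum_sq_le n).subset fun _ hv => hv.le

lemma sum_sq_equivTuple (v : ℍ[ℤ]) : ∑ i, equivTuple ℤ v i ^ 2 = normSq v :=
  (normSq_quaternionOfCoords (equivTuple ℤ v)).symm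

lemma finite_setOf_normSq_le (n : ℤ) : {v : ℍ[ℤ] | normSq v ≤ n}.Finite :=
  ((finite_setOf_sum_sq_le n).preimage (equivTuple ℤ).injective.injOn).subset
    fun v hv => (sum_sq_equivTuple v).trans_le hv

/-- Every `t < m` gives a nonzero `v t` of norm `k m`, `1 ≤ k ≤ 4`, annihilated modulo `m` by
`isotropicQuaternion A B t`. Being primitive modulo `m`, it determines `t`. -/
lemma exists_injOn_normSq_eq {m : ℕ} (hm : m.Coprime 6) (m_pos : 0 < m) :
    ∃ v : ℕ → ℍ[ℤ], Set.InjOn v (Set.Iio m) ∧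
      ∀ t, ∃ k : ℤ, 0 < k ∧ k ≤ 4 ∧ normSq (v t) = k * m := by
  have m_odd : Odd m :=
    Nat.coprime_two_right.1 (Nat.Coprime.coprime_dvd_right (by norm_num : 2 ∣ 6) hm)
  have m_pos' : (0 : ℤ) < m := mod_cast m_pos
  obtain ⟨A, B, hAB⟩ := exists_dvd_sq_add_sq_add_one m_odd
  have g_norm (t : ℤ) : (m : ℤ) ∣ normSq (isotropicQuaternion A B t) := by
    rw [normSq_isotropicQuaternion]
    exact hAB.mul_right _
  choose v v_ne_zero v_norm_le v_dvd using exists_dvd_isotropicQuaternion_mul m_pos hAB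
  have exists_norm (t : ℤ) : ∃ k : ℤ, 0 < k ∧ k ≤ 4 ∧ normSq (v t) = k * m := by
    obtain ⟨k, hk⟩ := dvd_normSq_of_dvd_mul (mod_cast m_odd) rfl (g_norm t) (v_dvd t)
    have norm_pos : 0 < normSq (v t) := normSq_nonneg.lt_of_ne' (normSq_ne_zero.2 (v_ne_zero t))
    have norm_le := v_norm_le t
    rw [hk] at norm_pos norm_le
    exact ⟨k, pos_of_mul_pos_right norm_pos m_pos'.le,
      le_of_mul_le_mul_left (norm_le.trans_eq (mul_comm _ _)) m_pos', hk.trans (mul_comm _ _)⟩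
  refine ⟨fun t => v t, fun s hs t ht hst => ?_, fun t => exists_norm t⟩
  obtain ⟨k, hk, hk', v_norm⟩ := exists_norm s
  have v_eq : v s = v t := hst
  have dvd_sub : (m : ℤ) ∣ 2 * (s - t) :=
    dvd_of_dvd_intCast_mul_quaternion m_pos
      (fun p hp hpm => not_prime_dvd_of_normSq_eq hm hp hpm rfl (g_norm s) (v_dvd s) hk hk' v_norm)
      (two_mul_sub_dvd_of_dvd (v_dvd s) (v_eq ▸ v_dvd t))
  have m_coprime : IsCoprime (m : ℤ) 2 := Int.isCoprime_two_right.2 (mod_cast m_odd)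
  rw [Set.mem_Iio] at hs ht
  have := Int.eq_zero_of_abs_lt_dvd (m_coprime.dvd_of_dvd_mul_left dvd_sub)
    (abs_lt.2 ⟨by omega, by omega⟩)
  omega

lemma exists_le_mul_ncard_normSq_eq : ∃ C : ℕ, ∀ m : ℕ, m.Coprime 6 → 0 < m →
    m ≤ C * {v : ℍ[ℤ] | normSq v = (m : ℤ)}.ncard := by
  let U : Set ℍ[ℤ] := {u | normSq u ≤ (4 : ℤ)}
  refine ⟨U.ncard, fun m hm m_pos => ?_⟩
  obtain ⟨v, v_inj, v_norm⟩ := exists_injOn_normSq_eq hm m_pos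
  let W : Set ℍ[ℤ] := {w | normSq w = (m : ℤ)}
  have finite_prod : (U ×ˢ W).Finite :=
    (finite_setOf_normSq_le 4).prod ((finite_setOf_normSq_le m).subset fun w hw => le_of_eq hw)
  calc m = (v '' Set.Iio m).ncard := by
        rw [v_inj.ncard_image, Set.ncard_eq_toFinset_card', Set.toFinset_Iio, Nat.card_Iio]
    _ ≤ ((fun p => p.1 * p.2) '' (U ×ˢ W)).ncard := by
        refine Set.ncard_le_ncard ?_ (finite_prod.image _)
        rintro _ ⟨t, -, rfl⟩
        obtain ⟨k, hk, hk', hv⟩ := v_norm t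
        obtain ⟨u, w, hu, hw, huw⟩ := exists_eq_mul_of_normSq_eq hk hk' hv
        exact ⟨(u, w), ⟨hu.le.trans hk', hw⟩, huw.symm⟩
    _ ≤ (U ×ˢ W).ncard := Set.ncard_image_le finite_prod
    _ = _ := Set.ncard_prod

lemma exists_le_mul_ncard_latticeSphere_four : ∃ C : ℕ, ∀ m : ℕ, m.Coprime 6 → 0 < m →
    m ≤ C * (latticeSphere 4 m).ncard := by
  obtain ⟨C, hC⟩ := exists_le_mul_ncard_normSq_eq
  refine ⟨C, fun m hm m_pos => (hC m hm m_pos).trans (Nat.mul_le_mul_left C ?_)⟩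
  exact Set.ncard_le_ncard_of_injOn (equivTuple ℤ) (fun v hv => (sum_sq_equivTuple v).trans hv)
    (equivTuple ℤ).injective.injOn (finite_latticeSphere 4 m)

lemma sum_ncard_latticeSphere_le (d n : ℕ) (X : Finset ℕ) (hX : ∀ x ∈ X, x ^ 2 ≤ n) :
    ∑ x ∈ X, (latticeSphere d (n - x ^ 2)).ncard ≤ (latticeSphere (d + 1) n).ncard := by
  have ncard_eq (e k : ℕ) := Set.ncard_eq_toFinset_card _ (finite_latticeSphere e k)
  simp only [ncard_eq]
  rw [← Finset.card_sigma]
  refine Finset.card_le_card_of_injOn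
    (fun p => (Fin.cons (p.1 : ℤ) p.2 : Fin (d + 1) → ℤ)) ?_ ?_
  · rintro ⟨x, v⟩ h
    obtain ⟨hx, hv⟩ := Finset.mem_sigma.1 h
    have hv' : ∑ i, v i ^ 2 = ((n - x ^ 2 : ℕ) : ℤ) :=
      (finite_latticeSphere d (n - x ^ 2)).mem_toFinset.1 hv
    refine (Set.Finite.mem_toFinset _).2 (?_ : ∑ i, _ = _)
    simp only [Fin.sum_univ_succ, Fin.cons_zero, Fin.cons_succ, hv', Nat.cast_sub (hX x hx)]
    push_cast
    ring
  · rintro ⟨x, v⟩ _ ⟨y, w⟩ _ h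
    obtain ⟨hxy, hvw⟩ := Fin.cons_inj.1 h
    obtain rfl : x = y := Nat.cast_inj.1 hxy
    obtain rfl : v = w := hvw
    rfl

lemma card_mul_le_ncard_latticeSphere {d n : ℕ} {X : Finset ℕ} {b : ℝ}
    (hX : ∀ x ∈ X, x ^ 2 ≤ n) (hb : ∀ x ∈ X, b ≤ (latticeSphere d (n - x ^ 2)).ncard) :
    X.card * b ≤ (latticeSphere (d + 1) n).ncard :=
  calc X.card * b ≤ ∑ x ∈ X, ((latticeSphere d (n - x ^ 2)).ncard : ℝ) := by
        simpa using X.card_nsmul_le_sum _ b hb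
    _ ≤ _ := mod_cast sum_ncard_latticeSphere_le d n X hX

lemma sq_le_div_four_of_le_sqrt {n x : ℕ} (hx : x ≤ √n / 2) : (x : ℝ) ^ 2 ≤ n / 4 :=
  calc (x : ℝ) ^ 2 ≤ (√n / 2) ^ 2 := pow_le_pow_left₀ x.cast_nonneg hx 2
    _ = n / 4 := by rw [div_pow, Real.sq_sqrt n.cast_nonneg]; norm_num

lemma sq_le_of_le_sqrt {n x : ℕ} (hx : x ≤ √n / 2) : x ^ 2 ≤ n := by
  have := sq_le_div_four_of_le_sqrt hx
  exact_mod_cast (by linarith [n.cast_nonneg (α := ℝ)] : (x : ℝ) ^ 2 ≤ n)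

lemma div_four_le_sub_sq {n x : ℕ} (hx : x ≤ √n / 2) : (n : ℝ) / 4 ≤ (n - x ^ 2 : ℕ) := by
  rw [Nat.cast_sub (sq_le_of_le_sqrt hx)]
  push_cast
  linarith [sq_le_div_four_of_le_sqrt hx, n.cast_nonneg (α := ℝ)]

lemma exists_coprime_six_sub_sq (n : ℕ) :
    ∃ r < 6, ∀ j, (r + 6 * j) ^ 2 ≤ n → (n - (r + 6 * j) ^ 2).Coprime 6 := by
  suffices ∃ r < 6, ∀ k, k % 6 = r ^ 2 % 6 → k ≤ n → (n - k) % 6 = 1 ∨ (n - k) % 6 = 5 by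
    obtain ⟨r, hr, h⟩ := this
    refine ⟨r, hr, fun j hj => ?_⟩
    have sq_mod : (r + 6 * j) ^ 2 % 6 = r ^ 2 % 6 := by
      rw [show (r + 6 * j) ^ 2 = r ^ 2 + 6 * (2 * r * j + 6 * j ^ 2) by ring,
        Nat.add_mul_mod_self_left]
    rw [Nat.Coprime, Nat.gcd_comm, Nat.gcd_rec]
    obtain h1 | h5 := h _ sq_mod hj
    · rw [h1, Nat.gcd_one_left]
    · rw [h5]
      rfl
  obtain h | h | h | h | h | h : n % 6 = 0 ∨ n % 6 = 1 ∨ n % 6 = 2 ∨ n % 6 = 3 ∨ n % 6 = 4 ∨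
    n % 6 = 5 := by omega
  exacts [⟨1, by omega, by omega⟩, ⟨0, by omega, by omega⟩, ⟨3, by omega, by omega⟩,
    ⟨2, by omega, by omega⟩, ⟨3, by omega, by omega⟩, ⟨0, by omega, by omega⟩]

lemma exists_finset_coprime_six_sub_sq {n : ℕ} (hn : 24 ≤ √n) :
    ∃ X : Finset ℕ, √n / 24 ≤ X.card ∧ ∀ x ∈ X, x ≤ √n / 2 ∧ (n - x ^ 2).Coprime 6 := by
  obtain ⟨r, hr, coprime⟩ := exists_coprime_six_sub_sq n
  have progression_injective : Function.Injective fun j => r + 6 * j := fun i j hij => by grind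
  refine ⟨(Finset.range (⌊√n / 24⌋₊ + 1)).map ⟨_, progression_injective⟩, ?_, fun x hx => ?_⟩
  · rw [Finset.card_map, Finset.card_range]
    exact mod_cast (Nat.lt_floor_add_one _).le
  · obtain ⟨j, hj, rfl⟩ := Finset.mem_map.1 hx
    have hj' : (j : ℝ) ≤ √n / 24 :=
      (Nat.le_floor_iff (by positivity)).1 (Nat.lt_succ_iff.1 (Finset.mem_range.1 hj))
    have hr' : (r : ℝ) ≤ 5 := mod_cast Nat.lt_succ_iff.1 hr
    have le_half : (r + 6 * j : ℕ) ≤ √n / 2 := by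
      push_cast
      linarith
    exact ⟨le_half, coprime j (sq_le_of_le_sqrt le_half)⟩

lemma one_le_ncard_latticeSphere_five (n : ℕ) : 1 ≤ (latticeSphere 5 n).ncard := by
  obtain ⟨a, b, c, e, h⟩ := Nat.sum_four_squares n
  refine (Set.ncard_pos (finite_latticeSphere 5 n)).2 ⟨![0, a, b, c, e], ?_⟩
  rw [latticeSphere, Set.mem_ofPred_eq, Fin.sum_univ_five]
  simpa using mod_cast h

lemma exists_le_ncard_latticeSphere_five :
    ∃ c : ℝ, 0 < c ∧ ∀ n : ℕ, c * √n ^ 3 ≤ (latticeSphere 5 n).ncard := by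
  obtain ⟨C, hC⟩ := exists_le_mul_ncard_latticeSphere_four
  have C_pos : (0 : ℝ) < C := mod_cast pos_of_mul_pos_left
    (one_pos.trans_le (hC 1 (Nat.coprime_one_left 6) one_pos)) (Nat.zero_le _)
  refine ⟨min (24 ^ 3)⁻¹ (24 * (4 * C : ℝ))⁻¹, by positivity, fun n => ?_⟩
  obtain h | h := lt_or_ge √n 24
  · calc min (24 ^ 3)⁻¹ (24 * (4 * C : ℝ))⁻¹ * √n ^ 3 ≤ (24 ^ 3)⁻¹ * 24 ^ 3 := by
          gcongr
          exact min_le_left _ _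
      _ = 1 := by norm_num
      _ ≤ _ := mod_cast one_le_ncard_latticeSphere_five n
  obtain ⟨X, card_X, hX⟩ := exists_finset_coprime_six_sub_sq h
  have le_four (x : ℕ) (hx : x ∈ X) :
      (n : ℝ) / (4 * C) ≤ (latticeSphere 4 (n - x ^ 2)).ncard := by
    have sub_ge := div_four_le_sub_sq (hX x hx).1
    have n_pos : 0 < n := Nat.pos_of_ne_zero fun h0 => by norm_num [h0] at h
    have sub_pos : 0 < n - x ^ 2 := mod_cast (by positivity : (0 : ℝ) < n / 4).trans_le sub_ge
    rw [← div_div, div_le_iff₀ C_pos, mul_comm _ (C : ℝ)]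
    exact sub_ge.trans (mod_cast hC _ (hX x hx).2 sub_pos)
  calc min (24 ^ 3)⁻¹ (24 * (4 * C : ℝ))⁻¹ * √n ^ 3 ≤ (24 * (4 * C : ℝ))⁻¹ * √n ^ 3 := by
        gcongr
        exact min_le_right _ _
    _ = √n / 24 * (√n ^ 2 / (4 * C)) := by
        field_simp
    _ = √n / 24 * (n / (4 * C)) := by rw [Real.sq_sqrt n.cast_nonneg]
    _ ≤ X.card * (n / (4 * C)) := by gcongr
    _ ≤ _ := card_mul_le_ncard_latticeSphere (fun x hx => sq_le_of_le_sqrt (hX x hx).1) le_four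

lemma exists_le_ncard_latticeSphere {d : ℕ} (hd : 5 ≤ d) :
    ∃ c : ℝ, 0 < c ∧ ∀ n : ℕ, c * √n ^ (d - 2) ≤ (latticeSphere d n).ncard := by
  induction d, hd using Nat.le_induction with
  | base => exact exists_le_ncard_latticeSphere_five
  | succ d hd ih =>
    obtain ⟨c, c_pos, hc⟩ := ih
    refine ⟨c / 2 ^ (d - 1), by positivity, fun n => ?_⟩
    have le_half {x : ℕ} (hx : x ∈ Finset.range (⌊√n / 2⌋₊ + 1)) : x ≤ √n / 2 :=
      (Nat.le_floor_iff (by positivity)).1 (Nat.lt_succ_iff.1 (Finset.mem_range.1 hx))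
    calc c / 2 ^ (d - 1) * √n ^ (d + 1 - 2) = √n / 2 * (c * (√n / 2) ^ (d - 2)) := by
          rw [show d + 1 - 2 = d - 2 + 1 by omega, show d - 1 = d - 2 + 1 by omega,
            div_pow]
          ring
      _ ≤ (Finset.range (⌊√n / 2⌋₊ + 1)).card * (c * (√n / 2) ^ (d - 2)) := by
          gcongr
          rw [Finset.card_range]
          exact mod_cast (Nat.lt_floor_add_one _).le
      _ ≤ _ := card_mul_le_ncard_latticeSphere (fun x hx => sq_le_of_le_sqrt (le_half hx))
          fun x hx => le_trans ?_ (hc _)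
    gcongr
    refine Real.le_sqrt_of_sq_le ?_
    rw [div_pow, Real.sq_sqrt n.cast_nonneg]
    simpa [show (2 : ℝ) ^ 2 = 4 by norm_num] using div_four_le_sub_sq (le_half hx)

end SumsOfSquares

section CauchySchwarz

open MeasureTheory

lemma ennreal_rpow_half_sq (x : ℝ≥0∞) : (x ^ ((1 : ℝ) / 2)) ^ 2 = x := by
  rw [← ENNReal.rpow_natCast, ← ENNReal.rpow_mul]
  norm_num

lemma sq_lintegral_mul_le {α : Type*} [MeasurableSpace α] (μ : Measure α) {f g : α → ℝ≥0∞}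
    (hf : AEMeasurable f μ) (hg : AEMeasurable g μ) :
    (∫⁻ x, f x * g x ∂μ) ^ 2 ≤ (∫⁻ x, f x ^ 2 ∂μ) * ∫⁻ x, g x ^ 2 ∂μ := by
  have holder := ENNReal.lintegral_mul_le_Lp_mul_Lq μ Real.HolderConjugate.two_two hf hg
  simp only [Pi.mul_apply, ENNReal.rpow_ofNat] at holder
  calc _ ≤ _ := pow_le_pow_left₀ zero_le holder 2
    _ = _ := by rw [mul_pow, ennreal_rpow_half_sq, ennreal_rpow_half_sq]

lemma sq_tsum_mul_le {α : Type*} (f g : α → ℝ≥0∞) :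
    (∑' x, f x * g x) ^ 2 ≤ (∑' x, f x ^ 2) * ∑' x, g x ^ 2 := by
  let _ : MeasurableSpace α := ⊤
  simpa only [lintegral_count] using sq_lintegral_mul_le Measure.count
    (measurable_from_top (f := f)).aemeasurable (measurable_from_top (f := g)).aemeasurable

lemma ennreal_add_sq_le (a b : ℝ≥0∞) : (a + b) ^ 2 ≤ 2 * a ^ 2 + 2 * b ^ 2 := by
  have := ENNReal.rpow_add_le_mul_rpow_add_rpow a b one_le_two
  norm_num at this
  rwa [mul_add] at this

end CauchySchwarz

section DyadicMaximalFunction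

variable {d : ℕ}

/-- The lattice points of the open cube of side `2 ^ (k + 1)` centred at the origin. -/
def dyadicBox (d k : ℕ) : Finset (Fin d → ℤ) :=
  Fintype.piFinset fun _ => Finset.Ioo (-2 ^ k) (2 ^ k)

lemma mem_dyadicBox {k : ℕ} {j : Fin d → ℤ} : j ∈ dyadicBox d k ↔ ∀ i, |j i| < 2 ^ k := by
  simp only [dyadicBox, Fintype.mem_piFinset, Finset.mem_Ioo, abs_lt]

lemma card_dyadicBox_le (k : ℕ) : (dyadicBox d k).card ≤ 2 ^ d * 2 ^ (k * d) := by
  rw [dyadicBox, Fintype.card_piFinset_const, Int.card_Ioo, pow_mul, ← mul_pow]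
  refine Nat.pow_le_pow_left ?_ d
  have pow_pos : (1 : ℤ) ≤ 2 ^ k := mod_cast Nat.one_le_two_pow
  zify
  omega

/-- The averaging weight of `dyadicBox d k`, normalised by the size of the cube of side `2 ^ k`. -/
def boxWeight (k : ℕ) (j : Fin d → ℤ) : ℝ≥0∞ := if j ∈ dyadicBox d k then (2 ^ (k * d))⁻¹ else 0

lemma boxWeight_le (k : ℕ) (j : Fin d → ℤ) : boxWeight k j ≤ (2 ^ (k * d))⁻¹ := by
  unfold boxWeight
  split_ifs
  exacts [le_rfl, zero_le]

lemma mem_dyadicBox_of_boxWeight_ne_zero {k : ℕ} {j : Fin d → ℤ} (h : boxWeight k j ≠ 0) :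
    j ∈ dyadicBox d k := by
  by_contra hj
  exact h (if_neg hj)

lemma boxWeight_neg (k : ℕ) (j : Fin d → ℤ) : boxWeight k (-j) = boxWeight k j := by
  simp only [boxWeight, mem_dyadicBox, Pi.neg_apply, abs_neg]

lemma tsum_boxWeight_le (k : ℕ) : ∑' j : Fin d → ℤ, boxWeight k j ≤ 2 ^ d := by
  calc ∑' j : Fin d → ℤ, boxWeight k j
      = ∑ _j ∈ dyadicBox d k, ((2 : ℝ≥0∞) ^ (k * d))⁻¹ := by
        exact (tsum_eq_sum fun _ hj => if_neg hj).trans (Finset.sum_congr rfl fun _ hj => if_pos hj)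
    _ = (dyadicBox d k).card * (2 ^ (k * d))⁻¹ := by rw [Finset.sum_const, nsmul_eq_mul]
    _ ≤ 2 ^ d * 2 ^ (k * d) * (2 ^ (k * d))⁻¹ := by
        gcongr
        exact_mod_cast card_dyadicBox_le k
    _ = 2 ^ d := by
        rw [mul_assoc, ENNReal.mul_inv_cancel (by simp) (by finiteness), mul_one]

lemma tsum_boxWeight_mul_boxWeight_le_of_le {a b : ℕ} (hab : a ≤ b) (l : Fin d → ℤ) :
    ∑' j, boxWeight a j * boxWeight b (j - l) ≤ 4 ^ d * boxWeight (b + 1) l := by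
  by_cases hl : l ∈ dyadicBox d (b + 1)
  · calc ∑' j, boxWeight a j * boxWeight b (j - l)
        ≤ ∑' j : Fin d → ℤ, boxWeight a j * (2 ^ (b * d))⁻¹ := by
          gcongr
          exact boxWeight_le _ _
      _ ≤ 2 ^ d * (2 ^ (b * d))⁻¹ := by
          rw [ENNReal.tsum_mul_right]
          gcongr
          exact tsum_boxWeight_le a
      _ = 4 ^ d * ((2 ^ d)⁻¹ * (2 ^ (b * d))⁻¹) := by
          rw [← mul_assoc, show (4 : ℝ≥0∞) = 2 * 2 by norm_num, mul_pow, mul_assoc (2 ^ d),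
            ENNReal.mul_inv_cancel (by simp) (by finiteness), mul_one]
      _ = 4 ^ d * boxWeight (b + 1) l := by
          rw [boxWeight, if_pos hl, add_mul, one_mul, pow_add, mul_comm (2 ^ (b * d)),
            ENNReal.mul_inv (by simp) (by simp)]
  · refine (ENNReal.tsum_eq_zero.2 fun j => ?_).trans_le zero_le
    by_contra hne
    have hj := mem_dyadicBox.1 (mem_dyadicBox_of_boxWeight_ne_zero (left_ne_zero_of_mul hne))
    have hjl := mem_dyadicBox.1 (mem_dyadicBox_of_boxWeight_ne_zero (right_ne_zero_of_mul hne))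
    refine hl (mem_dyadicBox.2 fun i => ?_)
    have pow_le : (2 : ℤ) ^ a ≤ 2 ^ b := pow_le_pow_right₀ one_le_two hab
    calc |l i| = |j i - (j - l) i| := by rw [Pi.sub_apply, sub_sub_cancel]
      _ ≤ |j i| + |(j - l) i| := abs_sub _ _
      _ < 2 ^ (b + 1) := by linarith [hj i, hjl i, pow_succ (2 : ℤ) b]

lemma tsum_boxWeight_mul_boxWeight_le (a b : ℕ) (l : Fin d → ℤ) :
    ∑' j, boxWeight a j * boxWeight b (j - l) ≤
      4 ^ d * (boxWeight (a + 1) l + boxWeight (b + 1) l) := by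
  obtain h | h := le_total a b
  · exact (tsum_boxWeight_mul_boxWeight_le_of_le h l).trans (by gcongr; exact le_add_self)
  · calc ∑' j, boxWeight a j * boxWeight b (j - l)
        = ∑' j, boxWeight b j * boxWeight a (j - -l) := by
          rw [← (Equiv.addRight l).tsum_eq]
          simp only [Equiv.coe_addRight, add_sub_cancel_right, sub_neg_eq_add, mul_comm]
      _ ≤ 4 ^ d * boxWeight (a + 1) (-l) := tsum_boxWeight_mul_boxWeight_le_of_le h (-l)
      _ ≤ _ := by
          rw [boxWeight_neg]
          gcongr
          exact le_self_add

variable {G : Type*} [AddCommGroup G] (φ : (Fin d → ℤ) →+ G)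

/-- The average of `g` over the image of `dyadicBox d k` under `φ`, translated to `n`. -/
def boxAverage (k : ℕ) (g : G → ℝ≥0∞) (n : G) : ℝ≥0∞ := ∑' j, boxWeight k j * g (n + φ j)

/-- The maximal function of the averages over the boxes of scale at most `K`. -/
def truncatedMaximal (K : ℕ) (g : G → ℝ≥0∞) (n : G) : ℝ≥0∞ :=
  (Finset.range (K + 1)).sup fun k => boxAverage φ k g n

/-- The adjoint of the linearised maximal operator `g ↦ fun n ↦ boxAverage φ (κ n) g n`. -/
def linearizedAdjoint (κ : G → ℕ) (h : G → ℝ≥0∞) (m : G) : ℝ≥0∞ :=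
  ∑' j, boxWeight (κ (m - φ j)) j * h (m - φ j)

lemma tsum_tsum_add_map (F : G → (Fin d → ℤ) → ℝ≥0∞) :
    ∑' n, ∑' j, F (n + φ j) j = ∑' n, ∑' j, F n j := by
  rw [ENNReal.tsum_comm, ENNReal.tsum_comm (f := F)]
  exact tsum_congr fun j => (Equiv.addRight (φ j)).tsum_eq fun n => F n j

lemma boxAverage_zero (g : G → ℝ≥0∞) (n : G) : boxAverage φ 0 g n = g n := by
  rw [boxAverage, tsum_eq_single 0]
  · rw [boxWeight, if_pos (mem_dyadicBox.2 fun i => by simp)]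
    simp
  · intro j hj
    rw [boxWeight, if_neg, zero_mul]
    refine fun h => hj (funext fun i => ?_)
    simpa using mem_dyadicBox.1 h i

lemma tsum_boxAverage_sq_le (k : ℕ) (g : G → ℝ≥0∞) :
    ∑' n, boxAverage φ k g n ^ 2 ≤ 4 ^ d * ∑' n, g n ^ 2 := by
  have pointwise (n : G) :
      boxAverage φ k g n ^ 2 ≤ 2 ^ d * ∑' j, boxWeight k j * g (n + φ j) ^ 2 := by
    have h := sq_tsum_mul_le (fun j => boxWeight k j ^ ((1 : ℝ) / 2))
      fun j => boxWeight k j ^ ((1 : ℝ) / 2) * g (n + φ j)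
    simp only [← mul_assoc, ← pow_two, mul_pow, ennreal_rpow_half_sq] at h
    exact h.trans (by gcongr; exact tsum_boxWeight_le k)
  calc ∑' n, boxAverage φ k g n ^ 2
      ≤ ∑' n, 2 ^ d * ∑' j, boxWeight k j * g (n + φ j) ^ 2 := by
        gcongr
        exact pointwise _
    _ = 2 ^ d * ((∑' j : Fin d → ℤ, boxWeight k j) * ∑' n, g n ^ 2) := by
        rw [ENNReal.tsum_mul_left, tsum_tsum_add_map φ fun n j => boxWeight k j * g n ^ 2]
        simp only [ENNReal.tsum_mul_right, ENNReal.tsum_mul_left]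
    _ ≤ 2 ^ d * (2 ^ d * ∑' n, g n ^ 2) := by
        gcongr
        exact tsum_boxWeight_le k
    _ = 4 ^ d * ∑' n, g n ^ 2 := by
        rw [← mul_assoc, ← mul_pow]
        norm_num

lemma tsum_mul_boxAverage_eq (κ : G → ℕ) (h g : G → ℝ≥0∞) :
    ∑' n, h n * boxAverage φ (κ n) g n = ∑' m, g m * linearizedAdjoint φ κ h m := by
  simp only [boxAverage, linearizedAdjoint, ← ENNReal.tsum_mul_left]
  rw [← tsum_tsum_add_map φ fun m j => g m * (boxWeight (κ (m - φ j)) j * h (m - φ j))]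
  refine tsum_congr fun n => tsum_congr fun j => ?_
  rw [add_sub_cancel_right]
  ring

lemma linearizedAdjoint_add (κ : G → ℕ) (h : G → ℝ≥0∞) (n : G) (j : Fin d → ℤ) :
    linearizedAdjoint φ κ h (n + φ j) =
      ∑' l, boxWeight (κ (n + φ l)) (j - l) * h (n + φ l) := by
  rw [linearizedAdjoint, ← (Equiv.subLeft j).tsum_eq]
  refine tsum_congr fun l => ?_
  have : n + φ j - φ (j - l) = n + φ l := by
    rw [map_sub]
    abel
  simp only [Equiv.subLeft_apply, this]

/-- The kernel of the composition of the linearised operator with its adjoint is a convolution of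
two box weights, hence is dominated by the box weights of twice the size. -/
lemma tsum_linearizedAdjoint_sq_le (κ : G → ℕ) (h : G → ℝ≥0∞) :
    ∑' m, linearizedAdjoint φ κ h m ^ 2 ≤
      2 * 4 ^ d * ∑' n, h n * boxAverage φ (κ n + 1) h n := by
  have symm : ∑' n, ∑' l, h n * h (n + φ l) * boxWeight (κ (n + φ l) + 1) l =
      ∑' n, ∑' l, h n * h (n + φ l) * boxWeight (κ n + 1) l := by
    calc _ = ∑' n, ∑' l, h n * h (n - φ l) * boxWeight (κ (n - φ l) + 1) l := by
          refine tsum_congr fun n => (Equiv.neg _).tsum_eq _ |>.symm.trans (tsum_congr fun l => ?_)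
          simp only [Equiv.neg_apply, map_neg, boxWeight_neg, sub_eq_add_neg]
      _ = _ := by
          rw [← tsum_tsum_add_map φ]
          simp only [add_sub_cancel_right, mul_comm (h (_ + _))]
  calc ∑' m, linearizedAdjoint φ κ h m ^ 2
      = ∑' n, h n * boxAverage φ (κ n) (linearizedAdjoint φ κ h) n := by
        rw [tsum_mul_boxAverage_eq]
        simp only [pow_two]
    _ = ∑' n, ∑' l, h n * h (n + φ l) *
          ∑' j, boxWeight (κ n) j * boxWeight (κ (n + φ l)) (j - l) := by
        simp only [boxAverage, linearizedAdjoint_add, ← ENNReal.tsum_mul_left]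
        refine tsum_congr fun n => ENNReal.tsum_comm.trans ?_
        exact tsum_congr fun l => tsum_congr fun j => by ring
    _ ≤ ∑' n, ∑' l, h n * h (n + φ l) *
          (4 ^ d * (boxWeight (κ n + 1) l + boxWeight (κ (n + φ l) + 1) l)) := by
        gcongr
        exact tsum_boxWeight_mul_boxWeight_le _ _ _
    _ = 4 ^ d * (∑' n, ∑' l, h n * h (n + φ l) * boxWeight (κ n + 1) l +
          ∑' n, ∑' l, h n * h (n + φ l) * boxWeight (κ (n + φ l) + 1) l) := by
        simp only [← ENNReal.tsum_add, ← ENNReal.tsum_mul_left]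
        exact tsum_congr fun n => tsum_congr fun l => by ring
    _ = 2 * 4 ^ d * ∑' n, h n * boxAverage φ (κ n + 1) h n := by
        rw [symm, ← two_mul, ← mul_assoc, mul_comm _ (2 : ℝ≥0∞)]
        congr 1
        simp only [boxAverage, ← ENNReal.tsum_mul_left]
        exact tsum_congr fun n => tsum_congr fun l => by ring

lemma boxAverage_le_truncatedMaximal {k K : ℕ} (h : k ≤ K) (g : G → ℝ≥0∞) (n : G) :
    boxAverage φ k g n ≤ truncatedMaximal φ K g n :=
  Finset.le_sup (f := fun k => boxAverage φ k g n) (Finset.mem_range_succ_iff.2 h)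

lemma truncatedMaximal_mono {K L : ℕ} (h : K ≤ L) (g : G → ℝ≥0∞) (n : G) :
    truncatedMaximal φ K g n ≤ truncatedMaximal φ L g n :=
  Finset.sup_mono (by grind)

lemma exists_truncatedMaximal_eq (K : ℕ) (g : G → ℝ≥0∞) (n : G) :
    ∃ k ≤ K, truncatedMaximal φ K g n = boxAverage φ k g n := by
  obtain ⟨k, hk, h⟩ := Finset.exists_mem_eq_sup (Finset.range (K + 1))
    Finset.nonempty_range_add_one fun k => boxAverage φ k g n
  exact ⟨k, Finset.mem_range_succ_iff.1 hk, h⟩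

lemma tsum_truncatedMaximal_succ_sq_le {K : ℕ} {g : G → ℝ≥0∞} {B : ℝ≥0∞}
    (h : ∑' n, truncatedMaximal φ K g n ^ 2 ≤ B * ∑' n, g n ^ 2) :
    ∑' n, truncatedMaximal φ (K + 1) g n ^ 2 ≤ (2 * B + 2 * 4 ^ d) * ∑' n, g n ^ 2 := by
  have succ_le (n : G) : truncatedMaximal φ (K + 1) g n ≤
      truncatedMaximal φ K g n + boxAverage φ (K + 1) g n := by
    rw [truncatedMaximal, Finset.range_add_one, Finset.sup_insert]
    exact sup_le le_add_self le_self_add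
  calc ∑' n, truncatedMaximal φ (K + 1) g n ^ 2
      ≤ ∑' n, (2 * truncatedMaximal φ K g n ^ 2 + 2 * boxAverage φ (K + 1) g n ^ 2) := by
        gcongr with n
        exact (pow_le_pow_left₀ zero_le (succ_le n) 2).trans (ennreal_add_sq_le _ _)
    _ = 2 * ∑' n, truncatedMaximal φ K g n ^ 2 + 2 * ∑' n, boxAverage φ (K + 1) g n ^ 2 := by
        rw [ENNReal.tsum_add, ENNReal.tsum_mul_left, ENNReal.tsum_mul_left]
    _ ≤ 2 * (B * ∑' n, g n ^ 2) + 2 * (4 ^ d * ∑' n, g n ^ 2) := by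
        gcongr
        exact tsum_boxAverage_sq_le φ _ _
    _ = _ := by ring

/-- With `H = ‖M g‖²` and `M g` attained at the scales `κ`, duality and Cauchy–Schwarz give
`H² ≤ ‖g‖² ‖A* (M g)‖²`, and the last factor is at most `2 · 4 ^ d √(A H · H)`. -/
lemma tsum_truncatedMaximal_sq_le_of_succ {K : ℕ} {A B : ℝ≥0∞} (hAB : 4 * 16 ^ d * A ≤ B ^ 2)
    (hA : ∀ g : G → ℝ≥0∞, ∑' n, truncatedMaximal φ (K + 1) g n ^ 2 ≤ A * ∑' n, g n ^ 2)
    {g : G → ℝ≥0∞} (hg : ∑' n, truncatedMaximal φ K g n ^ 2 ≠ ⊤) :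
    ∑' n, truncatedMaximal φ K g n ^ 2 ≤ B * ∑' n, g n ^ 2 := by
  set h := truncatedMaximal φ K g
  set H := ∑' n, h n ^ 2 with H_def
  choose κ κ_le hκ using exists_truncatedMaximal_eq φ K g
  set X := ∑' m, linearizedAdjoint φ κ h m ^ 2
  have duality : H = ∑' m, g m * linearizedAdjoint φ κ h m := by
    rw [← tsum_mul_boxAverage_eq, H_def]
    exact tsum_congr fun n => by rw [pow_two, ← hκ n]
  have X_le : X ≤ B * H := by
    refine (ENNReal.pow_le_pow_left_iff two_ne_zero).1 ?_
    calc X ^ 2 ≤ (2 * 4 ^ d * ∑' n, h n * truncatedMaximal φ (K + 1) h n) ^ 2 := by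
          gcongr
          refine (tsum_linearizedAdjoint_sq_le φ κ h).trans ?_
          gcongr with n
          exact boxAverage_le_truncatedMaximal φ (by grind) h n
      _ ≤ (2 * 4 ^ d) ^ 2 * (H * (A * H)) := by
          rw [mul_pow]
          gcongr
          exact (sq_tsum_mul_le _ _).trans (by gcongr; exact hA h)
      _ = 4 * 16 ^ d * A * H ^ 2 := by
          rw [mul_pow, ← pow_mul, mul_comm d, pow_mul]
          ring
      _ ≤ (B * H) ^ 2 := by
          rw [mul_pow]
          gcongr
  obtain hH | hH := eq_or_ne H 0
  · exact hH.trans_le zero_le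
  refine (ENNReal.mul_le_mul_iff_right hH hg).1 ?_
  calc H * H = (∑' m, g m * linearizedAdjoint φ κ h m) ^ 2 := by rw [← duality, pow_two]
    _ ≤ (∑' n, g n ^ 2) * X := sq_tsum_mul_le _ _
    _ ≤ (∑' n, g n ^ 2) * (B * H) := by gcongr
    _ = H * (B * ∑' n, g n ^ 2) := by ring

lemma tsum_truncatedMaximal_sq_le (K : ℕ) (g : G → ℝ≥0∞) :
    ∑' n, truncatedMaximal φ K g n ^ 2 ≤ 100 * 64 ^ d * ∑' n, g n ^ 2 := by
  induction K generalizing g with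
  | zero =>
    have eq_self (n : G) : truncatedMaximal φ 0 g n = g n := by
      simp [truncatedMaximal, boxAverage_zero]
    simp only [eq_self]
    exact le_mul_of_one_le_left zero_le
      (mod_cast Nat.one_le_iff_ne_zero.2 (by positivity : 100 * 64 ^ d ≠ 0))
  | succ K ih =>
    obtain hg | hg := eq_or_ne (∑' n, g n ^ 2) ⊤
    · simp [hg, ENNReal.mul_top]
    have bound_succ (g : G → ℝ≥0∞) := tsum_truncatedMaximal_succ_sq_le φ (ih g)
    refine tsum_truncatedMaximal_sq_le_of_succ φ ?_
      (fun g => tsum_truncatedMaximal_succ_sq_le φ (bound_succ g))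
      (ne_top_of_le_ne_top (by finiteness) (bound_succ g))
    have four_le : 4 ^ d ≤ 64 ^ d := Nat.pow_le_pow_left (by norm_num) d
    have sixteen_le : 16 ^ d ≤ 64 ^ d := Nat.pow_le_pow_left (by norm_num) d
    have : 4 * 16 ^ d * (2 * (2 * (100 * 64 ^ d) + 2 * 4 ^ d) + 2 * 4 ^ d) ≤
        (100 * 64 ^ d) ^ 2 := by
      nlinarith [Nat.mul_le_mul four_le sixteen_le, Nat.mul_le_mul_left (64 ^ d) sixteen_le]
    exact_mod_cast this

lemma tsum_iSup_boxAverage_sq_le (g : G → ℝ≥0∞) :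
    ∑' n, (⨆ k, boxAverage φ k g n) ^ 2 ≤ 100 * 64 ^ d * ∑' n, g n ^ 2 := by
  have sq_le (n : G) : (⨆ k, boxAverage φ k g n) ^ 2 ≤ ⨆ K, truncatedMaximal φ K g n ^ 2 := by
    rw [ENNReal.iSup_pow]
    exact iSup_mono fun k =>
      pow_le_pow_left₀ zero_le (boxAverage_le_truncatedMaximal φ le_rfl g n) 2
  refine (ENNReal.tsum_le_tsum sq_le).trans ?_
  rw [ENNReal.tsum_eq_iSup_sum]
  refine iSup_le fun s => ?_
  rw [ENNReal.finsetSum_iSup_of_monotone fun n K L h =>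
    pow_le_pow_left₀ zero_le (truncatedMaximal_mono φ h g n) 2]
  exact iSup_le fun K => (ENNReal.sum_le_tsum s).trans (tsum_truncatedMaximal_sq_le φ K g)

end DyadicMaximalFunction

section GaussSum

open scoped ZMod

variable {q : ℕ} [NeZero q]

/-- The normalised quadratic Gauss sum `q⁻¹ ∑ r, e((a r² + l r) / q)`, encoded as the finite inverse
Fourier transform of `r ↦ e(a r² / q)`. -/
def gaussMean (a : ZMod q) : ZMod q → ℂ := 𝓕⁻ fun r => ZMod.stdAddChar (a * r ^ 2)

lemma norm_quadratic_sum_sq_le {a : ZMod q} (ha : IsUnit a) (l : ZMod q) :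
    ‖∑ r, (ZMod.stdAddChar (a * r ^ 2 + l * r) : ℂ)‖ ^ 2 ≤ 2 * q := by
  set ψ : AddChar (ZMod q) ℂ := ZMod.stdAddChar
  -- Squaring the sum and substituting `r = s + h` makes the sum over `s` a complete linear sum.
  have weyl_differencing : ((‖∑ r, ψ (a * r ^ 2 + l * r)‖ ^ 2 : ℝ) : ℂ) =
      ∑ h, ψ (a * h ^ 2 + l * h) * ∑ s, ψ (s * (2 * a * h)) := by
    rw [Complex.ofReal_pow, ← Complex.mul_conj', map_sum, Finset.sum_mul_sum]
    simp_rw [Finset.mul_sum]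
    rw [Finset.sum_comm, Finset.sum_comm (f := fun h s => ψ _ * ψ (s * (2 * a * h)))]
    refine Finset.sum_congr rfl fun s _ => ?_
    rw [← Equiv.sum_comp (Equiv.addRight s)]
    refine Finset.sum_congr rfl fun h _ => ?_
    rw [← AddChar.map_neg_eq_conj, ← AddChar.map_add_eq_mul, ← AddChar.map_add_eq_mul,
      Equiv.coe_addRight]
    ring_nf
  have linear_sum (h : ZMod q) :
      ∑ s, ψ (s * (2 * a * h)) = ((if 2 • h = 0 then q else 0 : ℕ) : ℂ) := by
    rw [AddChar.sum_mulShift _ (ZMod.isPrimitive_stdAddChar q), ZMod.card]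
    simp only [mul_comm 2 a, mul_assoc, ha.mul_right_eq_zero, nsmul_eq_mul, Nat.cast_ofNat]
  calc ‖∑ r, ψ (a * r ^ 2 + l * r)‖ ^ 2
      = ‖((‖∑ r, ψ (a * r ^ 2 + l * r)‖ ^ 2 : ℝ) : ℂ)‖ := by
        rw [Complex.norm_real, Real.norm_of_nonneg (by positivity)]
    _ ≤ ∑ h : ZMod q, ((if 2 • h = 0 then q else 0 : ℕ) : ℝ) := by
        rw [weyl_differencing]
        refine norm_sum_le_of_le _ fun h _ => ?_
        rw [norm_mul, AddChar.norm_apply, one_mul, linear_sum, Complex.norm_natCast]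
    _ = (Finset.univ.filter fun h : ZMod q => 2 • h = 0).card * q := by
        rw [← Nat.cast_sum, ← Finset.sum_filter, Finset.sum_const, smul_eq_mul, Nat.cast_mul]
    _ ≤ 2 * q := by
        gcongr
        exact_mod_cast IsAddCyclic.card_nsmul_eq_zero_le (α := ZMod q) two_pos

lemma norm_gaussMean_le {a : ZMod q} (ha : IsUnit a) (l : ZMod q) :
    ‖gaussMean a l‖ ≤ √2 / √q := by
  have q_pos : (0 : ℝ) < q := mod_cast NeZero.pos q
  have gaussMean_eq : gaussMean a l = (q : ℂ)⁻¹ * ∑ r, ZMod.stdAddChar (a * r ^ 2 + l * r) := by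
    simp only [gaussMean, ZMod.invDFT_apply, smul_eq_mul, ← AddChar.map_add_eq_mul, add_comm,
      mul_comm l]
  calc ‖gaussMean a l‖
      ≤ (q : ℝ)⁻¹ * √(2 * q) := by
        rw [gaussMean_eq, norm_mul, norm_inv, Complex.norm_natCast]
        gcongr
        exact Real.le_sqrt_of_sq_le (norm_quadratic_sum_sq_le ha l)
    _ = √2 / √q := by
        rw [Real.sqrt_mul zero_le_two]
        nth_rw 1 [← Real.mul_self_sqrt q_pos.le]
        field_simp

end GaussSum

section ThetaTransformation

open Complex
open scoped ZMod Real

lemma summable_norm_gaussian {c : ℂ} (hc : 0 < c.re) (ξ : ℝ) :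
    Summable fun n : ℤ => ‖cexp (-π * c * ((n : ℂ) - ξ) ^ 2)‖ := by
  have jacobi := ((summable_jacobiTheta₂_term_iff (-I * c * ξ) (I * c)).2
    (by simpa using hc)).mul_left (cexp (-π * c * ξ ^ 2))
  refine (jacobi.congr fun n => ?_).norm
  rw [jacobiTheta₂_term, ← Complex.exp_add]
  congr 1
  linear_combination (π * c * n ^ 2 - 2 * π * c * n * ξ) * I_sq

variable {q : ℕ} [NeZero q]

lemma tsum_int_eq_sum_zmod {f : ℤ → ℂ} (hf : Summable f) :
    ∑' n, f n = ∑ l : ZMod q, ∑' j : ℤ, f (j * q + l.val) := by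
  let e : ZMod q × ℤ ≃ ℤ :=
    ((ZMod.finEquiv q).symm.toEquiv.prodCongr (.refl ℤ)).trans
      ((Equiv.prodComm _ _).trans (Int.divModEquiv q).symm)
  have e_apply (l : ZMod q) (j : ℤ) : e (l, j) = j * q + l.val := by
    cases q with
    | zero => exact (NeZero.ne 0 rfl).elim
    | succ n => rfl
  have summable_e : Summable fun p => f (e p) := hf.comp_injective e.injective
  rw [← e.tsum_eq, summable_e.tsum_prod, tsum_fintype]
  simp only [e_apply]

lemma norm_fourier_apply (m : ℤ) (x : UnitAddCircle) : ‖fourier m x‖ = 1 := Circle.norm_coe _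

lemma inv_re_pos {c : ℂ} (hc : 0 < c.re) : 0 < c⁻¹.re := by
  rw [inv_re]
  exact div_pos hc (normSq_pos.2 fun h => hc.ne' (h ▸ rfl))

lemma tsum_gaussian_mul_fourier {c : ℂ} (hc : 0 < c.re) (ξ : ℝ) :
    ∑' m : ℤ, cexp (-π * c * m ^ 2) * fourier m (ξ : UnitAddCircle) =
      1 / c ^ (1 / 2 : ℂ) * ∑' n : ℤ, cexp (-π * c⁻¹ * (n - ξ) ^ 2) := by
  have poisson := tsum_exp_neg_quadratic hc (I * ξ)
  simp only [← mul_assoc, I_mul_I, neg_one_mul, ← sub_eq_add_neg, div_eq_mul_inv (-π : ℂ) c]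
    at poisson
  rw [← poisson]
  refine tsum_congr fun m => ?_
  rw [fourier_coe_apply, ← Complex.exp_add]
  congr 1
  push_cast
  ring

lemma summable_zmod_mul_gaussian (γ : ZMod q → ℂ) {c : ℂ} (hc : 0 < c.re) (ξ : ℝ) :
    Summable fun n : ℤ => ‖γ n * cexp (-π * c * (n - ξ) ^ 2)‖ := by
  obtain ⟨s, hs⟩ := (Set.finite_range fun l => ‖γ l‖).bddAbove
  refine ((summable_norm_gaussian hc ξ).mul_left s).of_nonneg_of_le (fun n => norm_nonneg _)
    fun n => ?_
  rw [norm_mul]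
  gcongr
  exact hs ⟨n, rfl⟩

lemma zmod_mul_fourier_eq_sum (Φ : ZMod q → ℂ) (m : ℤ) (ξ : ℝ) :
    Φ m * fourier m (ξ : UnitAddCircle) =
      ∑ l, 𝓕⁻ Φ l * fourier m ((ξ - l.val / q : ℝ) : UnitAddCircle) := by
  have inversion : Φ m = ∑ l : ZMod q, ZMod.stdAddChar (-(l * (m : ZMod q))) • 𝓕⁻ Φ l := by
    rw [← ZMod.dft_apply, LinearEquiv.apply_symm_apply]
  rw [inversion, Finset.sum_mul]
  refine Finset.sum_congr rfl fun l _ => ?_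
  have shift : ZMod.stdAddChar (-(l * (m : ZMod q))) * fourier m (ξ : UnitAddCircle) =
      fourier m ((ξ - l.val / q : ℝ) : UnitAddCircle) := by
    have character := ZMod.stdAddChar_coe (N := q) (-(l.val * m))
    push_cast [ZMod.natCast_zmod_val] at character
    rw [character, fourier_coe_apply, fourier_coe_apply, ← Complex.exp_add]
    congr 1
    push_cast
    ring
  rw [← shift, smul_eq_mul]
  ring

/-- Expanding `Φ` in characters of `ZMod q` turns each character into a translation of the
frequency, to which the Jacobi identity applies; the resulting sums over `ℤ` are the residue
classes of a single one. -/
lemma tsum_zmod_mul_gaussian_mul_fourier (Φ : ZMod q → ℂ) {c : ℂ} (hc : 0 < c.re) (ξ : ℝ) :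
    ∑' m : ℤ, Φ m * cexp (-π * c * m ^ 2) * fourier m (ξ : UnitAddCircle) =
      1 / c ^ (1 / 2 : ℂ) *
        ∑' n : ℤ, 𝓕⁻ Φ n * cexp (-π * (q ^ 2 * c)⁻¹ * (n - (q * ξ : ℝ)) ^ 2) := by
  have expand (m : ℤ) : Φ m * cexp (-π * c * m ^ 2) * fourier m (ξ : UnitAddCircle) =
      ∑ l, 𝓕⁻ Φ l * (cexp (-π * c * m ^ 2) *
        fourier m ((ξ - l.val / q : ℝ) : UnitAddCircle)) := by
    simp only [mul_left_comm (𝓕⁻ Φ _), ← Finset.mul_sum, ← zmod_mul_fourier_eq_sum]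
    ring
  have summable_left (l : ZMod q) : Summable fun m : ℤ => 𝓕⁻ Φ l * (cexp (-π * c * m ^ 2) *
      fourier m ((ξ - l.val / q : ℝ) : UnitAddCircle)) := by
    have summable_norm : Summable fun m : ℤ => ‖cexp (-π * c * m ^ 2) *
        fourier m ((ξ - l.val / q : ℝ) : UnitAddCircle)‖ := by
      simpa only [norm_mul, norm_fourier_apply, mul_one, ofReal_zero, sub_zero] using
        summable_norm_gaussian hc 0
    exact summable_norm.of_norm.mul_left _
  have re_pos : 0 < ((q : ℂ) ^ 2 * c)⁻¹.re := by
    refine inv_re_pos ?_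
    rw [← ofReal_natCast, ← ofReal_pow, re_ofReal_mul]
    exact mul_pos (pow_pos (mod_cast NeZero.pos q) 2) hc
  have residue (l : ZMod q) : 1 / c ^ (1 / 2 : ℂ) * ∑' j : ℤ,
      𝓕⁻ Φ ((j * q + l.val : ℤ) : ZMod q) *
        cexp (-π * (q ^ 2 * c)⁻¹ * ((j * q + l.val : ℤ) - (q * ξ : ℝ)) ^ 2) =
      𝓕⁻ Φ l * ∑' m : ℤ, cexp (-π * c * m ^ 2) *
        fourier m ((ξ - l.val / q : ℝ) : UnitAddCircle) := by
    have q_ne : (q : ℂ) ≠ 0 := Nat.cast_ne_zero.2 (NeZero.ne q)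
    have cast_eq (j : ℤ) : ((j * q + l.val : ℤ) : ZMod q) = l := by simp
    rw [tsum_gaussian_mul_fourier hc]
    simp only [cast_eq]
    rw [tsum_mul_left, mul_left_comm]
    congr! 5 with j
    push_cast
    field_simp
    ring
  simp only [expand]
  rw [Summable.tsum_finsetSum fun l _ => summable_left l,
    tsum_int_eq_sum_zmod (q := q)
      (summable_zmod_mul_gaussian (𝓕⁻ Φ) re_pos (q * ξ)).of_norm,
    Finset.mul_sum]
  exact Finset.sum_congr rfl fun l _ => by rw [tsum_mul_left, residue]

end ThetaTransformation

section SquareFunction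

/-- The profile `x / (1 + x ^ 2)`, which decays at both ends of `(0, ∞)`, so that its squares are
summable along dyadic dilations. -/
def annularBump (x : ℝ) : ℝ := x / (1 + x ^ 2)

lemma annularBump_nonneg {x : ℝ} (hx : 0 ≤ x) : 0 ≤ annularBump x := by
  unfold annularBump; positivity

lemma le_two_mul_annularBump {x : ℝ} (h0 : 0 ≤ x) (h1 : x ≤ 1) : x ≤ 2 * annularBump x := by
  rw [annularBump, ← mul_div_assoc, le_div_iff₀ (by positivity)]
  nlinarith

lemma inv_le_two_mul_annularBump {x : ℝ} (h1 : 1 ≤ x) : x⁻¹ ≤ 2 * annularBump x := by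
  rw [annularBump, ← mul_div_assoc, inv_eq_one_div, div_le_div_iff₀ (by positivity) (by positivity)]
  nlinarith

lemma sq_annularBump_le_sub (x : ℝ) :
    annularBump x ^ 2 ≤ 4 / 3 * ((2 * x) ^ 2 / (1 + (2 * x) ^ 2) - x ^ 2 / (1 + x ^ 2)) := by
  have key : (2 * x) ^ 2 / (1 + (2 * x) ^ 2) - x ^ 2 / (1 + x ^ 2) =
      3 * x ^ 2 / ((1 + 4 * x ^ 2) * (1 + x ^ 2)) := by
    field_simp
    ring
  rw [key, annularBump, div_pow, ← mul_div_assoc,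
    div_le_div_iff₀ (by positivity) (by positivity)]
  have : 0 ≤ 3 * x ^ 2 * (1 + x ^ 2) := by positivity
  nlinarith

lemma sum_sq_annularBump_le (x : ℝ) (K : ℕ) :
    ∑ k ∈ Finset.range K, annularBump (2 ^ k * x) ^ 2 ≤ 4 / 3 := by
  set φ : ℕ → ℝ := fun k => (2 ^ k * x) ^ 2 / (1 + (2 ^ k * x) ^ 2) with hφ
  have telescope : ∑ k ∈ Finset.range K, annularBump (2 ^ k * x) ^ 2 ≤ 4 / 3 * (φ K - φ 0) := by
    rw [← Finset.sum_range_sub, Finset.mul_sum]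
    refine Finset.sum_le_sum fun k _ => (sq_annularBump_le_sub _).trans_eq ?_
    simp only [hφ, ← mul_assoc, ← pow_succ']
  have hK : φ K ≤ 1 := (div_le_one (by positivity)).2 (by linarith)
  have h0 : 0 ≤ φ 0 := by positivity
  linarith

end SquareFunction

section DirichletMean

open Complex
open scoped Real

/-- The normalised Dirichlet kernel: the average of the first `N` characters of the circle. -/
def dirichletMean (N : ℕ) (x : UnitAddCircle) : ℂ :=
  (N : ℂ)⁻¹ * ∑ j ∈ Finset.range N, fourier (j : ℤ) x

lemma norm_dirichletMean_le_one (N : ℕ) (x : UnitAddCircle) : ‖dirichletMean N x‖ ≤ 1 := by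
  rw [dirichletMean, norm_mul, norm_inv, norm_natCast]
  refine inv_mul_le_one_of_le₀ ((norm_sum_le _ _).trans_eq ?_) N.cast_nonneg
  simp only [norm_fourier_apply, Finset.sum_const, Finset.card_range, nsmul_one]

lemma norm_fourier_sub_one (n : ℤ) (η : ℝ) :
    ‖fourier n (η : UnitAddCircle) - 1‖ = 2 * |Real.sin (π * (n * η))| := by
  rw [fourier_coe_apply, show (2 * π * I * n * η / (1 : ℝ) : ℂ) =
      I * ((2 * (π * (n * η)) : ℝ) : ℂ) by push_cast; ring,
    norm_exp_I_mul_ofReal_sub_one, norm_mul, Real.norm_eq_abs, Real.norm_eq_abs, abs_two,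
    mul_div_cancel_left₀ _ two_ne_zero]

lemma exists_coe_eq_abs_eq_norm (x : UnitAddCircle) :
    ∃ η : ℝ, (η : UnitAddCircle) = x ∧ |η| = ‖x‖ := by
  induction x using QuotientAddGroup.induction_on with
  | H η =>
    refine ⟨η - round η, ?_, UnitAddCircle.norm_eq.symm⟩
    simp

lemma norm_fourier_sub_one_le (n : ℕ) (x : UnitAddCircle) :
    ‖fourier (n : ℤ) x - 1‖ ≤ 2 * π * (n * ‖x‖) := by
  obtain ⟨η, rfl, hη⟩ := exists_coe_eq_abs_eq_norm x
  rw [norm_fourier_sub_one, ← hη, mul_assoc]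
  gcongr
  refine Real.abs_sin_le_abs.trans_eq ?_
  simp [abs_mul, abs_of_pos Real.pi_pos]

lemma norm_dirichletMean_sub_one_le {N : ℕ} (hN : N ≠ 0) (x : UnitAddCircle) :
    ‖dirichletMean N x - 1‖ ≤ 2 * π * (N * ‖x‖) := by
  have average : dirichletMean N x - 1 =
      (N : ℂ)⁻¹ * ∑ j ∈ Finset.range N, (fourier (j : ℤ) x - 1) := by
    simp [dirichletMean, Finset.sum_sub_distrib, mul_sub, hN]
  rw [average, norm_mul, norm_inv, norm_natCast, inv_mul_le_iff₀ (by positivity)]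
  refine (norm_sum_le_of_le _ fun j hj => (norm_fourier_sub_one_le j x).trans ?_).trans_eq
    (b := ∑ _j ∈ Finset.range N, 2 * π * (N * ‖x‖)) (by simp)
  have : j ≤ N := (Finset.mem_range.1 hj).le
  gcongr

lemma four_mul_norm_le_norm_fourier_one_sub_one (x : UnitAddCircle) :
    4 * ‖x‖ ≤ ‖fourier 1 x - 1‖ := by
  have hx := AddCircle.norm_le_half_period (1 : ℝ) one_ne_zero (x := x)
  obtain ⟨η, rfl, hη⟩ := exists_coe_eq_abs_eq_norm x
  rw [← hη, abs_one] at hx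
  rw [norm_fourier_sub_one, ← hη]
  have jordan := Real.mul_le_sin (x := π * |η|) (by positivity) (by nlinarith [Real.pi_pos])
  have habs : Real.sin (π * |η|) ≤ |Real.sin (π * η)| := by
    rcases abs_choice η with h | h <;> simp [h, le_abs_self, neg_le_abs]
  have : 2 / π * (π * |η|) = 2 * |η| := by field_simp
  rw [Int.cast_one, one_mul]
  linarith

lemma norm_dirichletMean_mul_le (N : ℕ) (x : UnitAddCircle) :
    ‖dirichletMean N x‖ * (N * ‖x‖) ≤ 1 := by
  rcases eq_or_ne N 0 with rfl | hN
  · simp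
  have geometric : (∑ j ∈ Finset.range N, fourier (j : ℤ) x) * (fourier 1 x - 1) =
      fourier (N : ℤ) x - 1 := by
    have hpow (j : ℕ) : fourier (j : ℤ) x = fourier 1 x ^ j := by
      simp [fourier_apply, AddCircle.toCircle_nsmul]
    simp only [hpow, geom_sum_mul]
  have htwo : ‖fourier (N : ℤ) x - 1‖ ≤ 2 :=
    (norm_sub_le _ _).trans_eq (by rw [norm_fourier_apply, norm_one]; norm_num)
  rw [← geometric, norm_mul] at htwo
  rw [dirichletMean, norm_mul, norm_inv, norm_natCast]
  have hfour := mul_le_mul_of_nonneg_left (four_mul_norm_le_norm_fourier_one_sub_one x)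
    (norm_nonneg (∑ j ∈ Finset.range N, fourier (j : ℤ) x))
  field_simp
  have := mul_nonneg (norm_nonneg (∑ j ∈ Finset.range N, fourier (j : ℤ) x)) (norm_nonneg x)
  linarith

end DirichletMean

section GaussianProfile

open Complex
open scoped ZMod Real

lemma re_neg_pi_mul_mul_sq (c : ℂ) (x : ℝ) :
    (-π * c * (x : ℂ) ^ 2).re = -(π * (c.re * x ^ 2)) := by
  rw [show (-π * c * (x : ℂ) ^ 2) = ((-(π * x ^ 2) : ℝ) : ℂ) * c by push_cast; ring,
    re_ofReal_mul]
  ring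

lemma norm_gaussian_le_inv {c : ℂ} (hc : 0 ≤ c.re) (x : ℝ) :
    ‖cexp (-π * c * x ^ 2)‖ ≤ (1 + π * (c.re * x ^ 2))⁻¹ := by
  rw [norm_exp, re_neg_pi_mul_mul_sq, Real.exp_neg]
  gcongr
  linarith [Real.add_one_le_exp (π * (c.re * x ^ 2))]

lemma norm_gaussian_le_one {c : ℂ} (hc : 0 ≤ c.re) (x : ℝ) : ‖cexp (-π * c * x ^ 2)‖ ≤ 1 := by
  refine (norm_gaussian_le_inv hc x).trans (inv_le_one_of_one_le₀ ?_)
  have : 0 ≤ π * (c.re * x ^ 2) := by positivity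
  linarith

lemma norm_gaussian_sub_one_le {c : ℂ} (hc : 0 ≤ c.re) (x : ℝ) :
    ‖cexp (-π * c * x ^ 2) - 1‖ ≤ 2 * (π * (‖c‖ * x ^ 2)) := by
  have hnorm : ‖-π * c * (x : ℂ) ^ 2‖ = π * (‖c‖ * x ^ 2) := by
    simp [abs_of_pos Real.pi_pos, mul_assoc]
  rw [← hnorm]
  rcases le_total ‖-π * c * (x : ℂ) ^ 2‖ 1 with h | h
  · exact norm_exp_sub_one_le h
  · have htwo := norm_sub_le (cexp (-π * c * x ^ 2)) 1
    rw [norm_one] at htwo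
    linarith [norm_gaussian_le_one hc x]

lemma norm_gaussian_mul_abs_le {c : ℂ} {B N : ℝ} (hB : 0 < B) (hN : 0 ≤ N)
    (hre : N ^ 2 ≤ B ^ 2 * c.re) (x : ℝ) : ‖cexp (-π * c * x ^ 2)‖ * (N * |x|) ≤ B := by
  have hc : 0 ≤ c.re := nonneg_of_mul_nonneg_right ((sq_nonneg N).trans hre) (by positivity)
  have hsq : (N * |x| / B) ^ 2 ≤ c.re * x ^ 2 := by
    rw [div_pow, mul_pow, sq_abs, div_le_iff₀ (by positivity)]
    nlinarith [mul_le_mul_of_nonneg_right hre (sq_nonneg x)]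
  have hlinear : N * |x| / B ≤ 1 + π * (c.re * x ^ 2) := by
    have : c.re * x ^ 2 ≤ π * (c.re * x ^ 2) :=
      le_mul_of_one_le_left (by positivity) (by linarith [Real.pi_gt_three])
    nlinarith [sq_nonneg (N * |x| / B - 1)]
  calc ‖cexp (-π * c * x ^ 2)‖ * (N * |x|)
      ≤ (1 + π * (c.re * x ^ 2))⁻¹ * (N * |x|) := by gcongr; exact norm_gaussian_le_inv hc x
    _ ≤ B := by
      rw [div_le_iff₀ hB] at hlinear
      rwa [inv_mul_le_iff₀ (by positivity)]

/-- Near the peak both functions are close to `1`; away from it both decay. -/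
lemma norm_gaussian_sub_dirichletMean_le {c : ℂ} {B : ℝ} {N : ℕ} (hN : N ≠ 0) (hB : 0 < B)
    (hc : ‖c‖ ≤ N ^ 2) (hre : N ^ 2 ≤ B ^ 2 * c.re) {x : ℝ} {y : UnitAddCircle} (hxy : |x| = ‖y‖) :
    ‖cexp (-π * c * x ^ 2) - dirichletMean N y‖ ≤ 26 * (B * annularBump (N * ‖y‖)) := by
  have hN' : (0 : ℝ) < N := by positivity
  have hc0 : 0 ≤ c.re := nonneg_of_mul_nonneg_right ((sq_nonneg _).trans hre) (by positivity)
  have hB1 : 1 ≤ B := by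
    have : (N : ℝ) ^ 2 * 1 ≤ N ^ 2 * B ^ 2 := by nlinarith [re_le_norm c, sq_nonneg B]
    have := le_of_mul_le_mul_left this (by positivity)
    nlinarith
  set E := cexp (-π * c * x ^ 2)
  set D := dirichletMean N y
  set z := N * ‖y‖ with hz
  have hz0 : 0 ≤ z := by positivity
  have hbump := le_mul_of_one_le_left (annularBump_nonneg hz0) hB1
  rcases le_total z 1 with h | h
  · have hE : ‖E - 1‖ ≤ 2 * (π * z) := by
      refine (norm_gaussian_sub_one_le hc0 x).trans ?_
      gcongr
      calc ‖c‖ * x ^ 2 ≤ N ^ 2 * x ^ 2 := by gcongr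
        _ = z ^ 2 := by rw [hz, ← hxy, mul_pow, sq_abs]
        _ ≤ z := pow_le_of_le_one hz0 h two_ne_zero
    have hD : ‖D - 1‖ ≤ 2 * π * z := norm_dirichletMean_sub_one_le hN y
    calc ‖E - D‖ = ‖E - 1 - (D - 1)‖ := by rw [sub_sub_sub_cancel_right]
      _ ≤ 4 * (π * z) := by linarith [norm_sub_le (E - 1) (D - 1)]
      _ ≤ 4 * (3.15 * z) := by gcongr; exact Real.pi_lt_d2.le
      _ ≤ 26 * (B * annularBump z) := by linarith [le_two_mul_annularBump hz0 h]
  · have hz1 : 0 < z := by linarith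
    have hE : ‖E‖ ≤ B * z⁻¹ := by
      rw [← div_eq_mul_inv, le_div_iff₀ hz1, hz, ← hxy]
      exact norm_gaussian_mul_abs_le hB hN'.le hre x
    have hD : ‖D‖ ≤ B * z⁻¹ := by
      rw [← div_eq_mul_inv, le_div_iff₀ hz1]
      exact (norm_dirichletMean_mul_le N y).trans hB1
    calc ‖E - D‖ ≤ 2 * (B * z⁻¹) := by linarith [norm_sub_le E D]
      _ ≤ 2 * (B * (2 * annularBump z)) := by gcongr; exact inv_le_two_mul_annularBump h
      _ ≤ 26 * (B * annularBump z) := by nlinarith [annularBump_nonneg hz0]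

lemma norm_gaussian_le_of_ne_round {c : ℂ} (hc : 0 < c.re) {η : ℝ} {n : ℤ} (hn : n ≠ round η) :
    ‖cexp (-π * c * (n - η) ^ 2)‖ ≤ 2 / c.re * (1 / ((n - round η : ℤ) : ℝ) ^ 2) := by
  have hm : 1 ≤ |((n - round η : ℤ) : ℝ)| := mod_cast Int.one_le_abs (sub_ne_zero.2 hn)
  set m : ℝ := ((n - round η : ℤ) : ℝ) with hm_def
  have : 0 < m ^ 2 := by rw [← sq_abs]; positivity
  have habs : |m| / 2 ≤ |n - η| := by
    have := abs_sub_le (n : ℝ) η (round η)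
    rw [← Int.cast_sub, ← hm_def] at this
    linarith [abs_sub_round η]
  have hsq : m ^ 2 / 4 ≤ (n - η) ^ 2 := by
    rw [← sq_abs, ← sq_abs (n - η)]
    nlinarith
  have hlower : c.re * m ^ 2 / 2 ≤ 1 + π * (c.re * (n - η) ^ 2) := by
    have : 3 * (c.re * (m ^ 2 / 4)) ≤ π * (c.re * (n - η) ^ 2) := by
      gcongr; exact Real.pi_gt_three.le
    nlinarith
  have hnorm := norm_gaussian_le_inv hc.le (n - η)
  push_cast at hnorm
  calc ‖cexp (-π * c * (n - η) ^ 2)‖ ≤ (1 + π * (c.re * (n - η) ^ 2))⁻¹ := hnorm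
    _ ≤ (c.re * m ^ 2 / 2)⁻¹ := by gcongr
    _ = 2 / c.re * (1 / m ^ 2) := by field_simp

variable {q : ℕ} [NeZero q]

lemma norm_tsum_zmod_mul_gaussian_sub_le {γ : ZMod q → ℂ} {s : ℝ} (hs : ∀ l, ‖γ l‖ ≤ s) {c : ℂ}
    (hc : 0 < c.re) (η : ℝ) :
    ‖∑' n : ℤ, γ n * cexp (-π * c * (n - η) ^ 2) -
        γ (round η) * cexp (-π * c * (round η - η) ^ 2)‖ ≤
      s * (2 / c.re * ∑' l : ℤ, 1 / (l : ℝ) ^ 2) := by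
  have hs0 : 0 ≤ s := (norm_nonneg _).trans (hs 0)
  have hsum := ((Equiv.subRight (round η)).hasSum_iff.2
    (Real.summable_one_div_int_pow.2 one_lt_two).hasSum).mul_left (s * (2 / c.re))
  rw [(summable_zmod_mul_gaussian γ hc η).of_norm.tsum_eq_add_tsum_ite (round η),
    add_sub_cancel_left, ← mul_assoc]
  refine tsum_of_norm_bounded hsum fun n => ?_
  split_ifs with hn
  · rw [norm_zero]
    exact mul_nonneg (by positivity) (by simp only [Function.comp_apply]; positivity)
  · rw [norm_mul]
    exact (mul_le_mul (hs _) (norm_gaussian_le_of_ne_round hc hn) (norm_nonneg _) hs0).trans_eq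
      (mul_assoc _ _ _).symm

/-- The constant in the comparison of a Gaussian series with its leading Dirichlet mean. -/
def gaussianConst : ℝ := 72 * ∑' l : ℤ, 1 / (l : ℝ) ^ 2 + 26

lemma one_le_gaussianConst : 1 ≤ gaussianConst := by
  have : 0 ≤ ∑' l : ℤ, 1 / (l : ℝ) ^ 2 := tsum_nonneg fun _ => by positivity
  unfold gaussianConst
  linarith

lemma norm_tsum_zmod_mul_gaussian_le {γ : ZMod q → ℂ} {s : ℝ} (hs : ∀ l, ‖γ l‖ ≤ s) {c : ℂ}
    (hc : 1 ≤ 36 * c.re) (η : ℝ) :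
    ‖∑' n : ℤ, γ n * cexp (-π * c * (n - η) ^ 2)‖ ≤ s * gaussianConst := by
  have hs0 : 0 ≤ s := (norm_nonneg _).trans (hs 0)
  have hc0 : 0 < c.re := by linarith
  have hpeak : ‖γ (round η) * cexp (-π * c * (round η - η) ^ 2)‖ ≤ s * 1 := by
    rw [norm_mul]
    exact mul_le_mul (hs _) (mod_cast norm_gaussian_le_one hc0.le (round η - η)) (norm_nonneg _) hs0
  have htail := norm_tsum_zmod_mul_gaussian_sub_le hs hc0 η
  have hinv : 2 / c.re ≤ 72 := by rw [div_le_iff₀ hc0]; linarith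
  have hconst : 2 / c.re * ∑' l : ℤ, 1 / (l : ℝ) ^ 2 + 1 ≤ gaussianConst := by
    unfold gaussianConst
    gcongr
    norm_num
  calc _ ≤ s * (2 / c.re * ∑' l : ℤ, 1 / (l : ℝ) ^ 2) + s * 1 :=
        (norm_le_norm_sub_add _ _).trans (add_le_add htail hpeak)
    _ ≤ s * gaussianConst := by rw [← mul_add]; gcongr

lemma norm_tsum_zmod_mul_gaussian_sub_dirichletMean_le {γ : ZMod q → ℂ} {s : ℝ}
    (hs : ∀ l, ‖γ l‖ ≤ s) {c : ℂ} {B : ℝ} {N : ℕ} (hN : N ≠ 0) (hB : 0 < B) (hBN : B ≤ 6 * N)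
    (hc : ‖c‖ ≤ N ^ 2) (hre : N ^ 2 ≤ B ^ 2 * c.re) (η : ℝ) :
    ‖∑' n : ℤ, γ n * cexp (-π * c * (n - η) ^ 2) -
        γ (round η) * dirichletMean N (η : UnitAddCircle)‖ ≤
      s * gaussianConst *
        (B * ((N : ℝ)⁻¹ + annularBump (N * ‖(η : UnitAddCircle)‖))) := by
  have hs0 : 0 ≤ s := (norm_nonneg _).trans (hs 0)
  have hN' : (0 : ℝ) < N := by positivity
  have hc0 : 0 < c.re := pos_of_mul_pos_right ((by positivity : (0 : ℝ) < N ^ 2).trans_le hre)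
    (by positivity)
  have hinv : 2 / c.re ≤ 12 * (B * (N : ℝ)⁻¹) := by
    rw [div_le_iff₀ hc0]
    field_simp
    nlinarith
  set Z := ∑' l : ℤ, 1 / (l : ℝ) ^ 2 with hZ
  have : 0 ≤ Z := tsum_nonneg fun _ => by positivity
  set bump := annularBump (N * ‖(η : UnitAddCircle)‖)
  have hbump : 0 ≤ bump := annularBump_nonneg (by positivity)
  have hpeak : ‖γ (round η) * (cexp (-π * c * (round η - η) ^ 2) -
      dirichletMean N (η : UnitAddCircle))‖ ≤ s * (26 * (B * bump)) := by
    rw [norm_mul]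
    refine mul_le_mul (hs _) ?_ (norm_nonneg _) hs0
    have hround : |round η - η| = ‖(η : UnitAddCircle)‖ := by
      rw [UnitAddCircle.norm_eq, abs_sub_comm]
    exact_mod_cast norm_gaussian_sub_dirichletMean_le hN hB hc hre hround
  calc _ ≤ s * (2 / c.re * Z) + s * (26 * (B * bump)) := by
        refine (norm_sub_le_norm_sub_add_norm_sub _
          (γ (round η) * cexp (-π * c * (round η - η) ^ 2)) _).trans (add_le_add ?_ ?_)
        · exact norm_tsum_zmod_mul_gaussian_sub_le hs hc0 η
        · rwa [← mul_sub]
    _ ≤ s * (12 * (B * (N : ℝ)⁻¹) * Z) + s * (26 * (B * bump)) := by gcongr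
    _ ≤ s * gaussianConst * (B * ((N : ℝ)⁻¹ + bump)) := by
      have : 0 ≤ s * (B * ((60 * Z + 26) * (N : ℝ)⁻¹ + 72 * Z * bump)) := by positivity
      rw [gaussianConst, ← hZ]
      linarith

end GaussianProfile

section ArcSymbol

open Complex
open scoped ZMod Real

/-- The complex Gaussian parameter `c` of the arc point `a / q + u / (2 * 4 ^ k)`: there
`e(t m ^ 2) * exp (-π m ^ 2 / 4 ^ k) = e(a m ^ 2 / q) * exp (-π c m ^ 2)`. -/
def arcParam (k : ℕ) (u : ℝ) : ℂ := (1 - I * u) / 4 ^ k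

lemma re_arcParam_pos (k : ℕ) (u : ℝ) : 0 < (arcParam k u).re := by
  have : arcParam k u = ((4 ^ k : ℝ)⁻¹ : ℝ) * (1 - I * u) := by
    rw [arcParam]; push_cast; ring
  rw [this, re_ofReal_mul]
  simp

lemma norm_one_sub_I_mul (u : ℝ) : ‖1 - I * u‖ = √(1 + u ^ 2) := by
  rw [norm_def]
  congr 1
  simp [normSq_apply, sq]

lemma one_sub_I_mul_ne_zero (u : ℝ) : (1 - I * u : ℂ) ≠ 0 := by
  rw [← norm_pos_iff, norm_one_sub_I_mul]
  positivity

lemma sq_mul_cpow_half {r : ℝ} (hr : 0 < r) {z : ℂ} (hz : z ≠ 0) :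
    ((r : ℂ) ^ 2 * z) ^ (1 / 2 : ℂ) = r * z ^ (1 / 2 : ℂ) := by
  have hlog : log ((r : ℂ) ^ 2 * z) = (2 * Real.log r : ℝ) + log z := by
    rw [← ofReal_pow, log_ofReal_mul (by positivity) hz, Real.log_pow, Nat.cast_ofNat]
  have hr' : (r : ℂ) ≠ 0 := mod_cast hr.ne'
  rw [cpow_def_of_ne_zero (mul_ne_zero (pow_ne_zero 2 hr') hz), hlog, add_mul, exp_add,
    ← cpow_def_of_ne_zero hz, show ((2 * Real.log r : ℝ) : ℂ) * (1 / 2) = (Real.log r : ℂ) by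
      push_cast; ring, ← ofReal_exp, Real.exp_log hr]

lemma arcParam_cpow_half (k : ℕ) (u : ℝ) :
    arcParam k u ^ (1 / 2 : ℂ) = (1 - I * u) ^ (1 / 2 : ℂ) / 2 ^ k := by
  have hparam : arcParam k u = (((2 ^ k)⁻¹ : ℝ) : ℂ) ^ 2 * (1 - I * u) := by
    rw [arcParam, show (4 : ℂ) = 2 ^ 2 by norm_num, pow_right_comm, div_eq_inv_mul]
    push_cast
    rw [inv_pow]
  rw [hparam, sq_mul_cpow_half (by positivity) (one_sub_I_mul_ne_zero u)]
  push_cast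
  rw [mul_comm, ← div_eq_mul_inv]

lemma inv_sq_mul_arcParam (q k : ℕ) (u : ℝ) :
    ((q : ℂ) ^ 2 * arcParam k u)⁻¹ = (((2 ^ k / q) ^ 2 / (1 + u ^ 2) : ℝ) : ℂ) * (1 + I * u) := by
  have hmul : (1 - I * u : ℂ) * (1 + I * u) = ((1 + u ^ 2 : ℝ) : ℂ) := by
    push_cast
    linear_combination -(u : ℂ) ^ 2 * I_sq
  have hne := one_sub_I_mul_ne_zero u
  have hne' : ((1 + u ^ 2 : ℝ) : ℂ) ≠ 0 := mod_cast (by positivity : (1 + u ^ 2 : ℝ) ≠ 0)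
  rw [ofReal_div, div_mul_eq_mul_div, eq_div_iff hne', ← hmul, arcParam,
    show (4 : ℂ) = 2 ^ 2 by norm_num, pow_right_comm]
  rcases eq_or_ne (q : ℂ) 0 with hq | hq
  · simp [hq]
  · push_cast
    field_simp

/-- The largest dyadic scale `N` for which the `N` multiples of `q` below `N * q` stay of size
`2 ^ k`, up to a factor of two. -/
def arcScale (q k : ℕ) : ℕ := 2 ^ (k - Nat.log 2 q)

lemma div_le_arcScale {q k : ℕ} (hq : q ≠ 0) : (2 ^ k / q : ℝ) ≤ arcScale q k := by
  have hlog : (2 : ℝ) ^ Nat.log 2 q ≤ q := mod_cast Nat.pow_log_le_self 2 hq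
  have hq0 : (0 : ℝ) < q := by positivity
  rw [div_le_iff₀ hq0, arcScale]
  push_cast
  calc (2 : ℝ) ^ k ≤ 2 ^ (k - Nat.log 2 q) * 2 ^ Nat.log 2 q := by
        rw [← pow_add]; gcongr <;> [norm_num; omega]
    _ ≤ 2 ^ (k - Nat.log 2 q) * q := by gcongr

lemma arcScale_le_two_mul_div {q k : ℕ} (hq : q ≠ 0) (hqk : q ≤ 2 ^ k) :
    (arcScale q k : ℝ) ≤ 2 * (2 ^ k / q) := by
  have hlog : (q : ℝ) ≤ 2 ^ (Nat.log 2 q + 1) := mod_cast (Nat.lt_pow_succ_log_self one_lt_two q).le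
  have hle : Nat.log 2 q ≤ k := Nat.log_pow one_lt_two k ▸ Nat.log_mono_right hqk
  have hq0 : (0 : ℝ) < q := by positivity
  rw [← mul_div_assoc, le_div_iff₀ hq0, arcScale]
  push_cast
  calc (2 : ℝ) ^ (k - Nat.log 2 q) * q ≤ 2 ^ (k - Nat.log 2 q) * 2 ^ (Nat.log 2 q + 1) := by gcongr
    _ = 2 * 2 ^ k := by rw [← pow_add, ← pow_succ']; congr 1; omega

lemma one_le_arcScale (q k : ℕ) : (1 : ℝ) ≤ arcScale q k := by
  unfold arcScale
  exact_mod_cast Nat.one_le_two_pow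

/-- The scales `k` at which the denominator `q` and the arc variable `u` occur. -/
def ArcAdmissible (q k : ℕ) (u : ℝ) : Prop := q ≤ 2 ^ k ∧ |u| ≤ 2 * (2 ^ k / q)

instance (q k : ℕ) (u : ℝ) : Decidable (ArcAdmissible q k u) := Classical.dec _

variable {q : ℕ} [NeZero q]

lemma norm_inv_sq_mul_arcParam_le (k : ℕ) (u : ℝ) :
    ‖((q : ℂ) ^ 2 * arcParam k u)⁻¹‖ ≤ (arcScale q k : ℝ) ^ 2 := by
  have hnorm : ‖(1 + I * u : ℂ)‖ = √(1 + u ^ 2) := by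
    simpa using norm_one_sub_I_mul (-u)
  rw [inv_sq_mul_arcParam, norm_mul, hnorm, norm_real, Real.norm_of_nonneg (by positivity)]
  have hsqrt : √(1 + u ^ 2) ≤ 1 + u ^ 2 :=
    Real.sqrt_le_iff.2 ⟨by positivity, by nlinarith [sq_nonneg u, sq_nonneg (u ^ 2)]⟩
  calc (2 ^ k / q : ℝ) ^ 2 / (1 + u ^ 2) * √(1 + u ^ 2)
      ≤ (2 ^ k / q : ℝ) ^ 2 / (1 + u ^ 2) * (1 + u ^ 2) := by gcongr
    _ = (2 ^ k / q : ℝ) ^ 2 := by field_simp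
    _ ≤ (arcScale q k : ℝ) ^ 2 := by gcongr; exact div_le_arcScale (NeZero.ne q)

lemma sq_arcScale_le {k : ℕ} (hqk : q ≤ 2 ^ k) (u : ℝ) :
    (arcScale q k : ℝ) ^ 2 ≤ (2 * (1 + |u|)) ^ 2 * ((q : ℂ) ^ 2 * arcParam k u)⁻¹.re := by
  have hre : ((q : ℂ) ^ 2 * arcParam k u)⁻¹.re = (2 ^ k / q) ^ 2 / (1 + u ^ 2) := by
    rw [inv_sq_mul_arcParam, re_ofReal_mul]
    simp
  rw [hre, ← mul_div_assoc, le_div_iff₀ (by positivity)]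
  calc (arcScale q k : ℝ) ^ 2 * (1 + u ^ 2) ≤ (2 * (2 ^ k / q)) ^ 2 * (1 + |u|) ^ 2 := by
        gcongr
        · exact arcScale_le_two_mul_div (NeZero.ne q) hqk
        · nlinarith [abs_nonneg u, sq_abs u]
    _ = (2 * (1 + |u|)) ^ 2 * (2 ^ k / q) ^ 2 := by ring

/-- The one-dimensional convolution kernel at an arc point. -/
def arcKernel (a : ZMod q) (k : ℕ) (u : ℝ) (m : ℤ) : ℂ :=
  (2 ^ k)⁻¹ * (ZMod.stdAddChar (a * (m : ZMod q) ^ 2) * cexp (-π * arcParam k u * m ^ 2))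

lemma summable_norm_arcKernel (a : ZMod q) (k : ℕ) (u : ℝ) :
    Summable fun m => ‖arcKernel a k u m‖ := by
  have hsum := summable_zmod_mul_gaussian (fun r => ZMod.stdAddChar (a * r ^ 2))
    (re_arcParam_pos k u) 0
  simp only [ofReal_zero, sub_zero] at hsum
  simpa only [arcKernel, norm_mul] using hsum.mul_left ‖((2 : ℂ) ^ k)⁻¹‖

/-- The Fourier series of `arcKernel`. -/
def arcSymbol (a : ZMod q) (k : ℕ) (u : ℝ) (x : UnitAddCircle) : ℂ :=
  ∑' m : ℤ, arcKernel a k u m * fourier m x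

/-- The weight with which the theta transformation charges the frequencies near `l / q`. -/
def arcMultiplier (a : ZMod q) (u : ℝ) (l : ZMod q) : ℂ :=
  ((1 - I * u) ^ (1 / 2 : ℂ))⁻¹ * gaussMean a l

/-- The size of `arcMultiplier`. -/
def arcSize (q : ℕ) (u : ℝ) : ℝ := (1 + u ^ 2) ^ (-(1 / 4) : ℝ) * (√2 / √q)

lemma norm_arcMultiplier_le {a : ZMod q} (ha : IsUnit a) (u : ℝ) (l : ZMod q) :
    ‖arcMultiplier a u l‖ ≤ arcSize q u := by
  have hpow : ‖((1 - I * u) ^ (1 / 2 : ℂ))⁻¹‖ = (1 + u ^ 2) ^ (-(1 / 4) : ℝ) := by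
    have hhalf : ‖(1 - I * u) ^ (1 / 2 : ℂ)‖ = ‖1 - I * u‖ ^ (1 / 2 : ℝ) := by
      rw [← norm_cpow_real]; norm_num
    rw [norm_inv, hhalf, norm_one_sub_I_mul, Real.sqrt_eq_rpow, ← Real.rpow_mul (by positivity),
      ← Real.rpow_neg (by positivity)]
    norm_num
  rw [arcMultiplier, norm_mul, hpow, arcSize]
  gcongr
  exact norm_gaussMean_le ha l

lemma arcSymbol_coe (a : ZMod q) (k : ℕ) (u ξ : ℝ) :
    arcSymbol a k u ξ = ∑' n : ℤ, arcMultiplier a u n *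
      cexp (-π * ((q : ℂ) ^ 2 * arcParam k u)⁻¹ * (n - (q * ξ : ℝ)) ^ 2) := by
  have htheta := tsum_zmod_mul_gaussian_mul_fourier (fun r => ZMod.stdAddChar (a * r ^ 2))
    (re_arcParam_pos k u) ξ
  simp only [arcSymbol, arcKernel, arcMultiplier, mul_assoc, tsum_mul_left] at htheta ⊢
  rw [htheta, arcParam_cpow_half, gaussMean]
  field_simp

/-- The representative of a point of the circle in `(0, 1]`. -/
def circleRep (x : UnitAddCircle) : ℝ := AddCircle.equivIoc 1 0 x

lemma coe_circleRep (x : UnitAddCircle) : (circleRep x : UnitAddCircle) = x :=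
  AddCircle.coe_equivIoc

/-- The value of a multiplier on `ZMod q` at the point of `q⁻¹ℤ / ℤ` nearest to `x`. -/
def nearestValue (γ : ZMod q → ℂ) (x : UnitAddCircle) : ℂ := γ (round (q * circleRep x))

/-- The main term of `arcSymbol`: the frequency is moved to the nearest fraction of denominator
`q`, and the Gaussian is replaced by a Dirichlet mean over the multiples of `q`. -/
def mainSymbol (a : ZMod q) (k : ℕ) (u : ℝ) (x : UnitAddCircle) : ℂ :=
  nearestValue (arcMultiplier a u) x * dirichletMean (arcScale q k) (q • x)

lemma norm_mainSymbol_le {a : ZMod q} (ha : IsUnit a) (k : ℕ) (u : ℝ) (x : UnitAddCircle) :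
    ‖mainSymbol a k u x‖ ≤ arcSize q u := by
  rw [mainSymbol, norm_mul]
  exact (mul_le_of_le_one_right (norm_nonneg _) (norm_dirichletMean_le_one _ _)).trans
    (norm_arcMultiplier_le ha u _)

lemma arcSymbol_bounds {a : ZMod q} (ha : IsUnit a) {k : ℕ} {u : ℝ} (h : ArcAdmissible q k u)
    (x : UnitAddCircle) :
    ‖arcSymbol a k u x‖ ≤ arcSize q u * gaussianConst ∧
      ‖arcSymbol a k u x - mainSymbol a k u x‖ ≤ arcSize q u * gaussianConst *
        (2 * (1 + |u|) * ((arcScale q k : ℝ)⁻¹ + annularBump (arcScale q k * ‖q • x‖))) := by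
  have hscale := one_le_arcScale q k
  have hB : 2 * (1 + |u|) ≤ 6 * arcScale q k := by
    linarith [h.2, div_le_arcScale (k := k) (NeZero.ne q)]
  have hre := sq_arcScale_le h.1 u
  have hre' : 1 ≤ 36 * ((q : ℂ) ^ 2 * arcParam k u)⁻¹.re := by
    have hBsq : (2 * (1 + |u|)) ^ 2 ≤ (6 * arcScale q k : ℝ) ^ 2 := by gcongr
    have hre0 : 0 ≤ ((q : ℂ) ^ 2 * arcParam k u)⁻¹.re := by
      by_contra! hneg
      nlinarith [sq_nonneg (2 * (1 + |u|))]
    have hchain := hre.trans (mul_le_mul_of_nonneg_right hBsq hre0)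
    rw [mul_pow, mul_comm (6 ^ 2), mul_assoc] at hchain
    linarith [le_of_mul_le_mul_left ((mul_one _).trans_le hchain) (by positivity)]
  have hpoint : ((q * circleRep x : ℝ) : UnitAddCircle) = q • x := by
    conv_rhs => rw [← coe_circleRep x]
    rw [← nsmul_eq_mul, AddCircle.coe_nsmul]
  have hsize := norm_arcMultiplier_le ha u
  have harc := arcSymbol_coe a k u (circleRep x)
  rw [coe_circleRep] at harc
  rw [harc, mainSymbol, nearestValue, ← hpoint]
  exact ⟨norm_tsum_zmod_mul_gaussian_le hsize hre' _,
    norm_tsum_zmod_mul_gaussian_sub_dirichletMean_le hsize (by simp [arcScale])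
      (by positivity) hB (norm_inv_sq_mul_arcParam_le k u) hre _⟩

end ArcSymbol

section ArcError

open Finset

lemma norm_prod_sub_prod_le {ι : Type*} (s : Finset ι) {x y : ι → ℂ} {A : ℝ} {ε : ι → ℝ}
    (hx : ∀ i ∈ s, ‖x i‖ ≤ A) (hy : ∀ i ∈ s, ‖y i‖ ≤ A) (hxy : ∀ i ∈ s, ‖x i - y i‖ ≤ A * ε i) :
    ‖∏ i ∈ s, x i - ∏ i ∈ s, y i‖ ≤ A ^ #s * ∑ i ∈ s, ε i := by
  classical
  induction s using Finset.induction_on with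
  | empty => simp
  | insert i s hi ih =>
    simp only [forall_mem_insert] at hx hy hxy
    have hA : 0 ≤ A := (norm_nonneg _).trans hx.1
    have hprod : ‖∏ j ∈ s, x j‖ ≤ A ^ #s := by
      rw [norm_prod]
      exact (prod_le_prod (fun _ _ => norm_nonneg _) hx.2).trans_eq (prod_const A)
    rw [prod_insert hi, prod_insert hi, sum_insert hi, card_insert_of_notMem hi]
    calc ‖x i * ∏ j ∈ s, x j - y i * ∏ j ∈ s, y j‖
        = ‖(x i - y i) * ∏ j ∈ s, x j + y i * (∏ j ∈ s, x j - ∏ j ∈ s, y j)‖ := by ring_nf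
      _ ≤ A * ε i * A ^ #s + A * (A ^ #s * ∑ j ∈ s, ε j) := by
          refine norm_add_le_of_le ?_ ?_ <;> rw [norm_mul]
          · exact mul_le_mul hxy.1 hprod (norm_nonneg _) ((norm_nonneg _).trans hxy.1)
          · exact mul_le_mul hy.1 (ih hx.2 hy.2 hxy.2) (norm_nonneg _) hA
      _ = A ^ (#s + 1) * (ε i + ∑ j ∈ s, ε j) := by ring

lemma sum_sq_inv_add_annularBump_le (x : ℝ) (K : ℕ) :
    ∑ k ∈ range K, (((2 : ℝ) ^ k)⁻¹ + annularBump (2 ^ k * x)) ^ 2 ≤ 6 := by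
  have hgeom : ∑ k ∈ range K, ((2 : ℝ) ^ k)⁻¹ ^ 2 ≤ 4 / 3 := by
    calc ∑ k ∈ range K, ((2 : ℝ) ^ k)⁻¹ ^ 2 = ∑ k ∈ range K, (1 / 4 : ℝ) ^ k := by
          refine sum_congr rfl fun k _ => ?_
          rw [← inv_pow, pow_right_comm]
          norm_num
      _ ≤ ∑' k : ℕ, (1 / 4 : ℝ) ^ k :=
          (summable_geometric_of_lt_one (by norm_num) (by norm_num)).sum_le_tsum _
            fun _ _ => by positivity
      _ = 4 / 3 := by rw [tsum_geometric_of_lt_one (by norm_num) (by norm_num)]; norm_num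
  calc ∑ k ∈ range K, (((2 : ℝ) ^ k)⁻¹ + annularBump (2 ^ k * x)) ^ 2
      ≤ ∑ k ∈ range K, 2 * (((2 : ℝ) ^ k)⁻¹ ^ 2 + annularBump (2 ^ k * x) ^ 2) :=
        sum_le_sum fun k _ => add_sq_le
    _ = 2 * (∑ k ∈ range K, ((2 : ℝ) ^ k)⁻¹ ^ 2 + ∑ k ∈ range K, annularBump (2 ^ k * x) ^ 2) := by
        rw [← mul_sum, sum_add_distrib]
    _ ≤ 6 := by linarith [sum_sq_annularBump_le x K]

/-- The weight of the arc point `a / q + u / (2 * 4 ^ k)` in the maximal inequality. The exponents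
are those that a `d`-fold product of Gauss sums and Gaussians affords when `d = 5`. -/
def arcWeight (q : ℕ) (u : ℝ) : ℝ := (1 + u ^ 2) ^ (-(3 / 4) : ℝ) * (q : ℝ) ^ (-(5 / 2) : ℝ)

lemma arcWeight_sq (q : ℕ) (u : ℝ) :
    arcWeight q u ^ 2 = (1 + u ^ 2) ^ (-(3 / 2) : ℝ) * (q : ℝ) ^ (-5 : ℝ) := by
  rw [arcWeight, mul_pow, ← Real.rpow_mul_natCast (by positivity),
    ← Real.rpow_mul_natCast (by positivity)]
  norm_num

lemma arcSize_sq (q : ℕ) (u : ℝ) :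
    arcSize q u ^ 2 = 2 * ((1 + u ^ 2) ^ (-(1 / 2) : ℝ) * (q : ℝ) ^ (-1 : ℝ)) := by
  rw [arcSize, mul_pow, div_pow, Real.sq_sqrt zero_le_two, Real.sq_sqrt (by positivity),
    ← Real.rpow_natCast, ← Real.rpow_mul (by positivity), Real.rpow_neg_one]
  ring_nf

lemma arcSize_nonneg (q : ℕ) (u : ℝ) : 0 ≤ arcSize q u := by
  unfold arcSize
  positivity

lemma sum_arcScale_le (q : ℕ) (u : ℝ) {g : ℝ → ℝ} (hg : ∀ x, 0 ≤ g x) (K : ℕ) :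
    ∑ k ∈ range K with ArcAdmissible q k u, g (arcScale q k) ≤ ∑ j ∈ range K, g (2 ^ j) := by
  have hlog : ∀ k ∈ {k ∈ range K | ArcAdmissible q k u}, Nat.log 2 q ≤ k ∧ k < K := by
    intro k hk
    simp only [mem_filter, mem_range] at hk
    exact ⟨Nat.log_pow one_lt_two k ▸ Nat.log_mono_right hk.2.1, hk.1⟩
  have hinj : Set.InjOn (fun k => k - Nat.log 2 q)
      ({k ∈ range K | ArcAdmissible q k u} : Finset ℕ) :=
    fun k hk l hl (hkl : k - Nat.log 2 q = l - Nat.log 2 q) => by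
      have := hlog k hk
      have := hlog l hl
      omega
  simp only [arcScale, Nat.cast_pow, Nat.cast_ofNat]
  rw [← sum_image (f := fun j => g (2 ^ j)) hinj]
  refine sum_le_sum_of_subset_of_nonneg (fun j hj => ?_) fun _ _ _ => hg _
  obtain ⟨k, hk, rfl⟩ := mem_image.1 hj
  exact mem_range.2 ((Nat.sub_le _ _).trans_lt (hlog k hk).2)

variable {d q : ℕ} [NeZero q]

lemma arcSize_pow_mul_le (hd : 5 ≤ d) (u : ℝ) :
    arcSize q u ^ (2 * d) * (1 + u ^ 2) ≤ 2 ^ d * arcWeight q u ^ 2 := by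
  have hq : (1 : ℝ) ≤ q := mod_cast NeZero.one_le
  have hu : (1 : ℝ) ≤ 1 + u ^ 2 := by nlinarith [sq_nonneg u]
  have hd' : (5 : ℝ) ≤ d := mod_cast hd
  calc arcSize q u ^ (2 * d) * (1 + u ^ 2)
      = 2 ^ d * ((1 + u ^ 2) ^ (-(1 / 2) * d + 1 : ℝ) * (q : ℝ) ^ (-1 * d : ℝ)) := by
        rw [pow_mul, arcSize_sq, mul_pow, mul_pow, Real.rpow_add (by positivity), Real.rpow_one,
          Real.rpow_mul (by positivity), Real.rpow_mul (by positivity), Real.rpow_natCast,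
          Real.rpow_natCast]
        ring
    _ ≤ 2 ^ d * ((1 + u ^ 2) ^ (-(3 / 2) : ℝ) * (q : ℝ) ^ (-5 : ℝ)) := by
        gcongr <;> linarith
    _ = 2 ^ d * arcWeight q u ^ 2 := by rw [arcWeight_sq]

lemma norm_prod_arcSymbol_sub_sq_le {a : ZMod q} (ha : IsUnit a) {k : ℕ} {u : ℝ}
    (h : ArcAdmissible q k u) (x : Fin d → UnitAddCircle) :
    ‖∏ i, arcSymbol a k u (x i) - ∏ i, mainSymbol a k u (x i)‖ ^ 2 ≤
      (arcSize q u * gaussianConst) ^ (2 * d) * (8 * (1 + u ^ 2)) * (d *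
        ∑ i, ((arcScale q k : ℝ)⁻¹ + annularBump (arcScale q k * ‖q • x i‖)) ^ 2) := by
  have hsize := arcSize_nonneg q u
  have hconst := one_le_gaussianConst
  have hmain (i : Fin d) : ‖mainSymbol a k u (x i)‖ ≤ arcSize q u * gaussianConst :=
    (norm_mainSymbol_le ha k u _).trans (le_mul_of_one_le_right hsize hconst)
  have hdiff := norm_prod_sub_prod_le univ (fun i _ => (arcSymbol_bounds ha h (x i)).1)
    (fun i _ => hmain i) (fun i _ => (arcSymbol_bounds ha h (x i)).2)
  rw [card_univ, Fintype.card_fin, ← mul_sum] at hdiff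
  have hu : (2 * (1 + |u|)) ^ 2 ≤ 8 * (1 + u ^ 2) := by
    nlinarith [sq_abs u, sq_nonneg (1 - |u|)]
  have hcard := sq_sum_le_card_mul_sum_sq (s := univ)
    (f := fun i => (arcScale q k : ℝ)⁻¹ + annularBump (arcScale q k * ‖q • x i‖))
  rw [card_univ, Fintype.card_fin] at hcard
  refine (pow_le_pow_left₀ (norm_nonneg _) hdiff 2).trans ?_
  rw [mul_pow (_ ^ d), mul_pow (2 * (1 + |u|)), ← pow_mul, mul_comm d 2, ← mul_assoc]
  gcongr

/-- The loss in replacing the arc symbols by their main terms, summed over all scales. -/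
def arcErrorConst (d : ℕ) : ℝ := 48 * d ^ 2 * (2 * gaussianConst ^ 2) ^ d

lemma sum_norm_prod_arcSymbol_sub_sq_le (hd : 5 ≤ d) {a : ZMod q} (ha : IsUnit a) (u : ℝ)
    (x : Fin d → UnitAddCircle) (K : ℕ) :
    ∑ k ∈ range K with ArcAdmissible q k u,
        ‖∏ i, arcSymbol a k u (x i) - ∏ i, mainSymbol a k u (x i)‖ ^ 2 ≤
      arcErrorConst d * arcWeight q u ^ 2 := by
  set W := (arcSize q u * gaussianConst) ^ (2 * d) * (8 * (1 + u ^ 2)) with hW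
  have : 0 ≤ W := by
    rw [hW, pow_mul]
    positivity
  calc ∑ k ∈ range K with ArcAdmissible q k u,
          ‖∏ i, arcSymbol a k u (x i) - ∏ i, mainSymbol a k u (x i)‖ ^ 2
      ≤ ∑ k ∈ range K with ArcAdmissible q k u, W * (d *
          ∑ i, ((arcScale q k : ℝ)⁻¹ + annularBump (arcScale q k * ‖q • x i‖)) ^ 2) :=
        sum_le_sum fun k hk => norm_prod_arcSymbol_sub_sq_le ha (mem_filter.1 hk).2 x
    _ = W * (d * ∑ i, ∑ k ∈ range K with ArcAdmissible q k u,
          ((arcScale q k : ℝ)⁻¹ + annularBump (arcScale q k * ‖q • x i‖)) ^ 2) := by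
        rw [← mul_sum, ← mul_sum, sum_comm]
    _ ≤ W * (d * ∑ _i : Fin d, 6) := by
        gcongr with i
        exact (sum_arcScale_le q u (g := fun N => (N⁻¹ + annularBump (N * ‖q • x i‖)) ^ 2)
          (fun _ => sq_nonneg _) K).trans (sum_sq_inv_add_annularBump_le _ K)
    _ = 48 * d ^ 2 * gaussianConst ^ (2 * d) * (arcSize q u ^ (2 * d) * (1 + u ^ 2)) := by
        rw [sum_const, card_univ, Fintype.card_fin, nsmul_eq_mul, hW, mul_pow]
        ring
    _ ≤ 48 * d ^ 2 * gaussianConst ^ (2 * d) * (2 ^ d * arcWeight q u ^ 2) := by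
        have : 0 ≤ gaussianConst := zero_le_one.trans one_le_gaussianConst
        exact mul_le_mul_of_nonneg_left (arcSize_pow_mul_le hd u) (by positivity)
    _ = arcErrorConst d * arcWeight q u ^ 2 := by
        rw [arcErrorConst, mul_pow, ← pow_mul]
        ring

end ArcError

section TorusFourier

open MeasureTheory UnitAddTorus

/-- The measure of total mass one on the circle, as in Mathlib's multivariate Fourier series. -/
local instance : MeasureSpace UnitAddCircle := ⟨AddCircle.haarAddCircle⟩

local instance : Measure.IsAddHaarMeasure (volume : Measure UnitAddCircle) :=
  inferInstanceAs (Measure.IsAddHaarMeasure AddCircle.haarAddCircle)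

local instance : IsProbabilityMeasure (volume : Measure UnitAddCircle) :=
  inferInstanceAs (IsProbabilityMeasure AddCircle.haarAddCircle)

variable {ι : Type*} [Fintype ι]

/-- The trigonometric polynomial on the torus with frequencies in `S` and coefficients `f`. -/
def trigPoly (S : Finset (ι → ℤ)) (f : (ι → ℤ) → ℂ) (x : UnitAddTorus ι) : ℂ :=
  ∑ m ∈ S, f m * mFourier m x

lemma continuous_trigPoly (S : Finset (ι → ℤ)) (f : (ι → ℤ) → ℂ) : Continuous (trigPoly S f) := by
  unfold trigPoly
  fun_prop

lemma tsum_enorm_mFourierCoeff_sq {F : UnitAddTorus ι → ℂ} (hF : MemLp F 2) :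
    ∑' n, ‖mFourierCoeff F n‖ₑ ^ 2 = ∫⁻ x, ‖F x‖ₑ ^ 2 := by
  have parseval := hasSum_sq_mFourierCoeff hF.toLp
  have coeff_toLp (n : ι → ℤ) : mFourierCoeff hF.toLp n = mFourierCoeff F n :=
    integral_congr_ae (hF.coeFn_toLp.mono fun x hx => by simp only [hx])
  have norm_toLp : ∫ x, ‖hF.toLp F x‖ ^ 2 = ∫ x, ‖F x‖ ^ 2 :=
    integral_congr_ae (hF.coeFn_toLp.mono fun x hx => by simp only [hx])
  simp only [coeff_toLp, norm_toLp] at parseval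
  have enorm_sq (z : ℂ) : ‖z‖ₑ ^ 2 = ENNReal.ofReal (‖z‖ ^ 2) := by
    rw [ENNReal.ofReal_pow (norm_nonneg z), ofReal_norm]
  simp only [enorm_sq]
  rw [← ENNReal.ofReal_tsum_of_nonneg (fun _ => by positivity) parseval.summable,
    parseval.tsum_eq, ofReal_integral_eq_lintegral_ofReal hF.norm.integrable_sq
      (.of_forall fun _ => by positivity)]

lemma mFourierCoeff_mFourier_mul (F : UnitAddTorus ι → ℂ) (m n : ι → ℤ) :
    mFourierCoeff (fun x => mFourier m x * F x) n = mFourierCoeff F (n - m) := by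
  unfold mFourierCoeff
  congr! 2 with x
  rw [neg_sub, sub_eq_add_neg, mFourier_add, smul_eq_mul, smul_eq_mul]
  ring

lemma integrable_mFourier_mul {F : UnitAddTorus ι → ℂ} (hF : Integrable F) (m : ι → ℤ) :
    Integrable fun x => mFourier m x * F x :=
  hF.bdd_mul (mFourier m).continuous.aestronglyMeasurable
    (.of_forall fun x => ((mFourier m).norm_coe_le_norm x).trans_eq mFourier_norm)

/-- The Fourier multiplier operator on `ℤ^ι` with symbol `F`, applied to the finitely supported
function that agrees with `f` on `S`. -/
def multiplierOp (F : UnitAddTorus ι → ℂ) (S : Finset (ι → ℤ)) (f : (ι → ℤ) → ℂ)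
    (n : ι → ℤ) : ℂ :=
  ∑ m ∈ S, f m * mFourierCoeff F (n - m)

lemma mFourierCoeff_mul_trigPoly {F : UnitAddTorus ι → ℂ} (hF : Integrable F)
    (S : Finset (ι → ℤ)) (f : (ι → ℤ) → ℂ) (n : ι → ℤ) :
    mFourierCoeff (fun x => F x * trigPoly S f x) n = multiplierOp F S f n := by
  calc mFourierCoeff (fun x => F x * trigPoly S f x) n
      = ∫ x, ∑ m ∈ S, f m * (mFourier (-n) x * (mFourier m x * F x)) := by
        unfold mFourierCoeff trigPoly
        refine integral_congr_ae (.of_forall fun x => ?_)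
        simp only [smul_eq_mul, Finset.mul_sum]
        exact Finset.sum_congr rfl fun m _ => by ring
    _ = ∑ m ∈ S, f m * mFourierCoeff (fun x => mFourier m x * F x) n := by
        rw [integral_finsetSum _ fun m _ =>
          (integrable_mFourier_mul (integrable_mFourier_mul hF m) (-n)).const_mul (f m)]
        simp only [integral_const_mul, mFourierCoeff, smul_eq_mul]
    _ = _ := by simp only [mFourierCoeff_mFourier_mul, multiplierOp]

lemma tsum_enorm_multiplierOp_sq {F : UnitAddTorus ι → ℂ} (hF : MemLp F 2)
    (S : Finset (ι → ℤ)) (f : (ι → ℤ) → ℂ) :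
    ∑' n, ‖multiplierOp F S f n‖ₑ ^ 2 = ∫⁻ x, ‖F x‖ₑ ^ 2 * ‖trigPoly S f x‖ₑ ^ 2 := by
  let P : C(UnitAddTorus ι, ℂ) := ⟨_, continuous_trigPoly S f⟩
  have memLp_mul : MemLp (fun x => F x * trigPoly S f x) 2 :=
    (memLp_top_of_bound P.continuous.aestronglyMeasurable _
      (.of_forall P.norm_coe_le_norm)).mul' hF
  simp only [← mFourierCoeff_mul_trigPoly (hF.integrable one_le_two),
    tsum_enorm_mFourierCoeff_sq memLp_mul, enorm_mul, mul_pow]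

lemma mFourierCoeff_prod (F : ι → UnitAddCircle → ℂ) (n : ι → ℤ) :
    mFourierCoeff (fun x => ∏ i, F i (x i)) n = ∏ i, fourierCoeff (F i) (n i) := by
  simp only [mFourierCoeff, fourierCoeff, mFourier, ContinuousMap.coe_mk, Pi.neg_apply, smul_eq_mul,
    ← Finset.prod_mul_distrib]
  exact integral_fintype_prod_eq_prod fun i x => fourier (-n i) x * F i x

lemma mFourierCoeff_one (n : ι → ℤ) :
    mFourierCoeff (fun _ : UnitAddTorus ι => (1 : ℂ)) n = if n = 0 then 1 else 0 := by
  calc mFourierCoeff (fun _ => (1 : ℂ)) n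
      = mFourierCoeff (fun x => ∏ i : ι, (fourier 0 : UnitAddCircle → ℂ) (x i)) n := by
        simp only [fourier_zero, Finset.prod_const_one]
    _ = ∏ i, if n i = 0 then 1 else 0 := by
        rw [mFourierCoeff_prod fun _ => fourier 0]
        simp only [fourierCoeff_fourier, Pi.single_apply]
    _ = _ := by
        simp only [Finset.prod_ite_zero, Finset.mem_univ, forall_const, Finset.prod_const_one,
          funext_iff, Pi.zero_apply]

lemma lintegral_enorm_trigPoly_sq (S : Finset (ι → ℤ)) (f : (ι → ℤ) → ℂ) :
    ∫⁻ x, ‖trigPoly S f x‖ₑ ^ 2 = ∑ m ∈ S, ‖f m‖ₑ ^ 2 := by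
  have plancherel := tsum_enorm_multiplierOp_sq (memLp_const (1 : ℂ)) S f
  have coeff (n : ι → ℤ) :
      multiplierOp (fun _ => (1 : ℂ)) S f n = if n ∈ S then f n else 0 := by
    simp only [multiplierOp, mFourierCoeff_one, sub_eq_zero, mul_ite, mul_one, mul_zero,
      Finset.sum_ite_eq]
  simp only [coeff, enorm_one, one_pow, one_mul] at plancherel
  rw [← plancherel, tsum_eq_sum (s := S)
    fun n hn => by rw [if_neg hn, enorm_zero, zero_pow two_ne_zero]]
  exact Finset.sum_congr rfl fun m hm => by rw [if_pos hm]

lemma sum_tsum_enorm_multiplierOp_sq_le {α : Type*} (s : Finset α) {F : α → UnitAddTorus ι → ℂ}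
    (hF : ∀ k ∈ s, MemLp (F k) 2) {B : ℝ≥0∞} (hB : ∀ x, ∑ k ∈ s, ‖F k x‖ₑ ^ 2 ≤ B)
    (S : Finset (ι → ℤ)) (f : (ι → ℤ) → ℂ) :
    ∑ k ∈ s, ∑' n, ‖multiplierOp (F k) S f n‖ₑ ^ 2 ≤ B * ∑ m ∈ S, ‖f m‖ₑ ^ 2 := by
  have hpoly := (continuous_trigPoly S f).measurable.enorm.pow_const 2
  calc ∑ k ∈ s, ∑' n, ‖multiplierOp (F k) S f n‖ₑ ^ 2
      = ∑ k ∈ s, ∫⁻ x, ‖F k x‖ₑ ^ 2 * ‖trigPoly S f x‖ₑ ^ 2 :=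
        Finset.sum_congr rfl fun k hk => tsum_enorm_multiplierOp_sq (hF k hk) S f
    _ = ∫⁻ x, (∑ k ∈ s, ‖F k x‖ₑ ^ 2) * ‖trigPoly S f x‖ₑ ^ 2 := by
        simp only [Finset.sum_mul]
        exact (lintegral_finsetSum' s fun k hk =>
          ((hF k hk).aestronglyMeasurable.enorm.pow_const 2).mul hpoly.aemeasurable).symm
    _ ≤ ∫⁻ x, B * ‖trigPoly S f x‖ₑ ^ 2 := by
        gcongr with x
        exact hB x
    _ = B * ∑ m ∈ S, ‖f m‖ₑ ^ 2 := by
        rw [lintegral_const_mul _ hpoly, lintegral_enorm_trigPoly_sq]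

lemma multiplierOp_sub {F G : UnitAddTorus ι → ℂ} (hF : Integrable F) (hG : Integrable G)
    (S : Finset (ι → ℤ)) (f : (ι → ℤ) → ℂ) (n : ι → ℤ) :
    multiplierOp (fun x => F x - G x) S f n = multiplierOp F S f n - multiplierOp G S f n := by
  have hcoeff (m : ι → ℤ) :
      mFourierCoeff (fun x => F x - G x) m = mFourierCoeff F m - mFourierCoeff G m := by
    simp only [mFourierCoeff, smul_eq_mul, mul_sub]
    exact integral_sub (integrable_mFourier_mul hF _) (integrable_mFourier_mul hG _)
  simp only [multiplierOp, hcoeff, mul_sub, Finset.sum_sub_distrib]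

lemma multiplierOp_mul_sum_mFourier {α : Type*} (J : Finset α) (ψ : α → ι → ℤ) (c : ℂ)
    {F : UnitAddTorus ι → ℂ} (hF : Integrable F) (S : Finset (ι → ℤ)) (f : (ι → ℤ) → ℂ)
    (n : ι → ℤ) :
    multiplierOp (fun x => F x * (c * ∑ j ∈ J, mFourier (ψ j) x)) S f n =
      c * ∑ j ∈ J, multiplierOp F S f (n - ψ j) := by
  have hcoeff (m : ι → ℤ) : mFourierCoeff (fun x => F x * (c * ∑ j ∈ J, mFourier (ψ j) x)) m =
      c * ∑ j ∈ J, mFourierCoeff F (m - ψ j) := by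
    calc mFourierCoeff (fun x => F x * (c * ∑ j ∈ J, mFourier (ψ j) x)) m
        = ∫ x, c * ∑ j ∈ J, mFourier (-m) x * (mFourier (ψ j) x * F x) := by
          refine integral_congr_ae (.of_forall fun x => ?_)
          simp only [smul_eq_mul, Finset.mul_sum]
          exact Finset.sum_congr rfl fun j _ => by ring
      _ = c * ∑ j ∈ J, mFourierCoeff (fun x => mFourier (ψ j) x * F x) m := by
          rw [integral_const_mul, integral_finsetSum _ fun j _ =>
            integrable_mFourier_mul (integrable_mFourier_mul hF (ψ j)) (-m)]
          simp only [mFourierCoeff, smul_eq_mul]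
      _ = _ := by simp only [mFourierCoeff_mFourier_mul]
  simp only [multiplierOp, hcoeff]
  simp only [Finset.mul_sum, sub_right_comm n]
  rw [Finset.sum_comm]
  exact Finset.sum_congr rfl fun j _ => Finset.sum_congr rfl fun m _ => by ring

lemma fourierCoeff_tsum_mul_fourier {κ : ℤ → ℂ} (hκ : Summable fun m => ‖κ m‖) (n : ℤ) :
    fourierCoeff (fun x : UnitAddCircle => ∑' m, κ m * fourier m x) n = κ n := by
  have hint (m : ℤ) : Integrable (fun x : UnitAddCircle => fourier (-n) x • (κ m * fourier m x))
      AddCircle.haarAddCircle :=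
    (by fun_prop : Continuous _).integrable_of_hasCompactSupport (.of_compactSpace _)
  have hnorm (m : ℤ) : ∫ x : UnitAddCircle, ‖fourier (-n) x • (κ m * fourier m x)‖
      ∂AddCircle.haarAddCircle = ‖κ m‖ := by
    simp only [norm_smul, norm_mul, norm_fourier_apply, one_mul, mul_one, integral_const,
      probReal_univ, one_smul]
  have hsum := hasSum_integral_of_summable_integral_norm hint (by simpa only [hnorm] using hκ)
  have hterm (m : ℤ) : ∫ x : UnitAddCircle, fourier (-n) x • (κ m * fourier m x)
      ∂AddCircle.haarAddCircle = if m = n then κ n else 0 := by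
    have horth := congrFun (fourierCoeff_fourier (T := 1) m) n
    simp only [fourierCoeff, Pi.single_apply] at horth
    simp only [smul_eq_mul, mul_left_comm _ (κ m), integral_const_mul] at horth ⊢
    rw [horth]
    rcases eq_or_ne n m with rfl | hne
    · simp
    · simp [hne, hne.symm]
  simp only [hterm] at hsum
  calc fourierCoeff (fun x : UnitAddCircle => ∑' m, κ m * fourier m x) n
      = ∫ x : UnitAddCircle, ∑' m, fourier (-n) x • (κ m * fourier m x)
          ∂AddCircle.haarAddCircle := by
        simp only [fourierCoeff, smul_eq_mul, tsum_mul_left]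
    _ = κ n := hsum.unique (hasSum_ite_eq n (κ n))

lemma continuous_tsum_mul_fourier {κ : ℤ → ℂ} (hκ : Summable fun m => ‖κ m‖) :
    Continuous fun x : UnitAddCircle => ∑' m, κ m * fourier m x :=
  continuous_tsum (fun m => by fun_prop) hκ fun m x => by
    rw [norm_mul, norm_fourier_apply, mul_one]

variable {d q : ℕ}

lemma measurable_nearestValue (γ : ZMod q → ℂ) : Measurable (nearestValue γ) := by
  have hrep : Measurable circleRep :=
    measurable_subtype_coe.comp (AddCircle.measurableEquivIoc 1 0).measurable
  have hround : Measurable (round : ℝ → ℤ) := by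
    simp only [funext round_eq]
    exact Int.measurable_floor.comp (measurable_id.add_const _)
  exact (measurable_from_top (f := fun l : ℤ => γ l)).comp (hround.comp (hrep.const_mul _))

lemma continuous_dirichletMean (N : ℕ) : Continuous (dirichletMean N) := by
  unfold dirichletMean
  fun_prop

lemma prod_dirichletMean (N : ℕ) (x : UnitAddTorus (Fin d)) :
    ∏ i, dirichletMean N (q • x i) = ((N : ℂ)⁻¹) ^ d *
      ∑ j ∈ Fintype.piFinset fun _ : Fin d => Finset.range N,
        mFourier (fun i => (q : ℤ) * j i) x := by
  have hdilate (j : ℕ) (y : UnitAddCircle) :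
      fourier (j : ℤ) (q • y) = fourier ((q : ℤ) * j) y := by
    rw [fourier_apply, fourier_apply, mul_comm, mul_smul, natCast_zsmul _ q]
  simp only [dirichletMean, hdilate, Finset.prod_mul_distrib, Finset.prod_univ_sum,
    Finset.prod_const, Finset.card_univ, Fintype.card_fin, mFourier, ContinuousMap.coe_mk]

variable [NeZero q]

lemma mFourierCoeff_prod_arcSymbol (a : ZMod q) (k : ℕ) (u : ℝ) (n : Fin d → ℤ) :
    mFourierCoeff (fun x => ∏ i, arcSymbol a k u (x i)) n = ∏ i, arcKernel a k u (n i) := by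
  rw [mFourierCoeff_prod fun _ => arcSymbol a k u]
  exact Finset.prod_congr rfl fun i _ =>
    fourierCoeff_tsum_mul_fourier (summable_norm_arcKernel a k u) _

lemma norm_prod_le_pow {F : UnitAddCircle → ℂ} {A : ℝ} (hF : ∀ x, ‖F x‖ ≤ A)
    (x : UnitAddTorus (Fin d)) : ‖∏ i, F (x i)‖ ≤ A ^ d := by
  rw [norm_prod]
  exact (Finset.prod_le_prod (fun _ _ => norm_nonneg _) fun i _ => hF (x i)).trans_eq
    (by rw [Finset.prod_const, Finset.card_univ, Fintype.card_fin])

lemma memLp_prod {F : UnitAddCircle → ℂ} (hF : Measurable F) {A : ℝ} (hA : ∀ x, ‖F x‖ ≤ A) :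
    MemLp (fun x : UnitAddTorus (Fin d) => ∏ i, F (x i)) 2 :=
  .of_bound (Finset.measurable_fun_prod _ fun i _ =>
    hF.comp (measurable_pi_apply i)).aestronglyMeasurable _ (.of_forall (norm_prod_le_pow hA))

lemma memLp_prod_arcSymbol (a : ZMod q) (k : ℕ) (u : ℝ) :
    MemLp (fun x : UnitAddTorus (Fin d) => ∏ i, arcSymbol a k u (x i)) 2 := by
  let F : C(UnitAddCircle, ℂ) := ⟨_, continuous_tsum_mul_fourier (summable_norm_arcKernel a k u)⟩
  exact memLp_prod F.continuous.measurable F.norm_coe_le_norm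

lemma memLp_prod_mainSymbol {a : ZMod q} (ha : IsUnit a) (k : ℕ) (u : ℝ) :
    MemLp (fun x : UnitAddTorus (Fin d) => ∏ i, mainSymbol a k u (x i)) 2 :=
  memLp_prod ((measurable_nearestValue _).mul
    ((continuous_dirichletMean _).comp (continuous_const_smul q)).measurable)
    (norm_mainSymbol_le ha k u)

/-- The part of the main term that does not depend on the scale. -/
def nearestPart (a : ZMod q) (u : ℝ) (S : Finset (Fin d → ℤ)) (f : (Fin d → ℤ) → ℂ) :
    (Fin d → ℤ) → ℂ :=
  multiplierOp (fun x => ∏ i, nearestValue (arcMultiplier a u) (x i)) S f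

lemma memLp_prod_nearestValue {a : ZMod q} (ha : IsUnit a) (u : ℝ) :
    MemLp (fun x : UnitAddTorus (Fin d) => ∏ i, nearestValue (arcMultiplier a u) (x i)) 2 :=
  memLp_prod (measurable_nearestValue _) fun _ => norm_arcMultiplier_le ha u _

lemma tsum_enorm_nearestPart_sq_le {a : ZMod q} (ha : IsUnit a) (u : ℝ)
    (S : Finset (Fin d → ℤ)) (f : (Fin d → ℤ) → ℂ) :
    ∑' n, ‖nearestPart a u S f n‖ₑ ^ 2 ≤
      ENNReal.ofReal (arcSize q u ^ (2 * d)) * ∑ m ∈ S, ‖f m‖ₑ ^ 2 := by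
  have hbound (x : UnitAddTorus (Fin d)) :
      ‖∏ i, nearestValue (arcMultiplier a u) (x i)‖ₑ ^ 2 ≤
        ENNReal.ofReal (arcSize q u ^ (2 * d)) := by
    rw [← ofReal_norm, ← ENNReal.ofReal_pow (norm_nonneg _), mul_comm 2 d, pow_mul]
    exact ENNReal.ofReal_le_ofReal (pow_le_pow_left₀ (norm_nonneg _)
      (norm_prod_le_pow (F := nearestValue (arcMultiplier a u))
        (fun _ => norm_arcMultiplier_le ha u _) x) 2)
  have h := sum_tsum_enorm_multiplierOp_sq_le (Finset.univ : Finset Unit)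
    (fun _ _ => memLp_prod_nearestValue ha u)
    (fun x => (Finset.sum_singleton _ _).trans_le (hbound x)) S f
  rwa [Finset.univ_unique, Finset.sum_singleton] at h

lemma multiplierOp_prod_mainSymbol {a : ZMod q} (ha : IsUnit a) (k : ℕ) (u : ℝ)
    (S : Finset (Fin d → ℤ)) (f : (Fin d → ℤ) → ℂ) (n : Fin d → ℤ) :
    multiplierOp (fun x => ∏ i, mainSymbol a k u (x i)) S f n =
      ((arcScale q k : ℂ)⁻¹) ^ d * ∑ j ∈ Fintype.piFinset fun _ => Finset.range (arcScale q k),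
        nearestPart a u S f (n - fun i => (q : ℤ) * j i) := by
  simp only [mainSymbol, Finset.prod_mul_distrib, prod_dirichletMean]
  exact multiplierOp_mul_sum_mFourier _ _ _ ((memLp_prod_nearestValue ha u).integrable one_le_two)
    S f n

lemma enorm_multiplierOp_prod_mainSymbol_le {a : ZMod q} (ha : IsUnit a) (k : ℕ) (u : ℝ)
    (S : Finset (Fin d → ℤ)) (f : (Fin d → ℤ) → ℂ) (n : Fin d → ℤ) :
    ‖multiplierOp (fun x => ∏ i, mainSymbol a k u (x i)) S f n‖ₑ ≤
      boxAverage (zsmulAddGroupHom (-q)) (k - Nat.log 2 q) (‖nearestPart a u S f ·‖ₑ) n := by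
  let castPi : (Fin d → ℕ) ↪ (Fin d → ℤ) :=
    ⟨fun j i => j i, fun j l h => funext fun i => Nat.cast_injective (congrFun h i)⟩
  have hscale : ‖((arcScale q k : ℂ)⁻¹) ^ d‖ₑ = (2 ^ ((k - Nat.log 2 q) * d))⁻¹ := by
    rw [enorm_pow, arcScale, Nat.cast_pow, enorm_inv (by simp), enorm_pow, Nat.cast_ofNat,
      ← ofReal_norm, RCLike.norm_ofNat, ENNReal.ofReal_ofNat, ← ENNReal.inv_pow, ← pow_mul]
  rw [multiplierOp_prod_mainSymbol ha, enorm_mul, hscale]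
  calc (2 ^ ((k - Nat.log 2 q) * d))⁻¹ *
        ‖∑ j ∈ Fintype.piFinset fun _ => Finset.range (arcScale q k),
          nearestPart a u S f (n - fun i => (q : ℤ) * j i)‖ₑ
      ≤ (2 ^ ((k - Nat.log 2 q) * d))⁻¹ *
        ∑ j ∈ Fintype.piFinset fun _ => Finset.range (arcScale q k),
          ‖nearestPart a u S f (n - fun i => (q : ℤ) * j i)‖ₑ := by
        gcongr
        exact enorm_sum_le _ _
    _ = ∑ j ∈ (Fintype.piFinset fun _ => Finset.range (arcScale q k)).map castPi,
          boxWeight (k - Nat.log 2 q) j *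
            ‖nearestPart a u S f (n + zsmulAddGroupHom (-q) j)‖ₑ := by
        rw [Finset.sum_map, Finset.mul_sum]
        refine Finset.sum_congr rfl fun j hj => ?_
        have hbox : castPi j ∈ dyadicBox d (k - Nat.log 2 q) := by
          refine mem_dyadicBox.2 fun i => ?_
          have hi := Finset.mem_range.1 (Fintype.mem_piFinset.1 hj i)
          change |(j i : ℤ)| < 2 ^ (k - Nat.log 2 q)
          rw [Nat.abs_cast]
          exact_mod_cast hi
        rw [boxWeight, if_pos hbox]
        congr! 3
        ext i
        change n i - q * j i = n i + -(q : ℤ) • (j i : ℤ)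
        rw [smul_eq_mul, neg_mul, sub_eq_add_neg]
    _ ≤ boxAverage (zsmulAddGroupHom (-q)) (k - Nat.log 2 q) (‖nearestPart a u S f ·‖ₑ) n :=
        ENNReal.sum_le_tsum _

lemma tsum_iSup_enorm_multiplierOp_prod_mainSymbol_sq_le {a : ZMod q} (ha : IsUnit a) (u : ℝ)
    (S : Finset (Fin d → ℤ)) (f : (Fin d → ℤ) → ℂ) :
    ∑' n, ⨆ k, ‖multiplierOp (fun x => ∏ i, mainSymbol a k u (x i)) S f n‖ₑ ^ 2 ≤
      100 * 64 ^ d * (ENNReal.ofReal (arcSize q u ^ (2 * d)) * ∑ m ∈ S, ‖f m‖ₑ ^ 2) := by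
  calc ∑' n, ⨆ k, ‖multiplierOp (fun x => ∏ i, mainSymbol a k u (x i)) S f n‖ₑ ^ 2
      ≤ ∑' n, (⨆ k, boxAverage (zsmulAddGroupHom (-q)) k (‖nearestPart a u S f ·‖ₑ) n) ^ 2 := by
        gcongr with n
        refine iSup_le fun k => ?_
        gcongr
        exact (enorm_multiplierOp_prod_mainSymbol_le ha k u S f n).trans
          (le_iSup (fun k => boxAverage (zsmulAddGroupHom (-q)) k (‖nearestPart a u S f ·‖ₑ) n) _)
    _ ≤ 100 * 64 ^ d * ∑' n, ‖nearestPart a u S f n‖ₑ ^ 2 := tsum_iSup_boxAverage_sq_le _ _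
    _ ≤ _ := by
        gcongr
        exact tsum_enorm_nearestPart_sq_le ha u S f

lemma multiplierOp_prod_arcSymbol (a : ZMod q) (k : ℕ) (u : ℝ) (S : Finset (Fin d → ℤ))
    (f : (Fin d → ℤ) → ℂ) (n : Fin d → ℤ) :
    multiplierOp (fun x => ∏ i, arcSymbol a k u (x i)) S f n =
      ∑ m ∈ S, f m * ∏ i, arcKernel a k u (n i - m i) := by
  simp only [multiplierOp, mFourierCoeff_prod_arcSymbol, Pi.sub_apply]

lemma tsum_tsum_enorm_multiplierOp_arcError_sq_le (hd : 5 ≤ d) {a : ZMod q} (ha : IsUnit a)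
    (u : ℝ) (S : Finset (Fin d → ℤ)) (f : (Fin d → ℤ) → ℂ) :
    ∑' n, ∑' k, (if ArcAdmissible q k u then ‖multiplierOp (fun x => ∏ i, arcSymbol a k u (x i) -
        ∏ i, mainSymbol a k u (x i)) S f n‖ₑ ^ 2 else 0) ≤
      ENNReal.ofReal (arcErrorConst d * arcWeight q u ^ 2) * ∑ m ∈ S, ‖f m‖ₑ ^ 2 := by
  rw [ENNReal.tsum_comm]
  refine ENNReal.tsum_le_of_sum_range_le fun K => ?_
  calc ∑ k ∈ Finset.range K, ∑' n, (if ArcAdmissible q k u then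
        ‖multiplierOp (fun x => ∏ i, arcSymbol a k u (x i) -
          ∏ i, mainSymbol a k u (x i)) S f n‖ₑ ^ 2 else 0)
      = ∑ k ∈ Finset.range K with ArcAdmissible q k u, ∑' n,
          ‖multiplierOp (fun x => ∏ i, arcSymbol a k u (x i) -
            ∏ i, mainSymbol a k u (x i)) S f n‖ₑ ^ 2 := by
        rw [Finset.sum_filter]
        refine Finset.sum_congr rfl fun k _ => ?_
        split_ifs
        · rfl
        · exact tsum_zero
    _ ≤ _ := sum_tsum_enorm_multiplierOp_sq_le _
        (fun k _ => (memLp_prod_arcSymbol a k u).sub (memLp_prod_mainSymbol ha k u))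
        (fun x => ?_) S f
  simp only [← ofReal_norm, ← ENNReal.ofReal_pow (norm_nonneg _)]
  rw [← ENNReal.ofReal_sum_of_nonneg fun _ _ => by positivity]
  exact ENNReal.ofReal_le_ofReal (sum_norm_prod_arcSymbol_sub_sq_le hd ha u x K)

/-- The contribution at scale `k` to the circle method of the point at rescaled distance `u` from
the fraction `a / q`, set to zero when that point lies outside the arc of the fraction. -/
def arcPart (a : ZMod q) (k : ℕ) (u : ℝ) (S : Finset (Fin d → ℤ)) (f : (Fin d → ℤ) → ℂ)
    (n : Fin d → ℤ) : ℂ :=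
  if ArcAdmissible q k u then ∑ m ∈ S, f m * ∏ i, arcKernel a k u (n i - m i) else 0

/-- The constant in the maximal inequality for a single arc. -/
def arcMaximalConst (d : ℕ) : ℝ≥0∞ := 200 * 128 ^ d + 2 * ENNReal.ofReal (arcErrorConst d)

lemma arcMaximalConst_ne_top (d : ℕ) : arcMaximalConst d ≠ ∞ := by
  unfold arcMaximalConst
  finiteness

lemma enorm_arcPart_sq_le {a : ZMod q} (ha : IsUnit a) (k : ℕ) (u : ℝ) (S : Finset (Fin d → ℤ))
    (f : (Fin d → ℤ) → ℂ) (n : Fin d → ℤ) :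
    ‖arcPart a k u S f n‖ₑ ^ 2 ≤
      2 * ‖multiplierOp (fun x => ∏ i, mainSymbol a k u (x i)) S f n‖ₑ ^ 2 +
      2 * (if ArcAdmissible q k u then ‖multiplierOp (fun x => ∏ i, arcSymbol a k u (x i) -
        ∏ i, mainSymbol a k u (x i)) S f n‖ₑ ^ 2 else 0) := by
  unfold arcPart
  split_ifs
  · rw [← multiplierOp_prod_arcSymbol,
      multiplierOp_sub ((memLp_prod_arcSymbol a k u).integrable one_le_two)
        ((memLp_prod_mainSymbol ha k u).integrable one_le_two)]
    refine le_trans ?_ (ennreal_add_sq_le _ _)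
    gcongr
    exact (congrArg _ (add_sub_cancel _ _).symm).trans_le (enorm_add_le _ _)
  · rw [enorm_zero, zero_pow two_ne_zero]
    exact zero_le

lemma tsum_iSup_enorm_arcPart_sq_le (hd : 5 ≤ d) {a : ZMod q} (ha : IsUnit a) (u : ℝ)
    (S : Finset (Fin d → ℤ)) (f : (Fin d → ℤ) → ℂ) :
    ∑' n, ⨆ k, ‖arcPart a k u S f n‖ₑ ^ 2 ≤
      arcMaximalConst d * ENNReal.ofReal (arcWeight q u) ^ 2 * ∑ m ∈ S, ‖f m‖ₑ ^ 2 := by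
  have hweight : 0 ≤ arcWeight q u := by unfold arcWeight; positivity
  have hsize : ENNReal.ofReal (arcSize q u ^ (2 * d)) ≤
      2 ^ d * ENNReal.ofReal (arcWeight q u) ^ 2 := by
    calc ENNReal.ofReal (arcSize q u ^ (2 * d))
        ≤ ENNReal.ofReal (2 ^ d * arcWeight q u ^ 2) := by
          refine ENNReal.ofReal_le_ofReal (le_trans ?_ (arcSize_pow_mul_le hd u))
          exact le_mul_of_one_le_right (pow_nonneg (arcSize_nonneg q u) _)
            (le_add_of_nonneg_right (sq_nonneg u))
      _ = 2 ^ d * ENNReal.ofReal (arcWeight q u) ^ 2 := by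
          rw [ENNReal.ofReal_mul (by positivity), ENNReal.ofReal_pow hweight,
            ENNReal.ofReal_pow zero_le_two, ENNReal.ofReal_ofNat]
  calc ∑' n, ⨆ k, ‖arcPart a k u S f n‖ₑ ^ 2
      ≤ ∑' n, (2 * (⨆ k, ‖multiplierOp (fun x => ∏ i, mainSymbol a k u (x i)) S f n‖ₑ ^ 2) +
          2 * ∑' k, if ArcAdmissible q k u then ‖multiplierOp (fun x =>
            ∏ i, arcSymbol a k u (x i) - ∏ i, mainSymbol a k u (x i)) S f n‖ₑ ^ 2 else 0) := by
        gcongr with n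
        refine iSup_le fun k => (enorm_arcPart_sq_le ha k u S f n).trans ?_
        gcongr
        · exact le_iSup (fun k =>
            ‖multiplierOp (fun x => ∏ i, mainSymbol a k u (x i)) S f n‖ₑ ^ 2) k
        · exact ENNReal.le_tsum k
    _ ≤ 2 * (100 * 64 ^ d * (2 ^ d * ENNReal.ofReal (arcWeight q u) ^ 2 * ∑ m ∈ S, ‖f m‖ₑ ^ 2)) +
          2 * (ENNReal.ofReal (arcErrorConst d * arcWeight q u ^ 2) * ∑ m ∈ S, ‖f m‖ₑ ^ 2) := by
        rw [ENNReal.tsum_add, ENNReal.tsum_mul_left, ENNReal.tsum_mul_left]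
        gcongr
        · refine (tsum_iSup_enorm_multiplierOp_prod_mainSymbol_sq_le ha u S f).trans ?_
          gcongr
        · exact tsum_tsum_enorm_multiplierOp_arcError_sq_le hd ha u S f
    _ = _ := by
        rw [arcMaximalConst, ENNReal.ofReal_mul' (by positivity), ENNReal.ofReal_pow hweight,
          show (128 : ℝ≥0∞) = 64 * 2 by norm_num, mul_pow]
        ring

end TorusFourier

section WeightedMaximalInequality

open MeasureTheory

lemma tsum_iSup_lintegral_sq_le {α β κ : Type*} [MeasurableSpace α] {μ : Measure α} [Countable β]
    [Countable κ] {w : α → ℝ≥0∞} (hw : AEMeasurable w μ) (hw₀ : ∀ a, w a ≠ 0)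
    (hw_top : ∀ a, w a ≠ ∞) {P : κ → β → α → ℝ≥0∞} (hP : ∀ k n, AEMeasurable (P k n) μ)
    {C : ℝ≥0∞} (h : ∀ a, ∑' n, ⨆ k, P k n a ^ 2 ≤ C * w a ^ 2) :
    ∑' n, ⨆ k, (∫⁻ a, P k n a ∂μ) ^ 2 ≤ C * (∫⁻ a, w a ∂μ) ^ 2 := by
  let v (a : α) : ℝ≥0∞ := w a ^ ((1 : ℝ) / 2)
  have hv : AEMeasurable v μ := hw.pow_const _
  have v_sq (a : α) : v a ^ 2 = w a := ennreal_rpow_half_sq _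
  have cancel (a : α) (x : ℝ≥0∞) : v a * ((v a)⁻¹ * x) = x := by
    have hva : v a ≠ 0 := fun hva => hw₀ a (by rw [← v_sq, hva, zero_pow two_ne_zero])
    have hva' : v a ≠ ∞ := ENNReal.rpow_ne_top_of_nonneg (by norm_num) (hw_top a)
    rw [← mul_assoc, ENNReal.mul_inv_cancel hva hva', one_mul]
  have hsup (n : β) : AEMeasurable (fun a => (w a)⁻¹ * ⨆ k, P k n a ^ 2) μ :=
    hw.inv.mul (.iSup fun k => (hP k n).pow_const 2)
  have weighted (k : κ) (n : β) : (∫⁻ a, P k n a ∂μ) ^ 2 ≤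
      (∫⁻ a, w a ∂μ) * ∫⁻ a, (w a)⁻¹ * ⨆ k, P k n a ^ 2 ∂μ := by
    calc (∫⁻ a, P k n a ∂μ) ^ 2 = (∫⁻ a, v a * ((v a)⁻¹ * P k n a) ∂μ) ^ 2 := by
          simp only [cancel]
      _ ≤ (∫⁻ a, v a ^ 2 ∂μ) * ∫⁻ a, ((v a)⁻¹ * P k n a) ^ 2 ∂μ :=
          sq_lintegral_mul_le μ hv (hv.inv.mul (hP k n))
      _ ≤ _ := by
          simp only [mul_pow, ← ENNReal.inv_pow, v_sq]
          gcongr with a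
          exact le_iSup (fun k => P k n a ^ 2) k
  calc ∑' n, ⨆ k, (∫⁻ a, P k n a ∂μ) ^ 2
      ≤ ∑' n, (∫⁻ a, w a ∂μ) * ∫⁻ a, (w a)⁻¹ * ⨆ k, P k n a ^ 2 ∂μ := by
        gcongr with n
        exact iSup_le fun k => weighted k n
    _ = (∫⁻ a, w a ∂μ) * ∫⁻ a, (w a)⁻¹ * ∑' n, ⨆ k, P k n a ^ 2 ∂μ := by
        rw [ENNReal.tsum_mul_left, ← lintegral_tsum hsup]
        simp only [ENNReal.tsum_mul_left]
    _ ≤ (∫⁻ a, w a ∂μ) * ∫⁻ a, C * w a ∂μ := by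
        refine mul_le_mul' le_rfl (lintegral_mono fun a => ?_)
        calc (w a)⁻¹ * ∑' n, ⨆ k, P k n a ^ 2 ≤ (w a)⁻¹ * (C * w a ^ 2) := by gcongr; exact h a
          _ = C * w a * ((w a)⁻¹ * w a) := by ring
          _ = C * w a := by rw [ENNReal.inv_mul_cancel (hw₀ a) (hw_top a), mul_one]
    _ = C * (∫⁻ a, w a ∂μ) ^ 2 := by
        rw [lintegral_const_mul'' _ hw]
        ring

lemma lintegral_eq_ofReal_mul_lintegral_add_mul {g : ℝ → ℝ≥0∞} (hg : Measurable g) (b : ℝ) {c : ℝ}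
    (hc : 0 < c) : ∫⁻ t, g t = ENNReal.ofReal c * ∫⁻ u, g (b + c * u) := by
  calc ∫⁻ t, g t = ∫⁻ t, g (b + t) := (lintegral_add_left_eq_self g b).symm
    _ = ∫⁻ t, g (b + t) ∂(ENNReal.ofReal |c| • volume.map (c * ·)) := by
        rw [Real.smul_map_volume_mul_left hc.ne']
    _ = ENNReal.ofReal c * ∫⁻ u, g (b + c * u) := by
        rw [lintegral_smul_measure, lintegral_map (by fun_prop) (by fun_prop), abs_of_pos hc,
          smul_eq_mul]

end WeightedMaximalInequality

section MajorArcs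

open MeasureTheory

lemma exists_rat_mem_Icc_abs_sub_le {L : ℕ} (hL : 0 < L) {t : ℝ} (ht : t ∈ Set.Icc 0 1) :
    ∃ r : Set.Icc (0 : ℚ) 1, r.1.den ≤ L ∧ |t - r.1| ≤ 1 / (r.1.den * L) := by
  obtain ⟨r, hr, hden⟩ := Real.exists_rat_abs_sub_le_and_den_le t hL
  have den_pos : (0 : ℝ) < r.den := mod_cast r.den_pos
  have hnum : (r : ℝ) * r.den = r.num := mod_cast Rat.mul_den_eq_num r
  have hclose : |t * r.den - r.num| < 1 := by
    calc |t * r.den - r.num| = |t - r| * r.den := by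
          rw [← hnum, ← sub_mul, abs_mul, abs_of_pos den_pos]
      _ ≤ 1 / ((L + 1) * r.den) * r.den := by gcongr
      _ = 1 / (L + 1) := by field_simp
      _ < 1 := (div_lt_one (by positivity)).2 (lt_add_of_pos_left _ (mod_cast hL))
  obtain ⟨hlower, hupper⟩ := abs_lt.1 hclose
  have num_nonneg : 0 ≤ r.num := by
    have : (-1 : ℝ) < r.num := by nlinarith [ht.1]
    exact Int.lt_iff_add_one_le.1 (mod_cast this)
  have num_le_den : r.num ≤ r.den := by
    have : (r.num : ℝ) < r.den + 1 := by nlinarith [ht.2]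
    exact Int.lt_add_one_iff.1 (mod_cast this)
  refine ⟨⟨r, Rat.num_nonneg.1 num_nonneg, ?_⟩, hden, hr.trans ?_⟩
  · rw [← Rat.num_div_den r]
    exact div_le_one_of_le₀ (mod_cast num_le_den) (by positivity)
  · rw [mul_comm (r.den : ℝ)]
    gcongr
    exact le_add_of_nonneg_right zero_le_one

lemma setLIntegral_Icc_le_tsum_arcs (k : ℕ) {g : ℝ → ℝ≥0∞} (hg : Measurable g) :
    ∫⁻ t in Set.Icc 0 1, g t ≤ ENNReal.ofReal (1 / (2 * 4 ^ k)) *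
      ∑' r : Set.Icc (0 : ℚ) 1, ∫⁻ u, if ArcAdmissible r.1.den k u then
        g (r.1 + 1 / (2 * 4 ^ k) * u) else 0 := by
  let arc (r : Set.Icc (0 : ℚ) 1) : Set ℝ :=
    {t | r.1.den ≤ 2 ^ k ∧ |t - r.1| ≤ 1 / (r.1.den * 2 ^ k)}
  have hcover : Set.Icc (0 : ℝ) 1 ⊆ ⋃ r, arc r := fun t ht => by
    obtain ⟨r, hden, hr⟩ := exists_rat_mem_Icc_abs_sub_le (L := 2 ^ k) (by positivity) ht
    exact Set.mem_iUnion.2 ⟨r, hden, mod_cast hr⟩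
  have harc (r : Set.Icc (0 : ℚ) 1) : MeasurableSet (arc r) :=
    (MeasurableSet.const _).inter <| measurableSet_le
      (by fun_prop : Continuous fun t : ℝ => |t - r.1|).measurable measurable_const
  have mem_arc (r : Set.Icc (0 : ℚ) 1) (u : ℝ) :
      (r.1 + 1 / (2 * 4 ^ k) * u : ℝ) ∈ arc r ↔ ArcAdmissible r.1.den k u := by
    have : (0 : ℝ) < r.1.den := mod_cast r.1.den_pos
    refine and_congr_right fun _ => ?_
    rw [add_sub_cancel_left, abs_mul, abs_of_pos (by positivity : (0 : ℝ) < 1 / (2 * 4 ^ k)),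
      show (4 : ℝ) ^ k = 2 ^ k * 2 ^ k by rw [← mul_pow]; norm_num, one_div_mul_eq_div,
      div_le_iff₀ (by positivity)]
    congr! 1
    field_simp
  calc ∫⁻ t in Set.Icc 0 1, g t ≤ ∑' r, ∫⁻ t in arc r, g t :=
        (lintegral_mono_set hcover).trans (lintegral_iUnion_le _ _)
    _ = ∑' r : Set.Icc (0 : ℚ) 1, ENNReal.ofReal (1 / (2 * 4 ^ k)) *
          ∫⁻ u, (arc r).indicator g (r.1 + 1 / (2 * 4 ^ k) * u) := by
        congr! 2 with r
        rw [← lintegral_indicator (harc r)]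
        exact lintegral_eq_ofReal_mul_lintegral_add_mul (hg.indicator (harc r)) _ (by positivity)
    _ = _ := by
        simp only [ENNReal.tsum_mul_left, Set.indicator_apply, mem_arc]

open scoped Real

local instance (r : ℚ) : NeZero r.den := ⟨r.den_nz⟩

/-- The character `t ↦ e(N t)` of the circle, damped by a Gaussian at scale `2 ^ k` when `N` is the
squared length of a lattice point. -/
def dampedCharacter (k : ℕ) (N : ℤ) (t : UnitAddCircle) : ℂ :=
  rexp (-π * N / 4 ^ k) * fourier N t

lemma dampedCharacter_sum {ι : Type*} (s : Finset ι) (k : ℕ) (N : ι → ℤ) (t : UnitAddCircle) :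
    dampedCharacter k (∑ i ∈ s, N i) t = ∏ i ∈ s, dampedCharacter k (N i) t := by
  classical
  induction s using Finset.induction_on with
  | empty => simp [dampedCharacter]
  | insert i s hi ih =>
    rw [Finset.sum_insert hi, Finset.prod_insert hi, ← ih]
    simp only [dampedCharacter, fourier_add, Int.cast_add, mul_add, add_div, Real.exp_add,
      Complex.ofReal_mul]
    ring

lemma dampedCharacter_coe_add (k : ℕ) (r : ℚ) (u : ℝ) (m : ℤ) :
    dampedCharacter k (m ^ 2) ((r + 1 / (2 * 4 ^ k) * u : ℝ) : UnitAddCircle) =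
      2 ^ k * arcKernel (r.num : ZMod r.den) k u m := by
  have hr : (r.num : ℂ) = r * r.den := mod_cast (Rat.mul_den_eq_num r).symm
  have den_ne : (r.den : ℂ) ≠ 0 := mod_cast r.den_nz
  rw [dampedCharacter, fourier_coe_apply, arcKernel, mul_inv_cancel_left₀ (by simp),
    show (r.num : ZMod r.den) * (m : ZMod r.den) ^ 2 = ((r.num * m ^ 2 : ℤ) : ZMod r.den) by
      push_cast; rfl, ZMod.stdAddChar_coe, Complex.ofReal_exp, ← Complex.exp_add,
    ← Complex.exp_add, arcParam]
  congr 1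
  push_cast
  rw [hr]
  field_simp
  ring

variable {d : ℕ}

/-- The exponential sum of `f` over `S` with quadratic phase and Gaussian damping about `n`. Its
`N`-th Fourier coefficient in `t` is, up to a Gaussian factor, the sum of `f` over the lattice
points of `S` at distance `√N` from `n`. -/
def dampedExpSum (k : ℕ) (S : Finset (Fin d → ℤ)) (f : (Fin d → ℤ) → ℂ) (n : Fin d → ℤ)
    (t : UnitAddCircle) : ℂ :=
  ∑ m ∈ S, f m * dampedCharacter k (∑ i, (n i - m i) ^ 2) t

lemma continuous_dampedExpSum (k : ℕ) (S : Finset (Fin d → ℤ)) (f : (Fin d → ℤ) → ℂ)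
    (n : Fin d → ℤ) : Continuous (dampedExpSum k S f n) := by
  unfold dampedExpSum dampedCharacter
  fun_prop

lemma fourierCoeff_dampedExpSum (k N : ℕ) (S : Finset (Fin d → ℤ)) (f : (Fin d → ℤ) → ℂ)
    (n : Fin d → ℤ) : fourierCoeff (dampedExpSum k S f n) N =
      rexp (-π * N / 4 ^ k) * ∑ m ∈ S with ∑ i, (n i - m i) ^ 2 = (N : ℤ), f m := by
  have integrable (m : Fin d → ℤ) : Integrable
      (fun t => f m * dampedCharacter k (∑ i, (n i - m i) ^ 2) t) AddCircle.haarAddCircle := by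
    refine Continuous.integrable_of_hasCompactSupport ?_ (.of_compactSpace _)
    unfold dampedCharacter
    fun_prop
  have hterm (m : Fin d → ℤ) :
      fourierCoeff (fun t => f m * dampedCharacter k (∑ i, (n i - m i) ^ 2) t) N =
        if ∑ i, (n i - m i) ^ 2 = (N : ℤ) then rexp (-π * N / 4 ^ k) * f m else 0 := by
    unfold dampedCharacter
    rw [fourierCoeff.const_mul, fourierCoeff.const_mul, fourierCoeff_fourier, Pi.single_apply]
    simp only [eq_comm (a := (N : ℤ))]
    split_ifs with h
    · rw [h, Int.cast_natCast, mul_one, mul_comm]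
    · simp only [mul_zero]
  have hsum : dampedExpSum k S f n =
      ∑ m ∈ S, fun t => f m * dampedCharacter k (∑ i, (n i - m i) ^ 2) t := by
    ext t
    simp only [dampedExpSum, Finset.sum_apply]
  rw [hsum, fourierCoeff.sum _ _ fun m _ => integrable m, Finset.sum_apply,
    Finset.sum_congr rfl fun m _ => hterm m, ← Finset.sum_filter, Finset.mul_sum]

lemma enorm_fourierCoeff_le (F : UnitAddCircle → ℂ) (N : ℤ) :
    ‖fourierCoeff F N‖ₑ ≤ ∫⁻ t in Set.Icc (0 : ℝ) 1, ‖F t‖ₑ := by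
  rw [fourierCoeff_eq_intervalIntegral F N 0, zero_add, div_one, one_smul,
    intervalIntegral.integral_of_le zero_le_one, ← integral_Icc_eq_integral_Ioc]
  refine (enorm_integral_le_lintegral_enorm _).trans_eq (lintegral_congr fun t => ?_)
  rw [smul_eq_mul, enorm_mul, ← ofReal_norm, norm_fourier_apply, ENNReal.ofReal_one, one_mul]

lemma enorm_sum_filter_le {k N : ℕ} (hN : N ≤ 4 * 4 ^ k) (S : Finset (Fin d → ℤ))
    (f : (Fin d → ℤ) → ℂ) (n : Fin d → ℤ) :
    ‖∑ m ∈ S with ∑ i, (n i - m i) ^ 2 = (N : ℤ), f m‖ₑ ≤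
      ENNReal.ofReal (rexp (4 * π)) *
        ∫⁻ t in Set.Icc (0 : ℝ) 1, ‖dampedExpSum k S f n t‖ₑ := by
  have hexp : rexp (π * N / 4 ^ k) ≤ rexp (4 * π) := by
    rw [Real.exp_le_exp, div_le_iff₀ (by positivity)]
    have : (N : ℝ) ≤ 4 * 4 ^ k := mod_cast hN
    nlinarith [Real.pi_pos]
  have hcoeff : ∑ m ∈ S with ∑ i, (n i - m i) ^ 2 = (N : ℤ), f m =
      (rexp (π * N / 4 ^ k) : ℂ) * fourierCoeff (dampedExpSum k S f n) N := by
    rw [fourierCoeff_dampedExpSum, ← mul_assoc, ← Complex.ofReal_mul, ← Real.exp_add, neg_mul,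
      neg_div, add_neg_cancel, Real.exp_zero, Complex.ofReal_one, one_mul]
  rw [hcoeff, enorm_mul, ← ofReal_norm, Complex.norm_real, Real.norm_of_nonneg (Real.exp_nonneg _)]
  gcongr
  exact enorm_fourierCoeff_le _ _

/-- The integral of the arc parts over the union of all admissible arcs, counted with
multiplicity. -/
def arcSum (k : ℕ) (S : Finset (Fin d → ℤ)) (f : (Fin d → ℤ) → ℂ) (n : Fin d → ℤ) : ℝ≥0∞ :=
  ∑' r : Set.Icc (0 : ℚ) 1, ∫⁻ u, ‖arcPart (r.1.num : ZMod r.1.den) k u S f n‖ₑ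

lemma setLIntegral_enorm_dampedExpSum_le (k : ℕ) (S : Finset (Fin d → ℤ)) (f : (Fin d → ℤ) → ℂ)
    (n : Fin d → ℤ) : ∫⁻ t in Set.Icc (0 : ℝ) 1, ‖dampedExpSum k S f n t‖ₑ ≤
      ENNReal.ofReal (2 ^ (k * d) / (2 * 4 ^ k)) * arcSum k S f n := by
  refine (setLIntegral_Icc_le_tsum_arcs k (g := fun t : ℝ => ‖dampedExpSum k S f n t‖ₑ)
    ?_).trans_eq ?_
  · exact ((continuous_dampedExpSum k S f n).comp (AddCircle.continuous_mk' 1)).measurable.enorm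
  have arc_eq (r : ℚ) (u : ℝ) : (if ArcAdmissible r.den k u then
      ‖dampedExpSum k S f n ((r + 1 / (2 * 4 ^ k) * u : ℝ) : UnitAddCircle)‖ₑ else 0) =
      ENNReal.ofReal (2 ^ (k * d)) * ‖arcPart (r.num : ZMod r.den) k u S f n‖ₑ := by
    unfold arcPart
    split_ifs
    · have h2 : ‖(2 ^ (k * d) : ℂ)‖ₑ = ENNReal.ofReal (2 ^ (k * d)) := by
        rw [← ofReal_norm, norm_pow, Complex.norm_ofNat]
      simp only [dampedExpSum, dampedCharacter_sum, dampedCharacter_coe_add,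
        Finset.prod_mul_distrib, Finset.prod_const, Finset.card_univ, Fintype.card_fin,
        mul_left_comm (f _), ← Finset.mul_sum, ← pow_mul, enorm_mul, h2]
    · rw [enorm_zero, mul_zero]
  calc _ = ENNReal.ofReal (1 / (2 * 4 ^ k)) * (ENNReal.ofReal (2 ^ (k * d)) * arcSum k S f n) := by
        rw [arcSum, ← ENNReal.tsum_mul_left (a := ENNReal.ofReal (2 ^ (k * d)))]
        congr! 3 with r
        rw [← lintegral_const_mul' _ _ ENNReal.ofReal_ne_top]
        exact lintegral_congr fun u => arc_eq r.1 u
    _ = _ := by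
        rw [← mul_assoc, ← ENNReal.ofReal_mul (by positivity), one_div_mul_eq_div]

lemma measurable_enorm_arcPart {q : ℕ} [NeZero q] (a : ZMod q) (k : ℕ) (S : Finset (Fin d → ℤ))
    (f : (Fin d → ℤ) → ℂ) (n : Fin d → ℤ) : Measurable fun u => ‖arcPart a k u S f n‖ₑ := by
  unfold arcPart
  refine (Measurable.ite ?_ (Continuous.measurable ?_) measurable_const).enorm
  · exact (MeasurableSet.const _).inter
      (measurableSet_le continuous_abs.measurable measurable_const)
  · unfold arcKernel arcParam
    fun_prop

/-- The total weight of all arcs. -/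
def totalArcWeight : ℝ≥0∞ :=
  ∑' r : Set.Icc (0 : ℚ) 1, ∫⁻ u, ENNReal.ofReal (arcWeight r.1.den u)

lemma tsum_iSup_arcSum_sq_le (hd : 5 ≤ d) (S : Finset (Fin d → ℤ)) (f : (Fin d → ℤ) → ℂ) :
    ∑' n, ⨆ k, arcSum k S f n ^ 2 ≤
      arcMaximalConst d * totalArcWeight ^ 2 * ∑ m ∈ S, ‖f m‖ₑ ^ 2 := by
  let w (a : Set.Icc (0 : ℚ) 1 × ℝ) : ℝ≥0∞ := ENNReal.ofReal (arcWeight a.1.1.den a.2)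
  let P (k : ℕ) (n : Fin d → ℤ) (a : Set.Icc (0 : ℚ) 1 × ℝ) : ℝ≥0∞ :=
    ‖arcPart (a.1.1.num : ZMod a.1.1.den) k a.2 S f n‖ₑ
  have measurable_w : Measurable w := measurable_from_prod_countable_right fun r => by
    simp only [w, arcWeight]
    fun_prop
  have measurable_P (k : ℕ) (n : Fin d → ℤ) : Measurable (P k n) :=
    measurable_from_prod_countable_right fun r =>
      measurable_enorm_arcPart (r.1.num : ZMod r.1.den) k S f n
  have lintegral_eq {g : Set.Icc (0 : ℚ) 1 × ℝ → ℝ≥0∞} (hg : Measurable g) :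
      ∫⁻ a, g a ∂(Measure.count.prod volume) = ∑' r, ∫⁻ u, g (r, u) := by
    rw [lintegral_prod _ hg.aemeasurable, lintegral_count]
  have isUnit_num (r : ℚ) : IsUnit (r.num : ZMod r.den) :=
    (ZMod.coe_int_isUnit_iff_isCoprime _ _).2 r.isCoprime_num_den.symm
  have hmax := tsum_iSup_lintegral_sq_le (μ := Measure.count.prod volume)
    (C := arcMaximalConst d * ∑ m ∈ S, ‖f m‖ₑ ^ 2) measurable_w.aemeasurable
    (fun a => (ENNReal.ofReal_pos.2 (by unfold arcWeight; have := a.1.1.den_pos; positivity)).ne')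
    (fun a => ENNReal.ofReal_ne_top) (fun k n => (measurable_P k n).aemeasurable)
    fun a => (tsum_iSup_enorm_arcPart_sq_le hd (isUnit_num a.1) a.2 S f).trans_eq (by ring)
  simp only [lintegral_eq (measurable_P _ _), lintegral_eq measurable_w] at hmax
  exact hmax.trans_eq (mul_right_comm _ _ _)

lemma lintegral_one_add_sq_rpow_ne_top :
    ∫⁻ u : ℝ, ENNReal.ofReal ((1 + u ^ 2) ^ (-(3 / 4) : ℝ)) ≠ ∞ := by
  have h := integrable_rpow_neg_one_add_norm_sq (E := ℝ) (μ := volume) (r := 3 / 2)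
    (by norm_num)
  convert h.lintegral_lt_top.ne using 5 with u
  · rw [Real.norm_eq_abs, sq_abs]
  · norm_num

lemma tsum_den_rpow_ne_top :
    ∑' r : Set.Icc (0 : ℚ) 1, ENNReal.ofReal ((r.1.den : ℝ) ^ (-(5 / 2) : ℝ)) ≠ ∞ := by
  have num_nonneg (r : Set.Icc (0 : ℚ) 1) : 0 ≤ r.1.num := Rat.num_nonneg.2 r.2.1
  have num_lt (r : Set.Icc (0 : ℚ) 1) : r.1.num.toNat < r.1.den + 1 := by
    have : r.1.num ≤ r.1.den := by simpa using (Rat.le_iff r.1 1).1 r.2.2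
    omega
  let fraction (r : Set.Icc (0 : ℚ) 1) : Σ q : ℕ, Fin (q + 1) := ⟨r.1.den, r.1.num.toNat, num_lt r⟩
  have fraction_injective : Function.Injective fraction := fun r s h => by
    obtain ⟨hden, hnum⟩ := Sigma.mk.inj h
    rw [Fin.heq_ext_iff (by rw [hden])] at hnum
    refine Subtype.ext (Rat.ext ?_ hden)
    rw [← Int.toNat_of_nonneg (num_nonneg r), ← Int.toNat_of_nonneg (num_nonneg s)]
    exact congrArg _ hnum
  have hterm (q : ℕ) : (q + 1) * (q : ℝ) ^ (-(5 / 2) : ℝ) ≤ 2 * (1 / (q : ℝ) ^ (3 / 2 : ℝ)) := by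
    rcases Nat.eq_zero_or_pos q with rfl | hq
    · norm_num
    have hq' : (1 : ℝ) ≤ q := mod_cast hq
    calc (q + 1) * (q : ℝ) ^ (-(5 / 2) : ℝ) ≤ (2 * q) * (q : ℝ) ^ (-(5 / 2) : ℝ) := by
          gcongr
          linarith
      _ = 2 * (1 / (q : ℝ) ^ (3 / 2 : ℝ)) := by
          rw [mul_assoc, mul_comm (q : ℝ), ← Real.rpow_add_one (by positivity), one_div,
            ← Real.rpow_neg (by positivity)]
          norm_num
  have hsum : Summable fun q : ℕ => 2 * (1 / (q : ℝ) ^ (3 / 2 : ℝ)) :=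
    (Real.summable_one_div_nat_rpow.2 (by norm_num)).mul_left 2
  refine ne_top_of_le_ne_top hsum.tsum_ofReal_ne_top ?_
  calc ∑' r : Set.Icc (0 : ℚ) 1, ENNReal.ofReal ((r.1.den : ℝ) ^ (-(5 / 2) : ℝ))
      ≤ ∑' x : Σ q : ℕ, Fin (q + 1), ENNReal.ofReal ((x.1 : ℝ) ^ (-(5 / 2) : ℝ)) :=
        ENNReal.tsum_comp_le_tsum_of_injective fraction_injective _
    _ = ∑' q : ℕ, (q + 1) * ENNReal.ofReal ((q : ℝ) ^ (-(5 / 2) : ℝ)) := by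
        simp [ENNReal.tsum_sigma']
    _ ≤ _ := by
        gcongr with q
        refine le_trans (le_of_eq ?_) (ENNReal.ofReal_le_ofReal (hterm q))
        rw [ENNReal.ofReal_mul (by positivity)]
        norm_cast

lemma totalArcWeight_ne_top : totalArcWeight ≠ ∞ := by
  have htotal : totalArcWeight = (∫⁻ u : ℝ, ENNReal.ofReal ((1 + u ^ 2) ^ (-(3 / 4) : ℝ))) *
      ∑' r : Set.Icc (0 : ℚ) 1, ENNReal.ofReal ((r.1.den : ℝ) ^ (-(5 / 2) : ℝ)) := by
    rw [totalArcWeight, ← ENNReal.tsum_mul_left]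
    congr! 2 with r
    rw [← lintegral_mul_const' _ _ ENNReal.ofReal_ne_top]
    exact lintegral_congr fun u => ENNReal.ofReal_mul (by positivity)
  rw [htotal]
  exact ENNReal.mul_ne_top lintegral_one_add_sq_rpow_ne_top tsum_den_rpow_ne_top

lemma sph_eq_latticeSphere {lam : ℝ} {N : ℕ} (h : (N : ℝ) = lam ^ 2) :
    sph d lam = latticeSphere d N := by
  ext m
  simp only [sph, latticeSphere, nsq, Set.mem_ofPred_eq, ← h]
  exact_mod_cast Iff.rfl

lemma avg_eq {lam : ℝ} {N : ℕ} (h : (N : ℝ) = lam ^ 2) (f : (Fin d → ℤ) → ℝ) {n : Fin d → ℤ}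
    {S : Finset (Fin d → ℤ)} (hS : ∀ m, n - m ∈ latticeSphere d N → m ∈ S) :
    Avg lam f n = ((latticeSphere d N).ncard : ℝ)⁻¹ *
      ∑ m ∈ S with ∑ i, (n i - m i) ^ 2 = (N : ℤ), f m := by
  classical
  rw [Avg, Nlam, sph_eq_latticeSphere h, Nat.card_coe_set_eq,
    tsum_subtype _ fun m => f (n - m), ← (Equiv.subLeft n).tsum_eq, Finset.sum_filter,
    tsum_eq_sum (s := S)]
  · simp [Set.indicator_apply, latticeSphere]
  · exact fun m hm => Set.indicator_of_notMem (fun hm' => hm (hS m hm')) _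

lemma enorm_avg_le {c : ℝ} (hc : 0 < c) (hd : 2 ≤ d)
    (hcard : ∀ N : ℕ, c * √N ^ (d - 2) ≤ (latticeSphere d N).ncard) {lam : ℝ} {N : ℕ}
    (hN : N ≠ 0) (h : (N : ℝ) = lam ^ 2) (f : (Fin d → ℤ) → ℝ) {n : Fin d → ℤ}
    {S : Finset (Fin d → ℤ)} (hS : ∀ m, n - m ∈ latticeSphere d N → m ∈ S) :
    ‖Avg lam f n‖ₑ ≤ ENNReal.ofReal (rexp (4 * π) / (2 * c)) *
      ⨆ k, arcSum k S (fun m => (f m : ℂ)) n := by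
  have pow_log_le : 4 ^ Nat.log 4 N ≤ N := Nat.pow_log_le_self 4 hN
  have le_pow_log : N ≤ 4 * 4 ^ Nat.log 4 N := by
    rw [← pow_succ']
    exact (Nat.lt_pow_succ_log_self (by norm_num) N).le
  generalize Nat.log 4 N = k at pow_log_le le_pow_log
  have four_pow : (4 : ℝ) ^ k = (2 ^ k) ^ 2 := by rw [← pow_mul, mul_comm, pow_mul]; norm_num
  have le_sqrt : (2 : ℝ) ^ k ≤ √N :=
    Real.le_sqrt_of_sq_le (by rw [← four_pow]; exact_mod_cast pow_log_le)
  have le_card : c * (2 ^ k) ^ (d - 2) ≤ (latticeSphere d N).ncard :=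
    (by gcongr : _ ≤ c * √N ^ (d - 2)).trans (hcard N)
  have hconst : (c * (2 ^ k) ^ (d - 2))⁻¹ * (rexp (4 * π) * (2 ^ (k * d) / (2 * 4 ^ k))) =
      rexp (4 * π) / (2 * c) := by
    have : (2 : ℝ) ^ (k * d) = (2 ^ k) ^ (d - 2) * 4 ^ k := by
      rw [four_pow, ← pow_add, pow_mul, Nat.sub_add_cancel hd]
    rw [this]
    field_simp
  calc ‖Avg lam f n‖ₑ = ENNReal.ofReal ((latticeSphere d N).ncard : ℝ)⁻¹ *
        ‖∑ m ∈ S with ∑ i, (n i - m i) ^ 2 = (N : ℤ), (f m : ℂ)‖ₑ := by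
        rw [avg_eq h f hS, enorm_mul, Real.enorm_of_nonneg (by positivity),
          ← Complex.ofReal_sum, ← ofReal_norm, ← ofReal_norm, Complex.norm_real]
    _ ≤ ENNReal.ofReal (c * (2 ^ k) ^ (d - 2))⁻¹ * (ENNReal.ofReal (rexp (4 * π)) *
        (ENNReal.ofReal (2 ^ (k * d) / (2 * 4 ^ k)) * arcSum k S (fun m => (f m : ℂ)) n)) := by
        gcongr
        exact (enorm_sum_filter_le le_pow_log _ _ _).trans
          (by gcongr; exact setLIntegral_enorm_dampedExpSum_le _ _ _ _)
    _ = ENNReal.ofReal (rexp (4 * π) / (2 * c)) * arcSum k S (fun m => (f m : ℂ)) n := by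
        rw [← hconst, ENNReal.ofReal_mul (by positivity), ENNReal.ofReal_mul (by positivity)]
        ring
    _ ≤ _ := by
        gcongr
        exact le_iSup (fun k => arcSum k S (fun m => (f m : ℂ)) n) k

lemma tsum_iSup_enorm_avg_sq_le {c : ℝ} (hc : 0 < c) (hd : 5 ≤ d)
    (hcard : ∀ N : ℕ, c * √N ^ (d - 2) ≤ (latticeSphere d N).ncard) (f : (Fin d → ℤ) → ℝ) :
    ∑' n, (⨆ (lam : ℝ) (_ : 0 < lam ∧ ∃ N : ℕ, (N : ℝ) = lam ^ 2), ‖Avg lam f n‖ₑ) ^ 2 ≤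
      ENNReal.ofReal (rexp (4 * π) / (2 * c)) ^ 2 *
        (arcMaximalConst d * totalArcWeight ^ 2) * ∑' m, ‖f m‖ₑ ^ 2 := by
  set A := ENNReal.ofReal (rexp (4 * π) / (2 * c))
  let M (S : Finset (Fin d → ℤ)) (n : Fin d → ℤ) : ℝ≥0∞ :=
    ⨆ k, arcSum k S (fun m => (f m : ℂ)) n ^ 2
  have avg_le_liminf (n : Fin d → ℤ) :
      (⨆ (lam : ℝ) (_ : 0 < lam ∧ ∃ N : ℕ, (N : ℝ) = lam ^ 2), ‖Avg lam f n‖ₑ) ^ 2 ≤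
        Filter.liminf (fun S => A ^ 2 * M S n) Filter.atTop := by
    rw [ENNReal.iSup₂_pow_of_ne_zero _ two_ne_zero]
    refine iSup₂_le fun lam ⟨hlam, N, hN⟩ => Filter.le_liminf_of_le (by isBoundedDefault) ?_
    have hN0 : N ≠ 0 := by
      rintro rfl
      exact (pow_pos hlam 2).ne (by simpa using hN)
    have hfin : {m | n - m ∈ latticeSphere d N}.Finite :=
      (finite_latticeSphere d N).preimage (sub_right_injective.injOn)
    filter_upwards [Filter.eventually_ge_atTop hfin.toFinset] with S hS
    simp only [M, ← ENNReal.iSup_pow, ← mul_pow]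
    gcongr
    exact enorm_avg_le hc (by omega) hcard hN0 hN f fun m hm => hS (hfin.mem_toFinset.2 hm)
  have sum_le (S : Finset (Fin d → ℤ)) : ∑' n, A ^ 2 * M S n ≤
      A ^ 2 * (arcMaximalConst d * totalArcWeight ^ 2) * ∑' m, ‖f m‖ₑ ^ 2 := by
    rw [ENNReal.tsum_mul_left, mul_assoc]
    gcongr
    refine (tsum_iSup_arcSum_sq_le hd _ _).trans ?_
    gcongr
    refine le_trans (le_of_eq ?_) (ENNReal.sum_le_tsum S)
    simp only [← ofReal_norm, Complex.norm_real]
  calc _ ≤ ∑' n, Filter.liminf (fun S => A ^ 2 * M S n) Filter.atTop := by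
        gcongr with n
        exact avg_le_liminf n
    _ ≤ Filter.liminf (fun S => ∑' n, A ^ 2 * M S n) Filter.atTop := by
        simpa only [lintegral_count] using
          lintegral_liminf_le' (μ := Measure.count) (u := Filter.atTop)
            fun S => (measurable_of_countable fun n => A ^ 2 * M S n).aemeasurable
    _ ≤ _ := Filter.liminf_le_of_frequently_le' (Filter.Frequently.of_forall sum_le)

end MajorArcs

end SphericalMaximal

/-- **ℓ² boundedness of the discrete spherical maximal function** (Theorem 1):
for `d ≥ 5` there is a constant `C_d > 0` such that
`‖sup_{λ, λ²∈ℕ} |A_λ f|‖_{ℓ²} ≤ C_d ‖f‖_{ℓ²}` for all `f ∈ ℓ²(ℤ^d)`. -/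
theorem discrete_spherical_maximal_l2 (d : ℕ) (hd : 5 ≤ d) :
    ∃ C : ℝ, 0 < C ∧ ∀ f : (Fin d → ℤ) → ℝ,
      (∑' n : Fin d → ℤ,
          (⨆ (lam : ℝ) (_ : 0 < lam ∧ ∃ N : ℕ, (N : ℝ) = lam ^ 2),
            (‖Avg lam f n‖₊ : ℝ≥0∞)) ^ 2) ^ ((1 : ℝ) / 2)
        ≤ ENNReal.ofReal C * l2norm f := by
  obtain ⟨c, hc, hcard⟩ := SphericalMaximal.exists_le_ncard_latticeSphere hd
  set D : ℝ≥0∞ := ENNReal.ofReal (Real.exp (4 * Real.pi) / (2 * c)) ^ 2 *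
    (SphericalMaximal.arcMaximalConst d * SphericalMaximal.totalArcWeight ^ 2)
  have D_ne_top : D ≠ ∞ := by
    finiteness [SphericalMaximal.arcMaximalConst_ne_top d, SphericalMaximal.totalArcWeight_ne_top]
  refine ⟨(D ^ ((1 : ℝ) / 2)).toReal + 1, by positivity, fun f => ?_⟩
  calc _ ≤ (D * ∑' m, ‖f m‖ₑ ^ 2) ^ ((1 : ℝ) / 2) :=
        ENNReal.rpow_le_rpow (SphericalMaximal.tsum_iSup_enorm_avg_sq_le hc hd hcard f)
          (by norm_num)
    _ = D ^ ((1 : ℝ) / 2) * l2norm f := ENNReal.mul_rpow_of_nonneg _ _ (by norm_num)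
    _ ≤ ENNReal.ofReal ((D ^ ((1 : ℝ) / 2)).toReal + 1) * l2norm f := by
        gcongr
        refine ENNReal.le_ofReal_iff_toReal_le ?_ (by positivity) |>.2 (by linarith)
        exact ENNReal.rpow_ne_top_of_nonneg (by norm_num) D_ne_top
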